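/- arXiv:2111.05751 — 2 statements merged into one kernel-verified Lean document; each statement's English description precedes it below -/
import Mathlib

section
/- There exist absolute constants C > 0 and c₀ > 0 such that for every prime p and all nonempty sets A, B, C ⊆ 𝔽_p with |A| ≤ √p one has #{(a, a', b, b', c, c') ∈ A² × B² × C² : a + b ≠ 0, a' + b' ≠ 0, and (a + b)^{−1} + c = (a' + b')^{−1} + c'} ≤ C · |A|^{7/5} · |B|^{8/5} · |C|^{6/5} · (E⁺(C))^{1/5} · (log(2|A|))^{c₀}. -/
open Finset
open scoped Classical

/-- The additive energy `E⁺(C) = #{(c₁,c₂,c₃,c₄) ∈ C⁴ : c₁ + c₂ = c₃ + c₄}`. -/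
def addEnergy {p : ℕ} (C : Finset (ZMod p)) : ℕ :=
  (((C ×ˢ C) ×ˢ (C ×ˢ C)).filter fun q => q.1.1 + q.1.2 = q.2.1 + q.2.2).card

/-!
Write `N(d)` for the number of solutions of `(a + b)⁻¹ = (a' + b')⁻¹ + d` with `a, a'` in `A` and
`b, b'` in `B`, and `r(d)` for the number of representations `d = c' - c` in `C`. The quantity to
be bounded is `∑ d, N(d) r(d)`. Since `∑ r = |C|²` and `∑ r² = E⁺(C)`, Hölder's inequality reduces
the theorem to `∑ N(d)⁵ ≲ |A|⁷|B|⁸`, that is, to a bound for the number of curves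
`(x + b)⁻¹ = (y + b')⁻¹ + d` which contain many points of the grid `A × A`.

Inverting both coordinates about a grid point `q` turns the curves through `q` into lines which
contain many points of another grid. If many lines are rich in a grid, then Cauchy-Schwarz, applied
to the incidences at equal height, yields many aligned pairs of triples `(x, m, c)`, each a line
with a marked abscissa. Over the field of rational functions alignment becomes the meeting of a red
line with a blue one, both families having one line in each plane of a pencil of parallel planes in
3-space.

Such incidences are counted by the polynomial method. A polynomial of low degree vanishes on the
blue lines of a small group, and the red lines off its zero set meet it in few points. On an
irreducible component, consider the curvature of its sections by the planes of the pencil. If it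
does not vanish identically on the component, then the lines on the component also lie on a second
surface, so they are few and the recursion applies. If it does, then in large characteristic the
component is ruled by the tangents of its plane sections, and almost all red lines on it meet a
given blue one; since two blue lines meet few common red lines, incidences are again few.
-/

namespace MoebiusEnergy

open scoped Polynomial

/-- The characteristic of `K` is zero or at least `N`: no positive integer below `N` vanishes
in `K`. -/
def CharAtLeast (K : Type*) [AddMonoidWithOne K] (N : ℕ) : Prop :=
  ∀ n : ℕ, 0 < n → n < N → (n : K) ≠ 0

theorem charAtLeast_of_charP (K : Type*) [AddMonoidWithOne K] (p : ℕ) [CharP K p] {N : ℕ}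
    (h : N ≤ p) : CharAtLeast K N := fun n hn hN hK =>
  (Nat.le_of_dvd hn ((CharP.cast_eq_zero_iff K p n).1 hK)).not_gt (hN.trans_le h)

theorem CharAtLeast.of_injective {K L : Type*} [NonAssocSemiring K] [NonAssocSemiring L]
    {N : ℕ} (hK : CharAtLeast K N) {φ : K →+* L} (hφ : Function.Injective φ) :
    CharAtLeast L N := fun n hn hN h =>
  hK n hn hN (hφ (by rw [map_natCast, h, map_zero]))

section Elimination

open MvPolynomial

theorem resultant_ne_zero_of_irreducible {S : Type*} [CommRing S] [IsDomain S]
    [UniqueFactorizationMonoid S] {F G : S[X]} (hF : Irreducible F) (hdeg : F.natDegree ≠ 0)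
    (hFG : ¬F ∣ G) : F.resultant G ≠ 0 := by
  let _ : NormalizedGCDMonoid S := Classical.choice inferInstance
  let L := FractionRing S
  have hprim : F.IsPrimitive := hF.isPrimitive hdeg
  have hirr : Irreducible (F.map (algebraMap S L)) :=
    (hprim.irreducible_iff_irreducible_map_fraction_map (K := L)).1 hF
  have hcop : IsCoprime (F.map (algebraMap S L)) (G.map (algebraMap S L)) :=
    hirr.coprime_iff_not_dvd.2 fun h => hFG ((hprim.dvd_iff_fraction_map_dvd_fraction_map L).2 h)
  have hinj : Function.Injective (algebraMap S L) := IsFractionRing.injective S L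
  intro h0
  have hres := Polynomial.resultant_ne_zero _ _ hcop
  rw [Polynomial.natDegree_map_eq_of_injective hinj, Polynomial.natDegree_map_eq_of_injective hinj,
    Polynomial.resultant_map_map, h0, map_zero] at hres
  exact hres rfl

variable {R : Type*} [CommRing R]

theorem totalDegree_det_le {σ ι : Type*} [Fintype ι] [DecidableEq ι]
    (M : Matrix ι ι (MvPolynomial σ R)) (d : ι → ℕ) (h : ∀ i j, (M i j).totalDegree ≤ d j) :
    M.det.totalDegree ≤ ∑ j, d j := by
  rw [Matrix.det_apply]
  refine totalDegree_finsetSum_le fun s _ => (totalDegree_smul_le _ _).trans ?_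
  exact (totalDegree_finsetProd _ _).trans (sum_le_sum fun i _ => h _ _)

theorem totalDegree_resultant_le {σ : Type*} {F G : (MvPolynomial σ R)[X]} {a b : ℕ}
    (hF : ∀ i, (F.coeff i).totalDegree ≤ a) (hG : ∀ i, (G.coeff i).totalDegree ≤ b) :
    (F.resultant G).totalDegree ≤ F.natDegree * b + G.natDegree * a := by
  have hdet : (F.resultant G).totalDegree ≤ ∑ j : Fin (F.natDegree + G.natDegree),
      j.addCases (motive := fun _ => ℕ) (fun _ => b) (fun _ => a) := by
    refine totalDegree_det_le _ _ fun i j => ?_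
    induction j using Fin.addCases <;>
    · simp only [Polynomial.sylvester, Matrix.of_apply, Fin.addCases_left, Fin.addCases_right]
      split_ifs <;> simp [hF, hG]
  simpa only [Fin.sum_univ_add, Fin.addCases_left, Fin.addCases_right, sum_const, card_univ,
    Fintype.card_fin, smul_eq_mul] using hdet

theorem totalDegree_coeff_finSuccEquiv_le {n : ℕ} (f : MvPolynomial (Fin (n + 1)) R) (i : ℕ) :
    ((finSuccEquiv R n f).coeff i).totalDegree ≤ f.totalDegree := by
  by_cases h : (finSuccEquiv R n f).coeff i = 0
  · simp [h]
  · exact (Nat.le_add_right _ _).trans (totalDegree_coeff_finSuccEquiv_add_le f i h)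

theorem natDegree_finSuccEquiv_le {n : ℕ} (f : MvPolynomial (Fin (n + 1)) R) :
    (finSuccEquiv R n f).natDegree ≤ f.totalDegree :=
  (natDegree_finSuccEquiv f).trans_le (degreeOf_le_totalDegree f 0)

theorem finSuccEquiv_rename_succ {n : ℕ} (r : MvPolynomial (Fin n) R) :
    finSuccEquiv R n (rename Fin.succ r) = Polynomial.C r := by
  have h : (finSuccEquiv R n).toAlgHom.comp (rename Fin.succ) =
      Polynomial.CAlgHom (R := R) (A := MvPolynomial (Fin n) R) :=
    algHom_ext fun i => by simp [finSuccEquiv_X_succ]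
  exact DFunLike.congr_fun h r

variable {K : Type*} [Field K]

theorem exists_eliminant {n : ℕ} {f g : MvPolynomial (Fin (n + 1)) K} (hf : Irreducible f)
    (hf0 : pderiv 0 f ≠ 0) (hfg : ¬f ∣ g) :
    ∃ r : MvPolynomial (Fin n) K, r ≠ 0 ∧ r.totalDegree ≤ 2 * (f.totalDegree * g.totalDegree) ∧
      ∃ P Q, f * P + g * Q = rename Fin.succ r := by
  set F := finSuccEquiv K n f with hF
  set G := finSuccEquiv K n g with hG
  have hdeg : F.natDegree ≠ 0 := by
    rw [hF, natDegree_finSuccEquiv]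
    exact fun h => hf0 (pderiv_eq_zero_of_notMem_vars fun h' =>
      mem_vars_iff_degreeOf_ne_zero.1 h' h)
  have hres : F.resultant G ≠ 0 := resultant_ne_zero_of_irreducible
    ((MulEquiv.irreducible_iff (finSuccEquiv K n)).2 hf) hdeg
    fun h => hfg ((map_dvd_iff (finSuccEquiv K n)).1 h)
  obtain ⟨P, Q, -, -, hPQ⟩ :=
    Polynomial.exists_mul_add_mul_eq_C_resultant F G le_rfl le_rfl (Or.inl hdeg)
  refine ⟨F.resultant G, hres, ?_, (finSuccEquiv K n).symm P, (finSuccEquiv K n).symm Q, ?_⟩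
  · have hle := totalDegree_resultant_le (totalDegree_coeff_finSuccEquiv_le f)
      (totalDegree_coeff_finSuccEquiv_le g)
    have hFle := Nat.mul_le_mul_right g.totalDegree (natDegree_finSuccEquiv_le f)
    have hGle := Nat.mul_le_mul_right f.totalDegree (natDegree_finSuccEquiv_le g)
    rw [← hF, ← hG] at *
    linarith
  · apply (finSuccEquiv K n).injective
    rw [finSuccEquiv_rename_succ, ← hPQ]
    simp [hF, hG]

theorem aeval_C_X_eq_eval_finSuccEquiv (v : R) (r : MvPolynomial (Fin 2) R) :
    aeval ![Polynomial.C v, Polynomial.X] r =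
      uniqueAlgEquiv R (Fin 1) ((finSuccEquiv R 1 r).eval (C v)) := by
  induction r using MvPolynomial.induction_on with
  | C a => simp [finSuccEquiv_apply]
  | add p q hp hq => simp only [map_add, Polynomial.eval_add, hp, hq]
  | mul_X p i hp =>
    rw [map_mul, map_mul, Polynomial.eval_mul, map_mul, hp]
    congr 1
    fin_cases i
    · simp [finSuccEquiv_X_zero]
    · have h1 : finSuccEquiv R 1 (X 1) = Polynomial.C (X 0) := finSuccEquiv_X_succ (j := 0)
      simp [h1]

theorem card_le_totalDegree_of_aeval_eq_zero {r : MvPolynomial (Fin 2) K} (hr : r ≠ 0)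
    {V : Finset K} (hV : ∀ v ∈ V, aeval ![Polynomial.C v, Polynomial.X] r = 0) :
    V.card ≤ r.totalDegree := by
  have hroots : V.image C ⊆ (finSuccEquiv K 1 r).roots.toFinset := by
    intro x hx
    obtain ⟨v, hv, rfl⟩ := mem_image.1 hx
    rw [Multiset.mem_toFinset, Polynomial.mem_roots (by simpa using hr)]
    exact (map_eq_zero_iff _ (uniqueAlgEquiv K (Fin 1)).injective).1
      ((aeval_C_X_eq_eval_finSuccEquiv v r).symm.trans (hV v hv))
  calc V.card = (V.image C).card := (card_image_of_injective _ (C_injective (Fin 1) K)).symm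
    _ ≤ (finSuccEquiv K 1 r).natDegree :=
      (card_le_card hroots).trans ((Multiset.toFinset_card_le _).trans (Polynomial.card_roots' _))
    _ ≤ r.totalDegree := natDegree_finSuccEquiv_le r

end Elimination

section Derivatives

open MvPolynomial

variable {σ : Type*}

theorem totalDegree_pderiv_le {R : Type*} [CommSemiring R] (i : σ) (f : MvPolynomial σ R) :
    (pderiv i f).totalDegree ≤ f.totalDegree - 1 := by
  refine Finset.sup_le fun m hm => ?_
  rw [mem_support_iff, coeff_pderiv] at hm
  have hle := le_totalDegree (mem_support_iff.2 (left_ne_zero_of_mul hm))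
  rw [Finsupp.sum_add_index' (fun _ => rfl) (fun _ _ _ => rfl), Finsupp.sum_single_index rfl] at hle
  omega

theorem not_dvd_pderiv {R : Type*} [CommRing R] [IsDomain R] {i : σ} {f : MvPolynomial σ R}
    (h : pderiv i f ≠ 0) : ¬f ∣ pderiv i f := fun hdvd => by
  have hdeg : f.totalDegree = 0 := by
    have := totalDegree_le_of_dvd_of_isDomain hdvd h
    have := totalDegree_pderiv_le i f
    omega
  rw [totalDegree_eq_zero_iff_eq_C] at hdeg
  exact h (by rw [hdeg, pderiv_C])

theorem notMem_vars_of_pderiv_eq_zero {K : Type*} [Field K] {N : ℕ} (hK : CharAtLeast K N)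
    {i : σ} {f : MvPolynomial σ K} (h : pderiv i f = 0) (hdeg : f.totalDegree < N) :
    i ∉ f.vars := by
  intro hi
  obtain ⟨s, hs, his⟩ := (mem_vars_iff_mem_support i).1 hi
  have hpos : 0 < s i := Nat.pos_of_ne_zero (Finsupp.mem_support_iff.1 his)
  have hlt : s i < N := calc
    s i ≤ s.sum fun _ e => e := single_le_sum (f := s) (fun _ _ => Nat.zero_le _) his
    _ ≤ f.totalDegree := le_totalDegree hs
    _ < N := hdeg
  have hadd : s - Finsupp.single i 1 + Finsupp.single i 1 = s :=
    tsub_add_cancel_of_le (Finsupp.single_le_iff.2 hpos)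
  have hcoeff : coeff s f * (s i : K) = 0 := by
    have h0 := congrArg (coeff (s - Finsupp.single i 1)) h
    rw [coeff_pderiv, hadd, coeff_zero] at h0
    rwa [← Nat.cast_add_one, Finsupp.tsub_apply, Finsupp.single_eq_same,
      Nat.sub_add_cancel hpos] at h0
  exact mul_ne_zero (mem_support_iff.1 hs) (hK _ hpos hlt) hcoeff

theorem derivative_aeval_eq_sum {R : Type*} [CommRing R] [Fintype σ] (g : σ → R[X])
    (f : MvPolynomial σ R) :
    Polynomial.derivative (aeval g f) =
      ∑ i, aeval g (pderiv i f) * Polynomial.derivative (g i) := by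
  induction f using MvPolynomial.induction_on with
  | C a => simp [← algebraMap_eq]
  | add p q hp hq => simp only [map_add, hp, hq, add_mul, sum_add_distrib]
  | mul_X p j hp =>
    have hterm : ∀ i, aeval g (pderiv i (p * X j)) * Polynomial.derivative (g i) =
        g j * (aeval g (pderiv i p) * Polynomial.derivative (g i)) +
          if i = j then aeval g p * Polynomial.derivative (g j) else 0 := by
      intro i
      rw [pderiv_mul, map_add, map_mul, map_mul, aeval_X]
      split_ifs with h
      · subst h
        rw [pderiv_X_self, map_one]
        ring
      · rw [pderiv_X_of_ne (Ne.symm h), map_zero]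
        ring
    simp only [hterm, sum_add_distrib, sum_ite_eq', mem_univ, if_true, ← mul_sum, ← hp]
    rw [map_mul, aeval_X, Polynomial.derivative_mul]
    ring

end Derivatives

section SecondOrder

open Polynomial

theorem derivative_X_sub_C_pow_succ_mul {R : Type*} [CommRing R] (c : R) (k : ℕ) (h : R[X]) :
    derivative ((X - C c) ^ (k + 1) * h) =
      (X - C c) ^ k * (((k + 1 : ℕ) : R[X]) * h + (X - C c) * derivative h) := by
  simp only [derivative_mul, derivative_X_sub_C_pow, map_natCast, Nat.add_sub_cancel]
  ring

theorem eq_zero_of_second_order_relation {K : Type*} [Field K] {N : ℕ} (hK : CharAtLeast K N)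
    {H b Q₁ Q₂ : K[X]} {c : K}
    (hrel : b ^ 2 * derivative (derivative H) = H * Q₁ + derivative H * Q₂)
    (hb : b.eval c ≠ 0) (h0 : H.IsRoot c) (h1 : (derivative H).IsRoot c)
    (hdeg : H.natDegree < N) : H = 0 := by
  by_contra hH
  obtain ⟨h, hfac, hndvd⟩ := exists_eq_pow_rootMultiplicity_mul_and_not_dvd H hH c
  obtain ⟨k, hk⟩ : ∃ k, H.rootMultiplicity c = k + 2 :=
    Nat.exists_eq_add_of_le' ((one_lt_rootMultiplicity_iff_isRoot hH).2 ⟨h0, h1⟩)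
  have hkN : k + 2 < N := by
    have := natDegree_le_of_dvd (pow_rootMultiplicity_dvd H c) hH
    rw [natDegree_pow, natDegree_X_sub_C, hk] at this
    omega
  rw [hk] at hfac
  set A : K[X] := ((k + 2 : ℕ) : K[X]) * h + (X - C c) * derivative h with hA
  have hder : derivative H = (X - C c) ^ (k + 1) * A := by
    rw [hfac, derivative_X_sub_C_pow_succ_mul]
  have hrel' : b ^ 2 * (((k + 1 : ℕ) : K[X]) * A + (X - C c) * derivative A) =
      (X - C c) ^ 2 * h * Q₁ + (X - C c) * A * Q₂ := by
    apply mul_left_cancel₀ (pow_ne_zero k (X_sub_C_ne_zero c))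
    rw [hder, derivative_X_sub_C_pow_succ_mul] at hrel
    linear_combination hrel + Q₁ * hfac
  have hzero := congrArg (eval c) hrel'
  simp only [hA, eval_mul, eval_add, eval_pow, eval_sub, eval_X, eval_C, sub_self, zero_mul,
    eval_natCast, add_zero, ne_eq, OfNat.ofNat_ne_zero, not_false_eq_true, zero_pow] at hzero
  have hh : h.eval c ≠ 0 := fun hroot => hndvd (dvd_iff_isRoot.2 hroot)
  exact mul_ne_zero (pow_ne_zero 2 hb) (mul_ne_zero (hK _ k.succ_pos (by omega))
    (mul_ne_zero (hK _ (by omega) hkN) hh)) hzero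

end SecondOrder

/-- A line in a plane of a pencil of parallel planes in affine 3-space, encoded by numbers: as a
*red* line it is `{(base + slope * t, plane, t)}`, as a *blue* line it is
`{(plane, base + slope * t, t)}`. -/
structure PencilLine (K : Type*) where
  plane : K
  base : K
  slope : K

theorem card_le_natDegree_of_isRoot {ι R : Type*} [CommRing R] [IsDomain R] {q : R[X]}
    (hq : q ≠ 0) {s : Finset ι} {v : ι → R} (hv : Set.InjOn v s)
    (h : ∀ i ∈ s, q.IsRoot (v i)) : s.card ≤ q.natDegree := by
  by_contra! hlt
  exact hq (Polynomial.eq_zero_of_degree_lt_of_eval_index_eq_zero s hv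
    (Polynomial.degree_le_natDegree.trans_lt (by exact_mod_cast hlt)) h)

namespace PencilLine

open MvPolynomial

section Restriction

variable {R : Type*} [CommRing R]

/-- The restriction of a polynomial to the red line of `l`, as a polynomial in the parameter. -/
noncomputable def restrict (l : PencilLine R) : MvPolynomial (Fin 3) R →ₐ[R] R[X] :=
  aeval ![Polynomial.C l.base + Polynomial.C l.slope * Polynomial.X, Polynomial.C l.plane,
    Polynomial.X]

/-- Interchange of the coordinates `X₀` and `X₁`, which turns red lines into blue ones. -/
noncomputable def swap : MvPolynomial (Fin 3) R ≃ₐ[R] MvPolynomial (Fin 3) R :=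
  renameEquiv R (Equiv.swap 0 1)

theorem swap_swap (f : MvPolynomial (Fin 3) R) : swap (swap f) = f := by
  have h : (⇑(Equiv.swap (0 : Fin 3) 1) ∘ ⇑(Equiv.swap (0 : Fin 3) 1)) = id :=
    funext fun i => by simp
  simp only [swap, renameEquiv_apply, rename_rename, h, rename_id, AlgHom.id_apply]

theorem totalDegree_swap (f : MvPolynomial (Fin 3) R) : (swap f).totalDegree = f.totalDegree :=
  totalDegree_renameEquiv _ f

theorem irreducible_swap {f : MvPolynomial (Fin 3) R} : Irreducible (swap f) ↔ Irreducible f :=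
  MulEquiv.irreducible_iff swap

theorem pderiv_zero_swap (f : MvPolynomial (Fin 3) R) :
    pderiv 0 (swap f) = swap (pderiv 1 f) := by
  have h := pderiv_rename (R := R) (Equiv.swap (0 : Fin 3) 1).injective 1 f
  rwa [Equiv.swap_apply_right] at h

theorem eval_restrict (l : PencilLine R) (f : MvPolynomial (Fin 3) R) (t : R) :
    (l.restrict f).eval t = eval ![l.base + l.slope * t, l.plane, t] f := by
  have h : (Polynomial.evalRingHom t).comp l.restrict.toRingHom =
      eval ![l.base + l.slope * t, l.plane, t] :=
    MvPolynomial.ringHom_ext (fun a => by simp [restrict])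
      fun i => by fin_cases i <;> simp [restrict]
  exact RingHom.congr_fun h f

theorem eval_restrict_swap (l : PencilLine R) (f : MvPolynomial (Fin 3) R) (t : R) :
    (l.restrict (swap f)).eval t = eval ![l.plane, l.base + l.slope * t, t] f := by
  rw [eval_restrict, swap, renameEquiv_apply, eval_rename]
  congr 2
  funext i
  fin_cases i <;> rfl

theorem natDegree_restrict_le (l : PencilLine R) (f : MvPolynomial (Fin 3) R) :
    (l.restrict f).natDegree ≤ f.totalDegree := by
  rw [← mul_one f.totalDegree]
  refine MvPolynomial.aeval_natDegree_le f le_rfl _ fun i => ?_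
  fin_cases i
  · exact (Polynomial.natDegree_add_le _ _).trans
      (max_le (by simp) ((Polynomial.natDegree_C_mul_le _ _).trans Polynomial.natDegree_X_le))
  · simp
  · exact Polynomial.natDegree_X_le

theorem derivative_restrict (l : PencilLine R) (f : MvPolynomial (Fin 3) R) :
    Polynomial.derivative (l.restrict f) =
      Polynomial.C l.slope * l.restrict (pderiv 0 f) + l.restrict (pderiv 2 f) := by
  rw [restrict, derivative_aeval_eq_sum, Fin.sum_univ_three]
  simp only [Matrix.cons_val_zero, Matrix.cons_val_one, Matrix.cons_val, Polynomial.derivative_add,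
    Polynomial.derivative_C, Polynomial.derivative_C_mul, Polynomial.derivative_X]
  ring

end Restriction

section Curvature

variable {R : Type*} [CommRing R]

/-- The numerator of the curvature of the sections of the surface `f = 0` by the planes
`X₁ = const`; up to sign, the second derivative of `f` along the tangent vector
`(-∂₂f, 0, ∂₀f)`. -/
noncomputable def curvature (f : MvPolynomial (Fin 3) R) : MvPolynomial (Fin 3) R :=
  pderiv 0 f ^ 2 * pderiv 2 (pderiv 2 f)
    - pderiv 0 f * pderiv 2 f * (pderiv 0 (pderiv 2 f) + pderiv 2 (pderiv 0 f))
    + pderiv 2 f ^ 2 * pderiv 0 (pderiv 0 f)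

theorem totalDegree_curvature_le (f : MvPolynomial (Fin 3) R) :
    (curvature f).totalDegree ≤ 3 * f.totalDegree := by
  have first (i) : (pderiv i f).totalDegree ≤ f.totalDegree :=
    (totalDegree_pderiv_le i f).trans (Nat.sub_le _ _)
  have second (i j) : (pderiv i (pderiv j f)).totalDegree ≤ f.totalDegree :=
    ((totalDegree_pderiv_le i _).trans (Nat.sub_le _ _)).trans (first j)
  have product {a b c : MvPolynomial (Fin 3) R} (ha : a.totalDegree ≤ f.totalDegree)
      (hb : b.totalDegree ≤ f.totalDegree) (hc : c.totalDegree ≤ f.totalDegree) :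
      (a * b * c).totalDegree ≤ 3 * f.totalDegree := by
    have := totalDegree_mul (a * b) c
    have := totalDegree_mul a b
    omega
  rw [curvature, pow_two, pow_two]
  refine (totalDegree_add _ _).trans (max_le ((totalDegree_sub _ _).trans (max_le ?_ ?_)) ?_)
  · exact product (first _) (first _) (second _ _)
  · exact product (first _) (first _)
      ((totalDegree_add _ _).trans (max_le (second _ _) (second _ _)))
  · exact product (first _) (first _) (second _ _)

theorem sq_mul_derivative_derivative_restrict (l : PencilLine R) (f : MvPolynomial (Fin 3) R) :
    l.restrict (pderiv 0 f) ^ 2 * Polynomial.derivative (Polynomial.derivative (l.restrict f)) =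
      l.restrict (curvature f) + Polynomial.derivative (l.restrict f) *
        ((Polynomial.derivative (l.restrict f) - 2 * l.restrict (pderiv 2 f)) *
          l.restrict (pderiv 0 (pderiv 0 f)) + l.restrict (pderiv 0 f) *
          (l.restrict (pderiv 0 (pderiv 2 f)) + l.restrict (pderiv 2 (pderiv 0 f)))) := by
  simp only [curvature, map_add, map_sub, map_mul, map_pow, derivative_restrict,
    Polynomial.derivative_C_mul]
  ring

theorem restrict_curvature_eq_zero {l : PencilLine R} {f : MvPolynomial (Fin 3) R}
    (h : l.restrict f = 0) : l.restrict (curvature f) = 0 := by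
  simpa [h] using (sq_mul_derivative_derivative_restrict l f).symm

end Curvature

variable {K : Type*} [Field K] {N : ℕ} {f : MvPolynomial (Fin 3) K}

theorem card_planes_le {g : MvPolynomial (Fin 3) K} (hf : Irreducible f) (hf0 : pderiv 0 f ≠ 0)
    (hfg : ¬f ∣ g) {V : Finset K}
    (hV : ∀ v ∈ V, ∃ z w, restrict ⟨v, z, w⟩ f = 0 ∧ restrict ⟨v, z, w⟩ g = 0) :
    V.card ≤ 2 * (f.totalDegree * g.totalDegree) := by
  obtain ⟨r, hr0, hrdeg, P, Q, hPQ⟩ := exists_eliminant hf hf0 hfg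
  refine (card_le_totalDegree_of_aeval_eq_zero hr0 fun v hv => ?_).trans hrdeg
  obtain ⟨z, w, hfv, hgv⟩ := hV v hv
  have hr : restrict ⟨v, z, w⟩ (rename Fin.succ r) = aeval ![Polynomial.C v, Polynomial.X] r := by
    rw [restrict, aeval_rename]
    rfl
  rw [← hr, ← hPQ, map_add, map_mul, map_mul, hfv, hgv, zero_mul, zero_mul, add_zero]

theorem restrict_tangent_eq_zero (hK : CharAtLeast K N) (hruled : f ∣ curvature f)
    (hdeg : f.totalDegree < N) {s v t m : K} (hf : eval ![s, v, t] f = 0)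
    (h0 : eval ![s, v, t] (pderiv 0 f) ≠ 0)
    (hm : m * eval ![s, v, t] (pderiv 0 f) + eval ![s, v, t] (pderiv 2 f) = 0) :
    restrict ⟨v, s - m * t, m⟩ f = 0 := by
  obtain ⟨q, hq⟩ := hruled
  set l : PencilLine K := ⟨v, s - m * t, m⟩ with hl
  have hpt : ![l.base + l.slope * t, l.plane, t] = ![s, v, t] := by simp [hl]
  have hrel := sq_mul_derivative_derivative_restrict l f
  rw [hq, map_mul] at hrel
  refine eq_zero_of_second_order_relation hK (c := t) hrel ?_ ?_ ?_
    ((natDegree_restrict_le _ _).trans_lt hdeg)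
  · rwa [eval_restrict, hpt]
  · rwa [Polynomial.IsRoot.def, eval_restrict, hpt]
  · rwa [Polynomial.IsRoot.def, derivative_restrict, Polynomial.eval_add, Polynomial.eval_mul,
      Polynomial.eval_C, eval_restrict, eval_restrict, hpt]

/-- The red line of `r` meets the blue line of `b`. For lines of nonzero slope this is what
remains of `r.base + r.slope * t = b.plane`, `b.base + b.slope * t = r.plane` after elimination
of the parameter `t`. -/
def Meets (r b : PencilLine K) : Prop :=
  (r.plane - b.base) * r.slope = (b.plane - r.base) * b.slope

theorem meets_comm (r b : PencilLine K) : Meets r b ↔ Meets b r := eq_comm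

/-- The parameter at which a line transversal to the pencil reaches the position `v`. -/
noncomputable def height (l : PencilLine K) (v : K) : K := (v - l.base) / l.slope

theorem base_add_slope_mul_height {l : PencilLine K} (hl : l.slope ≠ 0) (v : K) :
    l.base + l.slope * l.height v = v := by
  rw [height, mul_div_cancel₀ _ hl, add_sub_cancel]

theorem height_injective {l : PencilLine K} (hl : l.slope ≠ 0) :
    Function.Injective l.height := fun v v' h => by
  rw [← base_add_slope_mul_height hl v, h, base_add_slope_mul_height hl v']

theorem Meets.base_add_slope_mul_height {r b : PencilLine K} (h : Meets r b)
    (hr : r.slope ≠ 0) : b.base + b.slope * r.height b.plane = r.plane := by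
  rw [Meets] at h
  rw [height]
  field_simp
  linear_combination -h

theorem card_meets_le {g : MvPolynomial (Fin 3) K} {r : PencilLine K} (hrg : r.restrict g ≠ 0)
    (hr : r.slope ≠ 0) {B : Finset (PencilLine K)} (hB : Set.InjOn plane (B : Set (PencilLine K)))
    (hBg : ∀ b ∈ B, b.restrict (swap g) = 0) :
    (B.filter fun b => Meets r b).card ≤ g.totalDegree := by
  refine (card_le_natDegree_of_isRoot hrg (v := fun b => r.height b.plane) ?_ ?_).trans
    (natDegree_restrict_le r g)
  · exact (height_injective hr).comp_injOn (hB.mono (by exact_mod_cast filter_subset _ B))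
  · intro b hb
    obtain ⟨hbB, hrb⟩ := mem_filter.1 hb
    have hzero := eval_restrict_swap b g (r.height b.plane)
    rw [hBg b hbB, Polynomial.eval_zero, hrb.base_add_slope_mul_height hr] at hzero
    rw [Polynomial.IsRoot.def, eval_restrict, PencilLine.base_add_slope_mul_height hr, ← hzero]

section Tangents

/-- The height function of `b`, as an affine function of the coordinate `X₁`. -/
noncomputable def heightPoly (b : PencilLine K) : MvPolynomial (Fin 3) K :=
  C b.slope⁻¹ * (X 1 - C b.base)

/-- On the plane `X₁ = v` this polynomial is the equation of the tangent, at the point of the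
blue line of `b`, to the section of the surface `f = 0`. -/
noncomputable def tangentPoly (b : PencilLine K) (f : MvPolynomial (Fin 3) K) :
    MvPolynomial (Fin 3) K :=
  Polynomial.aeval b.heightPoly (b.restrict (swap (pderiv 2 f))) * (X 2 - b.heightPoly) +
    Polynomial.aeval b.heightPoly (b.restrict (swap (pderiv 0 f))) * (X 0 - C b.plane)

theorem restrict_heightPoly (b l : PencilLine K) :
    l.restrict b.heightPoly = Polynomial.C (b.height l.plane) := by
  simp [heightPoly, height, restrict, ← algebraMap_eq, div_eq_inv_mul]

theorem restrict_aeval_heightPoly (b l : PencilLine K) (q : K[X]) :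
    l.restrict (Polynomial.aeval b.heightPoly q) =
      Polynomial.C (q.eval (b.height l.plane)) := by
  rw [← Polynomial.aeval_algHom_apply, restrict_heightPoly, ← Polynomial.algebraMap_eq,
    Polynomial.aeval_algebraMap_apply, Polynomial.coe_aeval_eq_eval]

theorem restrict_tangentPoly (b l : PencilLine K) (f : MvPolynomial (Fin 3) K) :
    l.restrict (b.tangentPoly f) =
      Polynomial.C ((b.restrict (swap (pderiv 2 f))).eval (b.height l.plane)) *
          (Polynomial.X - Polynomial.C (b.height l.plane)) +
        Polynomial.C ((b.restrict (swap (pderiv 0 f))).eval (b.height l.plane)) *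
          (Polynomial.C l.base + Polynomial.C l.slope * Polynomial.X - Polynomial.C b.plane) := by
  simp only [tangentPoly, map_add, map_mul, map_sub, restrict_aeval_heightPoly,
    restrict_heightPoly]
  simp [restrict]

theorem exists_restrict_tangentPoly_eq_zero (hK : CharAtLeast K N) (hruled : f ∣ curvature f)
    (hdeg : f.totalDegree < N) {b : PencilLine K} (hslope : b.slope ≠ 0)
    (hb : b.restrict (swap f) = 0) {v : K}
    (hv : (b.restrict (swap (pderiv 0 f))).eval (b.height v) ≠ 0) :
    ∃ z w, restrict ⟨v, z, w⟩ f = 0 ∧ restrict ⟨v, z, w⟩ (b.tangentPoly f) = 0 := by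
  set t := b.height v with ht
  set α := (b.restrict (swap (pderiv 2 f))).eval t with hα
  set β := (b.restrict (swap (pderiv 0 f))).eval t with hβ
  set m := -(α / β) with hm
  have hαβ : m * β + α = 0 := by rw [hm]; field_simp; ring
  have heval (g : MvPolynomial (Fin 3) K) :
      eval ![b.plane, v, t] g = (b.restrict (swap g)).eval t := by
    rw [eval_restrict_swap, base_add_slope_mul_height hslope]
  refine ⟨b.plane - m * t, m, restrict_tangent_eq_zero hK hruled hdeg ?_ ?_ ?_, ?_⟩
  · rw [heval, hb, Polynomial.eval_zero]
  · rwa [heval]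
  · rwa [heval, heval]
  · rw [restrict_tangentPoly, ← ht, ← hα, ← hβ]
    have hα' := congrArg Polynomial.C hαβ
    simp only [Polynomial.C_add, Polynomial.C_mul, Polynomial.C_sub, Polynomial.C_0] at hα' ⊢
    linear_combination (Polynomial.X - Polynomial.C t) * hα'

theorem dvd_tangentPoly [Infinite K] (hK : CharAtLeast K N) (hf : Irreducible f)
    (hruled : f ∣ curvature f) (hdeg : f.totalDegree < N) {b : PencilLine K}
    (hslope : b.slope ≠ 0) (hb : b.restrict (swap f) = 0)
    (hb0 : b.restrict (swap (pderiv 0 f)) ≠ 0) : f ∣ b.tangentPoly f := by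
  by_contra hnd
  have hf0 : pderiv 0 f ≠ 0 := fun h => hb0 (by rw [h, map_zero, map_zero])
  have hfin : {v | (b.restrict (swap (pderiv 0 f))).IsRoot (b.height v)}.Finite :=
    (Polynomial.finite_setOfPred_isRoot hb0).preimage (height_injective hslope).injOn
  obtain ⟨V, hV, hcard⟩ := hfin.infinite_compl.exists_subset_card_eq
    (2 * (f.totalDegree * (b.tangentPoly f).totalDegree) + 1)
  have hle := card_planes_le hf hf0 hnd (V := V) fun v hv =>
    exists_restrict_tangentPoly_eq_zero hK hruled hdeg hslope hb (hV hv)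
  omega

theorem meets_of_dvd_tangentPoly {b r : PencilLine K} (hslope : b.slope ≠ 0)
    (hdvd : f ∣ b.tangentPoly f) (hr : r.restrict f = 0)
    (h0 : (b.restrict (swap (pderiv 0 f))).eval (b.height r.plane) ≠ 0) : Meets r b := by
  have hzero : (r.restrict (b.tangentPoly f)).eval (b.height r.plane) = 0 := by
    obtain ⟨q, hq⟩ := hdvd
    rw [hq, map_mul, hr, zero_mul, Polynomial.eval_zero]
  rw [restrict_tangentPoly] at hzero
  simp only [Polynomial.eval_add, Polynomial.eval_mul, Polynomial.eval_C, Polynomial.eval_sub,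
    Polynomial.eval_X, sub_self, mul_zero, zero_add] at hzero
  have hplane := (mul_eq_zero.1 hzero).resolve_left h0
  rw [height] at hplane
  field_simp at hplane
  rw [Meets]
  linear_combination hplane

theorem card_not_meets_le [Infinite K] (hK : CharAtLeast K N) (hf : Irreducible f)
    (hruled : f ∣ curvature f) (hdeg : f.totalDegree < N) {b : PencilLine K}
    (hslope : b.slope ≠ 0) (hb : b.restrict (swap f) = 0)
    (hb0 : b.restrict (swap (pderiv 0 f)) ≠ 0) {R : Finset (PencilLine K)}
    (hR : Set.InjOn plane (R : Set (PencilLine K))) (hRf : ∀ r ∈ R, r.restrict f = 0) :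
    (R.filter fun r => ¬Meets r b).card ≤ f.totalDegree := by
  have hdvd := dvd_tangentPoly hK hf hruled hdeg hslope hb hb0
  calc (R.filter fun r => ¬Meets r b).card
      ≤ (b.restrict (swap (pderiv 0 f))).natDegree :=
        card_le_natDegree_of_isRoot hb0 (v := fun r => b.height r.plane)
          ((height_injective hslope).comp_injOn (hR.mono (by exact_mod_cast filter_subset _ R)))
          fun r hr => by
            by_contra h0
            obtain ⟨hrR, hrb⟩ := mem_filter.1 hr
            exact hrb (meets_of_dvd_tangentPoly hslope hdvd (hRf r hrR) h0)
    _ ≤ (swap (pderiv 0 f)).totalDegree := natDegree_restrict_le _ _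
    _ ≤ f.totalDegree := by
      rw [totalDegree_swap]
      exact (totalDegree_pderiv_le _ _).trans (Nat.sub_le _ _)

end Tangents

section Incidences

/-- A family of lines with nonzero slopes, at most one in each plane of the pencil. -/
def Transversal (R : Finset (PencilLine K)) : Prop :=
  Set.InjOn plane (R : Set (PencilLine K)) ∧ ∀ r ∈ R, r.slope ≠ 0

/-- Any two blue lines of `B` meet at most `κ` common red lines of `R`. -/
def CodegreeLE (κ : ℕ) (R B : Finset (PencilLine K)) : Prop :=
  ∀ b₁ ∈ B, ∀ b₂ ∈ B, b₁ ≠ b₂ → (R.filter fun r => Meets r b₁ ∧ Meets r b₂).card ≤ κ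

/-- The number of incidences between the red lines of `R` and the blue lines of `B`. -/
noncomputable def inc (R B : Finset (PencilLine K)) : ℕ :=
  ∑ r ∈ R, (B.filter fun b => Meets r b).card

variable {R R' B B' : Finset (PencilLine K)} {κ : ℕ}

theorem Transversal.mono (h : Transversal R) (hs : R' ⊆ R) : Transversal R' :=
  ⟨h.1.mono (coe_subset.2 hs), fun r hr => h.2 r (hs hr)⟩

theorem CodegreeLE.mono (h : CodegreeLE κ R B) (hR : R' ⊆ R) (hB : B' ⊆ B) :
    CodegreeLE κ R' B' := fun b₁ h₁ b₂ h₂ hne =>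
  (card_le_card (filter_subset_filter _ hR)).trans (h b₁ (hB h₁) b₂ (hB h₂) hne)

theorem inc_comm (R B : Finset (PencilLine K)) : inc R B = inc B R := by
  have h := sum_card_bipartiteAbove_eq_sum_card_bipartiteBelow (s := R) (t := B) Meets
  simp only [bipartiteAbove, bipartiteBelow] at h
  simp only [inc, h, meets_comm]

theorem inc_le_card_mul {d : ℕ} (h : ∀ r ∈ R, (B.filter fun b => Meets r b).card ≤ d) :
    inc R B ≤ R.card * d :=
  sum_le_card_nsmul R _ d h

theorem inc_le_card_mul_card (R B : Finset (PencilLine K)) : inc R B ≤ R.card * B.card :=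
  inc_le_card_mul fun _ _ => card_filter_le _ _

theorem CodegreeLE.sum_card_offDiag_le (h : CodegreeLE κ R B) :
    ∑ r ∈ R, (B.filter fun b => Meets r b).offDiag.card ≤ κ * B.card ^ 2 := by
  have hcount := sum_card_bipartiteAbove_eq_sum_card_bipartiteBelow (s := R) (t := B.offDiag)
    (fun r q => Meets r q.1 ∧ Meets r q.2)
  simp only [bipartiteAbove, bipartiteBelow] at hcount
  calc ∑ r ∈ R, (B.filter fun b => Meets r b).offDiag.card
      = ∑ r ∈ R, (B.offDiag.filter fun q => Meets r q.1 ∧ Meets r q.2).card :=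
        sum_congr rfl fun r _ => congrArg card <| by
          ext q
          simp only [mem_offDiag, mem_filter]
          tauto
    _ = ∑ q ∈ B.offDiag, (R.filter fun r => Meets r q.1 ∧ Meets r q.2).card := hcount
    _ ≤ B.offDiag.card • κ := sum_le_card_nsmul _ _ _ fun q hq => by
        obtain ⟨h₁, h₂, hne⟩ := mem_offDiag.1 hq
        exact h _ h₁ _ h₂ hne
    _ ≤ κ * B.card ^ 2 := by
        rw [smul_eq_mul, mul_comm, offDiag_card, pow_two]
        exact Nat.mul_le_mul_left _ (Nat.sub_le _ _)

theorem CodegreeLE.card_le_of_dense (h : CodegreeLE κ R B) (hB : 8 ≤ B.card)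
    (hR : ∀ r ∈ R, B.card ≤ 2 * (B.filter fun b => Meets r b).card) : R.card ≤ 8 * κ := by
  have hpairs : ∀ r ∈ R, B.card ^ 2 ≤ 8 * (B.filter fun b => Meets r b).offDiag.card := by
    intro r hr
    obtain ⟨y, hy⟩ : ∃ y, (B.filter fun b => Meets r b).card = y + 4 :=
      Nat.exists_eq_add_of_le' (by linarith [hR r hr])
    have hBy : B.card ≤ 2 * (y + 4) := hy ▸ hR r hr
    have hoff : (y + 4) * (y + 4) - (y + 4) = (y + 4) * (y + 3) := by
      rw [← Nat.mul_sub_one, Nat.add_succ_sub_one]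
    rw [offDiag_card, hy, hoff]
    nlinarith
  have hsum : R.card * B.card ^ 2 ≤ 8 * κ * B.card ^ 2 := calc
    R.card * B.card ^ 2 ≤ ∑ r ∈ R, 8 * (B.filter fun b => Meets r b).offDiag.card :=
        card_nsmul_le_sum _ _ _ hpairs
    _ ≤ 8 * (κ * B.card ^ 2) := by
        rw [← mul_sum]
        exact Nat.mul_le_mul_left _ h.sum_card_offDiag_le
    _ = 8 * κ * B.card ^ 2 := by ring
  exact Nat.le_of_mul_le_mul_right hsum (by positivity)

end Incidences

section Surfaces

theorem X_zero_sub_C_dvd_of_eval_eq_zero [Infinite K] {n : ℕ} {f : MvPolynomial (Fin (n + 1)) K}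
    {v : K} (h : ∀ x : Fin n → K, eval (Fin.cons v x : Fin (n + 1) → K) f = 0) :
    X 0 - C v ∣ f := by
  have hroot : (finSuccEquiv K n f).IsRoot (C v) := MvPolynomial.funext fun x => by
    rw [← Polynomial.eval_map_apply, map_zero, eval_C, ← eval_eq_eval_mv_eval', h]
  have hX : finSuccEquiv K n (X 0 - C v) = Polynomial.X - Polynomial.C (C v) := by
    simp [finSuccEquiv_apply]
  rw [← map_dvd_iff (finSuccEquiv K n), hX]
  exact Polynomial.dvd_iff_isRoot.2 hroot

theorem pderiv_zero_ne_zero [Infinite K] (hK : CharAtLeast K N) (hf : Irreducible f)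
    (hdeg : f.totalDegree < N) {r b : PencilLine K} (hslope : b.slope ≠ 0)
    (hr : r.restrict f = 0) (hb : b.restrict (swap f) = 0) : pderiv 0 f ≠ 0 := by
  intro h0
  have hplane (x : Fin 2 → K) : eval (Fin.cons r.plane x : Fin 3 → K) (swap f) = 0 := by
    have hpt := eval_restrict r f (x 1)
    rw [hr, Polynomial.eval_zero] at hpt
    rw [swap, renameEquiv_apply, eval_rename, hpt]
    refine eval₂Hom_congr' rfl (fun i hi _ => ?_) rfl
    fin_cases i
    · exact absurd hi (notMem_vars_of_pderiv_eq_zero hK h0 hdeg)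
    · rfl
    · rfl
  obtain ⟨q, hq⟩ := X_zero_sub_C_dvd_of_eval_eq_zero hplane
  rcases (irreducible_swap.2 hf).isUnit_or_isUnit hq with hunit | hunit
  · have := hunit.map (eval fun _ => r.plane)
    simp at this
  · rw [hq, map_mul] at hb
    have hline := (mul_eq_zero.1 hb).resolve_right (hunit.map b.restrict).ne_zero
    have hcoeff := congrArg (Polynomial.coeff · 1) hline
    exact hslope (by simpa [restrict, ← algebraMap_eq, Polynomial.coeff_C] using hcoeff)

theorem pderiv_one_ne_zero [Infinite K] (hK : CharAtLeast K N) (hf : Irreducible f)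
    (hdeg : f.totalDegree < N) {r b : PencilLine K} (hslope : r.slope ≠ 0)
    (hr : r.restrict f = 0) (hb : b.restrict (swap f) = 0) : pderiv 1 f ≠ 0 := by
  have h := pderiv_zero_ne_zero hK (irreducible_swap.2 hf) (by rwa [totalDegree_swap]) hslope hb
    (by rwa [swap_swap])
  rwa [pderiv_zero_swap, ne_eq, map_eq_zero_iff _ swap.injective] at h

variable {R B : Finset (PencilLine K)} {κ : ℕ}

theorem Transversal.card_le {g : MvPolynomial (Fin 3) K} (hR : Transversal R)
    (hf : Irreducible f) (hf0 : pderiv 0 f ≠ 0) (hfg : ¬f ∣ g) (hRf : ∀ r ∈ R, r.restrict f = 0)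
    (hRg : ∀ r ∈ R, r.restrict g = 0) : R.card ≤ 2 * (f.totalDegree * g.totalDegree) := by
  rw [← card_image_of_injOn hR.1]
  refine card_planes_le hf hf0 hfg fun v hv => ?_
  obtain ⟨r, hr, rfl⟩ := mem_image.1 hv
  exact ⟨r.base, r.slope, hRf r hr, hRg r hr⟩

theorem inc_le_card_mul_totalDegree {g : MvPolynomial (Fin 3) K}
    (hR : ∀ r ∈ R, r.slope ≠ 0) (hB : Transversal B) (hRg : ∀ r ∈ R, r.restrict g ≠ 0)
    (hBg : ∀ b ∈ B, b.restrict (swap g) = 0) : inc R B ≤ R.card * g.totalDegree :=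
  inc_le_card_mul fun r hr => card_meets_le (hRg r hr) (hR r hr) hB.1 hBg

theorem inc_le_of_red_ruled [Infinite K] (hK : CharAtLeast K N) (hf : Irreducible f)
    (hruled : f ∣ curvature f) (hdeg : f.totalDegree < N) (hR : Transversal R)
    (hB : Transversal B) (hκ : CodegreeLE κ R B) (hRf : ∀ r ∈ R, r.restrict f = 0)
    (hBf : ∀ b ∈ B, b.restrict (swap f) = 0)
    (hB0 : ∀ b ∈ B, b.restrict (swap (pderiv 0 f)) ≠ 0) :
    inc R B ≤ R.card + (2 * f.totalDegree + κ) * B.card := by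
  rcases le_or_gt B.card 1 with hcard | hcard
  · have := (inc_le_card_mul_card R B).trans (Nat.mul_le_mul_left _ hcard)
    omega
  · obtain ⟨b₁, hb₁, b₂, hb₂, hne⟩ := one_lt_card.1 hcard
    have hmiss (b) (hb : b ∈ B) : (R.filter fun r => ¬Meets r b).card ≤ f.totalDegree :=
      card_not_meets_le hK hf hruled hdeg (hB.2 b hb) (hBf b hb) (hB0 b hb) hR.1 hRf
    have hcover : R ⊆ (R.filter fun r => ¬Meets r b₁) ∪ (R.filter fun r => ¬Meets r b₂) ∪
        R.filter fun r => Meets r b₁ ∧ Meets r b₂ := by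
      intro r hr
      simp only [mem_union, mem_filter, hr, true_and]
      tauto
    have hRcard : R.card ≤ 2 * f.totalDegree + κ := by
      have := (card_le_card hcover).trans
        ((card_union_le _ _).trans (Nat.add_le_add_right (card_union_le _ _) _))
      have := hmiss b₁ hb₁
      have := hmiss b₂ hb₂
      have := hκ b₁ hb₁ b₂ hb₂ hne
      omega
    exact (inc_le_card_mul_card R B).trans
      ((Nat.mul_le_mul_right _ hRcard).trans (Nat.le_add_left _ _))

theorem inc_le_of_blue_ruled [Infinite K] (hK : CharAtLeast K N) (hf : Irreducible f)
    (hruled : swap f ∣ curvature (swap f)) (hdeg : f.totalDegree < N) (hf0 : 0 < f.totalDegree)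
    (hR : Transversal R) (hB : Transversal B) (hκ : CodegreeLE κ R B)
    (hRf : ∀ r ∈ R, r.restrict f = 0) (hBf : ∀ b ∈ B, b.restrict (swap f) = 0)
    (hR0 : ∀ r ∈ R, r.restrict (pderiv 1 f) ≠ 0) :
    inc R B ≤ 10 * f.totalDegree * R.card + 8 * κ * B.card := by
  rcases le_or_gt B.card (2 * f.totalDegree + 8) with hcard | hcard
  · calc inc R B ≤ R.card * B.card := inc_le_card_mul_card R B
      _ ≤ R.card * (10 * f.totalDegree) := Nat.mul_le_mul_left _ (by omega)
      _ ≤ 10 * f.totalDegree * R.card + 8 * κ * B.card := by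
        rw [mul_comm]
        exact Nat.le_add_right _ _
  · have hdense : ∀ r ∈ R, B.card ≤ 2 * (B.filter fun b => Meets r b).card := by
      intro r hr
      have hmiss : (B.filter fun b => ¬Meets b r).card ≤ (swap f).totalDegree :=
        card_not_meets_le hK (irreducible_swap.2 hf) hruled (by rwa [totalDegree_swap])
          (hR.2 r hr) (by rw [swap_swap, hRf r hr])
          (by rw [pderiv_zero_swap, swap_swap]; exact hR0 r hr) hB.1 hBf
      simp only [totalDegree_swap, meets_comm _ r] at hmiss
      have := card_filter_add_card_filter_not (s := B) (fun b => Meets r b)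
      omega
    exact (inc_le_card_mul_card R B).trans ((Nat.mul_le_mul_right _
      (hκ.card_le_of_dense (by omega) hdense)).trans (Nat.le_add_left _ _))

theorem totalDegree_pos_of_pderiv_ne_zero {σ : Type*} {g : MvPolynomial σ K} {i : σ}
    (h : pderiv i g ≠ 0) : 0 < g.totalDegree := by
  refine Nat.pos_of_ne_zero fun h0 => h ?_
  rw [totalDegree_eq_zero_iff_eq_C.1 h0, pderiv_C]

theorem card_le_sq_of_restrict_eq_zero [Infinite K] (hK : CharAtLeast K N) (hf : Irreducible f)
    (hdeg : f.totalDegree < N) (hR : Transversal R) (hRf : ∀ r ∈ R, r.restrict f = 0)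
    {b : PencilLine K} (hslope : b.slope ≠ 0) (hb : b.restrict (swap f) = 0)
    {g : MvPolynomial (Fin 3) K} (hfg : ¬f ∣ g) (hg : g.totalDegree ≤ 3 * f.totalDegree)
    (hRg : ∀ r ∈ R, r.restrict g = 0) : R.card ≤ (3 * f.totalDegree) ^ 2 := by
  rcases R.eq_empty_or_nonempty with rfl | ⟨r, hr⟩
  · simp
  have hle := hR.card_le hf (pderiv_zero_ne_zero hK hf hdeg hslope (hRf r hr) hb) hfg hRf hRg
  nlinarith [Nat.mul_le_mul_left f.totalDegree hg]

end Surfaces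

variable {R R' B B' : Finset (PencilLine K)} {κ : ℕ}
  {g : MvPolynomial (Fin 3) K}

/-- The standing assumptions of the incidence bound for the red lines `R` and the blue lines
`B`. -/
structure Configuration (κ : ℕ) (R B : Finset (PencilLine K)) : Prop where
  red : Transversal R
  blue : Transversal B
  codegree : CodegreeLE κ R B

theorem Configuration.mono (h : Configuration κ R B) (hR : R' ⊆ R) (hB : B' ⊆ B) :
    Configuration κ R' B' :=
  ⟨h.red.mono hR, h.blue.mono hB, h.codegree.mono hR hB⟩

section Splitting

/-- The lines of `R` which, as red lines, lie on the surface `f = 0`. -/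
noncomputable def linesOn (f : MvPolynomial (Fin 3) K) (R : Finset (PencilLine K)) :
    Finset (PencilLine K) :=
  R.filter fun r => r.restrict f = 0

/-- The lines of `R` which, as red lines, do not lie on the surface `f = 0`. -/
noncomputable def linesOff (f : MvPolynomial (Fin 3) K) (R : Finset (PencilLine K)) :
    Finset (PencilLine K) :=
  R.filter fun r => ¬r.restrict f = 0

theorem linesOn_subset : linesOn f R ⊆ R :=
  filter_subset _ _

theorem linesOff_subset : linesOff f R ⊆ R :=
  filter_subset _ _

theorem restrict_eq_zero_of_mem_linesOn {r : PencilLine K} (h : r ∈ linesOn f R) :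
    r.restrict f = 0 :=
  (mem_filter.1 h).2

theorem restrict_ne_zero_of_mem_linesOff {r : PencilLine K} (h : r ∈ linesOff f R) :
    r.restrict f ≠ 0 :=
  (mem_filter.1 h).2

theorem card_linesOn_add_card_linesOff (f : MvPolynomial (Fin 3) K)
    (R : Finset (PencilLine K)) : (linesOn f R).card + (linesOff f R).card = R.card :=
  card_filter_add_card_filter_not _

theorem inc_linesOn_add_inc_linesOff_left (f : MvPolynomial (Fin 3) K)
    (R B : Finset (PencilLine K)) : inc (linesOn f R) B + inc (linesOff f R) B = inc R B :=
  sum_filter_add_sum_filter_not R _ _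

theorem inc_linesOn_add_inc_linesOff_right (f : MvPolynomial (Fin 3) K)
    (R B : Finset (PencilLine K)) : inc R (linesOn f B) + inc R (linesOff f B) = inc R B := by
  rw [inc_comm R, inc_comm R, inc_comm R, inc_linesOn_add_inc_linesOff_left]

theorem inc_linesOff_le (hR : Transversal R) (hB : Transversal B)
    (hBg : ∀ b ∈ B, b.restrict (swap g) = 0) :
    inc (linesOff g R) B ≤ (linesOff g R).card * g.totalDegree :=
  inc_le_card_mul_totalDegree (fun r hr => hR.2 r (linesOff_subset hr)) hB
    (fun _ hr => restrict_ne_zero_of_mem_linesOff hr) hBg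

theorem inc_linesOff_linesOn_le (hR : Transversal R) (hB : Transversal B)
    (g : MvPolynomial (Fin 3) K) :
    inc (linesOff g R) (linesOn (swap g) B) ≤ (linesOff g R).card * g.totalDegree :=
  inc_linesOff_le hR (hB.mono linesOn_subset) fun _ hb => restrict_eq_zero_of_mem_linesOn hb

theorem inc_linesOn_linesOff_le (hR : Transversal R) (hB : Transversal B)
    (g : MvPolynomial (Fin 3) K) :
    inc (linesOn g R) (linesOff (swap g) B) ≤ (linesOff (swap g) B).card * g.totalDegree := by
  have h := inc_linesOff_linesOn_le hB hR (swap g)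
  rwa [swap_swap, totalDegree_swap, inc_comm] at h

end Splitting

section IrreducibleSurfaces

theorem inc_le_of_dvd_curvature [Infinite K] (hK : CharAtLeast K N) (hf : Irreducible f)
    (hruled : f ∣ curvature f) (hdeg : f.totalDegree < N) (hf0 : 0 < f.totalDegree)
    (h : Configuration κ R B) (hRf : ∀ r ∈ R, r.restrict f = 0)
    (hBf : ∀ b ∈ B, b.restrict (swap f) = 0) :
    inc R B ≤ 10 * f.totalDegree * (R.card + B.card) + 8 * κ * B.card +
      inc (linesOn (pderiv 0 f) R) (linesOn (swap (pderiv 0 f)) B) := by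
  set g := pderiv 0 f
  have hblue := inc_linesOn_add_inc_linesOff_right (swap g) R B
  have hred := inc_linesOn_add_inc_linesOff_left g R (linesOn (swap g) B)
  have hruledSurface := inc_le_of_red_ruled hK hf hruled hdeg h.red
    (h.blue.mono linesOff_subset) (h.codegree.mono subset_rfl linesOff_subset) hRf
    (fun b hb => hBf b (linesOff_subset hb))
    (fun _ hb => restrict_ne_zero_of_mem_linesOff (f := swap g) hb)
  have hoff : inc (linesOff g R) (linesOn (swap g) B) ≤ R.card * f.totalDegree :=
    (inc_linesOff_linesOn_le h.red h.blue g).trans (Nat.mul_le_mul (card_le_card linesOff_subset)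
      ((totalDegree_pderiv_le 0 f).trans (Nat.sub_le _ _)))
  have hB : (2 * f.totalDegree + κ) * (linesOff (swap g) B).card ≤
      (2 * f.totalDegree + κ) * B.card := Nat.mul_le_mul_left _ (card_le_card linesOff_subset)
  nlinarith [Nat.mul_le_mul_right R.card hf0, Nat.zero_le (κ * B.card),
    Nat.zero_le (f.totalDegree * B.card)]

theorem inc_le_of_swap_dvd_curvature [Infinite K] (hK : CharAtLeast K N) (hf : Irreducible f)
    (hruled : swap f ∣ curvature (swap f)) (hdeg : f.totalDegree < N) (hf0 : 0 < f.totalDegree)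
    (h : Configuration κ R B) (hRf : ∀ r ∈ R, r.restrict f = 0)
    (hBf : ∀ b ∈ B, b.restrict (swap f) = 0) :
    inc R B ≤ 10 * f.totalDegree * (R.card + B.card) + 8 * κ * B.card +
      inc (linesOn (pderiv 1 f) R) (linesOn (swap (pderiv 1 f)) B) := by
  set g := pderiv 1 f
  have hred := inc_linesOn_add_inc_linesOff_left g R B
  have hblue := inc_linesOn_add_inc_linesOff_right (swap g) (linesOn g R) B
  have hruledSurface := inc_le_of_blue_ruled hK hf hruled hdeg hf0
    (h.red.mono linesOff_subset) h.blue (h.codegree.mono linesOff_subset subset_rfl)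
    (fun r hr => hRf r (linesOff_subset hr)) hBf
    (fun _ hr => restrict_ne_zero_of_mem_linesOff (f := g) hr)
  have hoff : inc (linesOn g R) (linesOff (swap g) B) ≤ B.card * f.totalDegree :=
    (inc_linesOn_linesOff_le h.red h.blue g).trans (Nat.mul_le_mul (card_le_card linesOff_subset)
      ((totalDegree_pderiv_le 1 f).trans (Nat.sub_le _ _)))
  have hR : 10 * f.totalDegree * (linesOff g R).card ≤ 10 * f.totalDegree * R.card :=
    Nat.mul_le_mul_left _ (card_le_card linesOff_subset)
  nlinarith [Nat.zero_le (f.totalDegree * B.card)]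

theorem exists_not_dvd_and_inc_le [Infinite K] (hK : CharAtLeast K N) (hf : Irreducible f)
    (hdeg : f.totalDegree < N) (h : Configuration κ R B) (hRf : ∀ r ∈ R, r.restrict f = 0)
    (hBf : ∀ b ∈ B, b.restrict (swap f) = 0) (hR : R.Nonempty) (hB : B.Nonempty) :
    ∃ g g' : MvPolynomial (Fin 3) K, ¬f ∣ g ∧ ¬swap f ∣ g' ∧
      g.totalDegree ≤ 3 * f.totalDegree ∧ g'.totalDegree ≤ 3 * f.totalDegree ∧
      inc R B ≤ 10 * f.totalDegree * (R.card + B.card) + 8 * κ * B.card +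
        inc (linesOn g R) (linesOn g' B) := by
  obtain ⟨r, hr⟩ := hR
  obtain ⟨b, hb⟩ := hB
  have hf0 : pderiv 0 f ≠ 0 :=
    pderiv_zero_ne_zero hK hf hdeg (h.blue.2 b hb) (hRf r hr) (hBf b hb)
  have hf1 : pderiv 1 f ≠ 0 :=
    pderiv_one_ne_zero hK hf hdeg (h.red.2 r hr) (hRf r hr) (hBf b hb)
  have hpos := totalDegree_pos_of_pderiv_ne_zero hf0
  have hpderiv (i) : (pderiv i f).totalDegree ≤ 3 * f.totalDegree :=
    (totalDegree_pderiv_le i f).trans (by omega)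
  have hswap {g} (hg : ¬f ∣ g) : ¬swap f ∣ swap g := mt (map_dvd_iff swap).1 hg
  by_cases hred : f ∣ curvature f
  · exact ⟨pderiv 0 f, swap (pderiv 0 f), not_dvd_pderiv hf0, hswap (not_dvd_pderiv hf0),
      hpderiv 0, by rw [totalDegree_swap]; exact hpderiv 0,
      inc_le_of_dvd_curvature hK hf hred hdeg hpos h hRf hBf⟩
  by_cases hblue : swap f ∣ curvature (swap f)
  · exact ⟨pderiv 1 f, swap (pderiv 1 f), not_dvd_pderiv hf1, hswap (not_dvd_pderiv hf1),
      hpderiv 1, by rw [totalDegree_swap]; exact hpderiv 1,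
      inc_le_of_swap_dvd_curvature hK hf hblue hdeg hpos h hRf hBf⟩
  · refine ⟨curvature f, curvature (swap f), hred, hblue, totalDegree_curvature_le f,
      (totalDegree_curvature_le _).trans_eq (by rw [totalDegree_swap]), ?_⟩
    have hRall : linesOn (curvature f) R = R :=
      filter_true_of_mem fun r hr => restrict_curvature_eq_zero (hRf r hr)
    have hBall : linesOn (curvature (swap f)) B = B :=
      filter_true_of_mem fun b hb => restrict_curvature_eq_zero (hBf b hb)
    rw [hRall, hBall]
    exact Nat.le_add_left _ _

theorem exists_inc_le_of_irreducible [Infinite K] (hK : CharAtLeast K N) (hf : Irreducible f)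
    (hdeg : f.totalDegree < N) (h : Configuration κ R B) (hRf : ∀ r ∈ R, r.restrict f = 0)
    (hBf : ∀ b ∈ B, b.restrict (swap f) = 0) :
    ∃ R' ⊆ R, ∃ B' ⊆ B, R'.card ≤ (3 * f.totalDegree) ^ 2 ∧ B'.card ≤ (3 * f.totalDegree) ^ 2 ∧
      inc R B ≤ 10 * f.totalDegree * (R.card + B.card) + 8 * κ * B.card + inc R' B' := by
  by_cases hne : R.Nonempty ∧ B.Nonempty
  · obtain ⟨⟨r, hr⟩, b, hb⟩ := hne
    obtain ⟨g, g', hg, hg', hgdeg, hgdeg', hinc⟩ :=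
      exists_not_dvd_and_inc_le hK hf hdeg h hRf hBf ⟨r, hr⟩ ⟨b, hb⟩
    refine ⟨linesOn g R, linesOn_subset, linesOn g' B, linesOn_subset, ?_, ?_, hinc⟩
    · exact card_le_sq_of_restrict_eq_zero hK hf hdeg (h.red.mono linesOn_subset)
        (fun r hr => hRf r (linesOn_subset hr)) (h.blue.2 b hb) (hBf b hb) hg hgdeg
        fun _ hr => restrict_eq_zero_of_mem_linesOn hr
    · have hsmall := card_le_sq_of_restrict_eq_zero (g := g') hK (irreducible_swap.2 hf)
        (by rwa [totalDegree_swap]) (h.blue.mono linesOn_subset)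
        (fun b hb => hBf b (linesOn_subset hb)) (h.red.2 r hr) (by rw [swap_swap, hRf r hr]) hg'
        (by rwa [totalDegree_swap]) fun _ hb => restrict_eq_zero_of_mem_linesOn hb
      rwa [totalDegree_swap] at hsmall
  · have hzero : inc R B = 0 := by
      rcases not_and_or.1 hne with hR | hB
      · simp [inc, not_nonempty_iff_eq_empty.1 hR]
      · simp [inc, not_nonempty_iff_eq_empty.1 hB]
    exact ⟨∅, empty_subset R, ∅, empty_subset B, by simp, by simp, hzero ▸ Nat.zero_le _⟩

end IrreducibleSurfaces

variable {k L S : ℕ}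

/-- The incidence bound with constants `k` and `L` for configurations of at most `s²` red and at
most `s²` blue lines, for all `s ≤ S`; the hypothesis of the recursion in the polynomial method. -/
def IncBoundUpTo (K : Type*) [Field K] (κ k L S : ℕ) : Prop :=
  ∀ s ≤ S, ∀ R B : Finset (PencilLine K), Configuration κ R B → R.card ≤ s ^ 2 →
    B.card ≤ s ^ 2 → inc R B ≤ k * s ^ 3 + κ * L * B.card

section Surfaces

theorem inc_le_linesOn_add_linesOff (hR : Transversal R) (hB : Transversal B)
    (g : MvPolynomial (Fin 3) K) :
    inc R B ≤ inc (linesOn g R) (linesOn (swap g) B) + inc (linesOff g R) (linesOff (swap g) B) +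
      g.totalDegree * ((linesOff g R).card + (linesOff (swap g) B).card) := by
  have hred := inc_linesOn_add_inc_linesOff_left g R B
  have hon := inc_linesOn_add_inc_linesOff_right (swap g) (linesOn g R) B
  have hoff := inc_linesOn_add_inc_linesOff_right (swap g) (linesOff g R) B
  have hmixed := inc_linesOff_linesOn_le hR hB g
  have hmixed' := inc_linesOn_linesOff_le hR hB g
  linarith

theorem inc_le_of_irreducible [Infinite K] (hK : CharAtLeast K N)
    (hrec : IncBoundUpTo K κ k L S) {f : MvPolynomial (Fin 3) K} (hf : Irreducible f)
    (hdeg : f.totalDegree < N) (hS : 3 * f.totalDegree ≤ S) (h : Configuration κ R B)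
    (hRf : ∀ r ∈ R, r.restrict f = 0) (hBf : ∀ b ∈ B, b.restrict (swap f) = 0) :
    inc R B ≤ 10 * f.totalDegree * (R.card + B.card) + κ * (8 + L) * B.card +
      27 * k * f.totalDegree ^ 3 := by
  obtain ⟨R', hR', B', hB', hcardR, hcardB, hinc⟩ :=
    exists_inc_le_of_irreducible hK hf hdeg h hRf hBf
  have hsmall := hrec _ hS R' B' (h.mono hR' hB') hcardR hcardB
  have hB'B : κ * L * B'.card ≤ κ * L * B.card := Nat.mul_le_mul_left _ (card_le_card hB')
  linarith

theorem restrict_eq_zero_of_mul {f g : MvPolynomial (Fin 3) K} {l : PencilLine K}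
    (h : l.restrict (f * g) = 0) (hf : l.restrict f ≠ 0) : l.restrict g = 0 :=
  (mul_eq_zero.1 (map_mul l.restrict f g ▸ h)).resolve_left hf

theorem inc_le_of_restrict_eq_zero [Infinite K] (hK : CharAtLeast K N)
    (hrec : IncBoundUpTo K κ k L S) {f : MvPolynomial (Fin 3) K} (hf : f ≠ 0)
    (hdeg : f.totalDegree < N) (hS : 3 * f.totalDegree ≤ S) (h : Configuration κ R B)
    (hRf : ∀ r ∈ R, r.restrict f = 0) (hBf : ∀ b ∈ B, b.restrict (swap f) = 0) :
    inc R B ≤ 11 * f.totalDegree * (R.card + B.card) + κ * (8 + L) * B.card +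
      27 * k * f.totalDegree ^ 3 := by
  induction f using WfDvdMonoid.induction_on_irreducible generalizing R B with
  | zero => exact absurd rfl hf
  | unit u hu =>
    have hR : R = ∅ := eq_empty_of_forall_notMem fun r hr => (hu.map r.restrict).ne_zero (hRf r hr)
    simp [hR, inc]
  | mul f q hf0 hq ih =>
    rw [totalDegree_mul_of_isDomain hq.ne_zero hf0] at hdeg hS ⊢
    have hsplit := inc_le_linesOn_add_linesOff h.red h.blue q
    have hon := inc_le_of_irreducible hK hrec hq (by omega) (by omega)
      (h.mono linesOn_subset linesOn_subset) (fun _ hr => restrict_eq_zero_of_mem_linesOn hr)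
      (fun _ hb => restrict_eq_zero_of_mem_linesOn hb)
    have hoff := ih hf0 (by omega) (by omega) (h.mono linesOff_subset linesOff_subset)
      (fun r hr => restrict_eq_zero_of_mul (hRf r (linesOff_subset hr))
        (restrict_ne_zero_of_mem_linesOff hr))
      (fun b hb => restrict_eq_zero_of_mul
        (map_mul swap q f ▸ hBf b (linesOff_subset hb)) (restrict_ne_zero_of_mem_linesOff hb))
    rw [← card_linesOn_add_card_linesOff q R, ← card_linesOn_add_card_linesOff (swap q) B]
    have hcube : 27 * k * q.totalDegree ^ 3 + 27 * k * f.totalDegree ^ 3 ≤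
        27 * k * (q.totalDegree + f.totalDegree) ^ 3 := by
      rw [← mul_add]
      exact Nat.mul_le_mul_left _ (pow_add_pow_le (Nat.zero_le _) (Nat.zero_le _) three_ne_zero)
    refine (hsplit.trans (Nat.add_le_add_right (Nat.add_le_add hon hoff) _)).trans ?_
    nlinarith [Nat.zero_le (q.totalDegree * ((linesOn q R).card + (linesOn (swap q) B).card)),
      Nat.zero_le (f.totalDegree * ((linesOn q R).card + (linesOn (swap q) B).card))]

end Surfaces

section VanishingPolynomial

theorem finrank_restrictDegree (σ R : Type*) [Finite σ] [CommRing R] [Nontrivial R] (d : ℕ) :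
    Module.finrank R (restrictDegree σ R d) = (d + 1) ^ Nat.card σ := by
  have e : {n : σ →₀ ℕ // ∀ i, n i ≤ d} ≃ (σ → {j // j ≤ d}) :=
    (Finsupp.equivFunOnFinite.subtypeEquiv fun _ => Iff.rfl).trans
      (Equiv.subtypePiEquivPi (p := fun (_ : σ) j => j ≤ d))
  have hbox : Nat.card {j // j ≤ d} = d + 1 := by
    rw [Nat.subtype_card (range (d + 1)) (by simp), card_range]
  rw [restrictDegree, Module.finrank_eq_nat_card_basis (basisRestrictSupport R _)]
  exact (Nat.card_congr e).trans (by rw [Nat.card_fun, hbox])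

theorem totalDegree_le_card_mul_of_mem_restrictDegree {σ R : Type*} [Fintype σ] [CommRing R]
    {d : ℕ} {f : MvPolynomial σ R} (hf : f ∈ restrictDegree σ R d) :
    f.totalDegree ≤ Fintype.card σ * d := by
  refine Finset.sup_le fun s hs => ?_
  rw [Finsupp.sum_fintype _ _ fun _ => rfl]
  exact sum_le_card_nsmul _ _ d fun i _ => (mem_restrictDegree σ f d).1 hf s hs i

theorem exists_restrict_swap_eq_zero (B : Finset (PencilLine K)) {d : ℕ}
    (hd : B.card * (3 * d + 1) < (d + 1) ^ 3) :
    ∃ f : MvPolynomial (Fin 3) K, f ≠ 0 ∧ f.totalDegree ≤ 3 * d ∧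
      ∀ b ∈ B, b.restrict (swap f) = 0 := by
  let coefficients : restrictDegree (Fin 3) K d →ₗ[K] (B × Fin (3 * d + 1) → K) :=
    LinearMap.pi fun q => Polynomial.lcoeff K q.2 ∘ₗ q.1.1.restrict.toLinearMap ∘ₗ
      swap.toLinearMap ∘ₗ (restrictDegree (Fin 3) K d).subtype
  have hrank : Module.finrank K (B × Fin (3 * d + 1) → K) <
      Module.finrank K (restrictDegree (Fin 3) K d) := by
    simpa [finrank_restrictDegree] using hd
  obtain ⟨⟨f, hf⟩, hker, hne⟩ :=
    (Submodule.ne_bot_iff _).1 (LinearMap.ker_ne_bot_of_finrank_lt (f := coefficients) hrank)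
  have hdeg : f.totalDegree ≤ 3 * d := totalDegree_le_card_mul_of_mem_restrictDegree hf
  refine ⟨f, fun h => hne (Subtype.ext h), hdeg, fun b hb => Polynomial.ext fun i => ?_⟩
  rw [Polynomial.coeff_zero]
  rcases lt_or_ge i (3 * d + 1) with hi | hi
  · exact congrFun (LinearMap.mem_ker.1 hker) (⟨b, hb⟩, ⟨i, hi⟩)
  · refine Polynomial.coeff_eq_zero_of_natDegree_lt
      ((natDegree_restrict_le b (swap f)).trans_lt ?_)
    rw [totalDegree_swap]
    omega

end VanishingPolynomial

section IncidenceBound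

theorem inc_le_of_three_mul_card_le [Infinite K] (hK : CharAtLeast K N) {d : ℕ} (hdN : 3 * d < N)
    (hrec : IncBoundUpTo K κ k L (9 * d)) (h : Configuration κ R B)
    (hcard : 3 * B.card ≤ d ^ 2 + 2) :
    inc R B ≤ 36 * d * (R.card + B.card) + κ * (8 + L) * B.card + 729 * k * d ^ 3 := by
  obtain ⟨f, hf0, hdeg, hBf⟩ := exists_restrict_swap_eq_zero B (d := d) (by
    nlinarith [Nat.mul_le_mul_right (3 * d + 1) hcard])
  have hsplit := inc_linesOn_add_inc_linesOff_left f R B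
  have hoff := inc_linesOff_le h.red h.blue hBf
  have hon := inc_le_of_restrict_eq_zero hK hrec hf0 (by omega) (by omega)
    (h.mono linesOn_subset subset_rfl) (fun _ hr => restrict_eq_zero_of_mem_linesOn hr) hBf
  have honcard : (linesOn f R).card ≤ R.card := card_le_card linesOn_subset
  have hoffcard : (linesOff f R).card ≤ R.card := card_le_card linesOff_subset
  have hcube : 27 * k * f.totalDegree ^ 3 ≤ 27 * k * (3 * d) ^ 3 :=
    Nat.mul_le_mul_left _ (Nat.pow_le_pow_left hdeg 3)
  have hlinear : 11 * f.totalDegree * ((linesOn f R).card + B.card) ≤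
      11 * (3 * d) * (R.card + B.card) :=
    Nat.mul_le_mul (Nat.mul_le_mul_left _ hdeg) (Nat.add_le_add_right honcard _)
  have hmixed : (linesOff f R).card * f.totalDegree ≤ R.card * (3 * d) :=
    Nat.mul_le_mul hoffcard hdeg
  nlinarith [Nat.zero_le (d * B.card)]

theorem inc_add_inc_sdiff {B' : Finset (PencilLine K)} (h : B' ⊆ B) :
    inc R B' + inc R (B \ B') = inc R B := by
  rw [inc_comm R B', inc_comm R (B \ B'), inc_comm R B, add_comm]
  exact sum_sdiff h

theorem inc_le_of_forall_card_le {m a c : ℕ} (hm : 0 < m) (B : Finset (PencilLine K))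
    (h : ∀ B' ⊆ B, B'.card ≤ m → inc R B' ≤ a + c * B'.card) :
    inc R B ≤ (B.card / m + 1) * a + c * B.card := by
  induction B using Finset.strongInduction with
  | H B ih =>
    rcases le_or_gt B.card m with hle | hlt
    · exact (h B subset_rfl hle).trans
        (Nat.add_le_add_right (Nat.le_mul_of_pos_left _ (Nat.succ_pos _)) _)
    · obtain ⟨B', hB', hcard⟩ := exists_subset_card_eq hlt.le
      have hne : B'.Nonempty := card_pos.1 (hcard ▸ hm)
      have hfirst := h B' hB' hcard.le
      have hrest := ih (B \ B') (sdiff_ssubset hB' hne) fun B'' hB'' =>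
        h B'' (hB''.trans sdiff_subset)
      have hdiv : B.card / m = (B \ B').card / m + 1 := by
        rw [Nat.div_eq_sub_div hm hlt.le, card_sdiff_of_subset hB', hcard]
      rw [← inc_add_inc_sdiff hB', hdiv, ← card_sdiff_add_card_eq_card hB']
      linarith

theorem card_div_add_one_mul_le {b d s : ℕ} (hds : 2 ^ 14 * d ≤ s)
    (hsd : s ≤ 2 ^ 15 * d) (hb : b ≤ s ^ 2) :
    (b / ((d ^ 2 + 2) / 3) + 1) * (72 * (d * s ^ 2) + 729 * 2 ^ 25 * d ^ 3) ≤ 2 ^ 25 * s ^ 3 := by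
  have hgroups : b / ((d ^ 2 + 2) / 3) ≤ 3 * 2 ^ 30 := by
    have hthird : d ^ 2 ≤ 3 * ((d ^ 2 + 2) / 3) := by omega
    refine Nat.div_le_of_le_mul (hb.trans ((Nat.pow_le_pow_left hsd 2).trans ?_))
    linarith
  have hquadratic : 2 ^ 14 * (d * s ^ 2) ≤ s ^ 3 := by
    rw [← mul_assoc, pow_succ' s 2]
    exact Nat.mul_le_mul_right _ hds
  have hcubic : 2 ^ 42 * d ^ 3 ≤ s ^ 3 := by
    have := Nat.pow_le_pow_left hds 3
    rwa [mul_pow, ← pow_mul] at this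
  refine (Nat.mul_le_mul_right _ (Nat.add_le_add_right hgroups 1)).trans ?_
  linarith [Nat.zero_le (s ^ 3)]

theorem inc_le_mul_pow_three_of_le {s : ℕ} (hs : s ≤ k) (hR : R.card ≤ s ^ 2)
    (hB : B.card ≤ s ^ 2) : inc R B ≤ k * s ^ 3 :=
  calc inc R B ≤ s ^ 2 * s ^ 2 := (inc_le_card_mul_card R B).trans (Nat.mul_le_mul hR hB)
    _ = s * s ^ 3 := by ring
    _ ≤ k * s ^ 3 := Nat.mul_le_mul_right _ hs

/-- Incidences between two transversal families of at most `s²` lines: divide the blue lines into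
boundedly many groups, each contained in a surface of degree about `s / 2 ^ 14`. -/
theorem inc_le [Infinite K] (hK : CharAtLeast K N) (s : ℕ) (hs : s ≤ 4 * N)
    (h : Configuration κ R B) (hR : R.card ≤ s ^ 2) (hB : B.card ≤ s ^ 2) :
    inc R B ≤ 2 ^ 25 * s ^ 3 + κ * (8 * Nat.log 2 s) * B.card := by
  induction s using Nat.strong_induction_on generalizing R B with
  | _ s ih =>
    rcases lt_or_ge s (2 ^ 14) with hsmall | hlarge
    · exact (inc_le_mul_pow_three_of_le (by omega) hR hB).trans (Nat.le_add_right _ _)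
    set d := s / 2 ^ 14
    have hds : 2 ^ 14 * d ≤ s := Nat.mul_div_le s _
    have hsd : s < 2 ^ 14 * (d + 1) := Nat.lt_mul_div_succ s (by norm_num)
    have hd0 : 0 < d := by omega
    have hlog : 8 * Nat.log 2 s = 8 + 8 * Nat.log 2 (s / 2) := by
      rw [Nat.log_of_one_lt_of_le one_lt_two (by omega)]
      ring
    have hrec : IncBoundUpTo K κ (2 ^ 25) (8 * Nat.log 2 (s / 2)) (9 * d) := by
      intro s' hs' R' B' h' hR' hB'
      refine (ih s' (by omega) (by omega) h' hR' hB').trans (Nat.add_le_add_left ?_ _)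
      gcongr
      omega
    have hgroup : ∀ B' ⊆ B, B'.card ≤ (d ^ 2 + 2) / 3 → inc R B' ≤
        72 * (d * s ^ 2) + 729 * 2 ^ 25 * d ^ 3 + κ * (8 * Nat.log 2 s) * B'.card := by
      intro B' hB' hcard
      have hinc := inc_le_of_three_mul_card_le hK (by omega) hrec (h.mono subset_rfl hB')
        (by omega)
      have hlinear : 36 * d * (R.card + B'.card) ≤ 36 * d * (s ^ 2 + s ^ 2) :=
        Nat.mul_le_mul_left _ (Nat.add_le_add hR ((card_le_card hB').trans hB))
      rw [hlog]
      linarith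
    exact (inc_le_of_forall_card_le (Nat.div_pos (by nlinarith) three_pos) B hgroup).trans
      (Nat.add_le_add_right (card_div_add_one_mul_le hds (by omega) hB) _)

end IncidenceBound

end PencilLine

section AlignedTriples

open PencilLine Polynomial

variable {F : Type*} [Field F]

/-- A triple `(x, m, c)` stands for the line of slope `m` and intercept `c` with a marked abscissa
`x`. Two triples are aligned if each line has the same height as the other one over the abscissa
marked on the other. -/
def Aligned (i j : F × F × F) : Prop :=
  i.2.2 + i.2.1 * j.1 = j.2.2 + j.2.1 * i.1

/-- The red line of a triple. Together with `blueLine` it encodes alignment as a meeting of lines;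
the powers of `X` are only there to put distinct triples into distinct planes. -/
noncomputable def redLine (i : F × F × F) : PencilLine (RatFunc F) where
  plane := algebraMap F[X] (RatFunc F) (C i.2.2 + C i.2.1 * X ^ 5 + C i.1 * X ^ 10) /
    algebraMap F[X] (RatFunc F) (1 + C i.1 * X)
  base := algebraMap F[X] (RatFunc F) (C i.2.1) / algebraMap F[X] (RatFunc F) (C i.1)
  slope := algebraMap F[X] (RatFunc F) (1 + C i.1 * X) / algebraMap F[X] (RatFunc F) (C i.1)

/-- The blue line of a triple, see `redLine`. -/
noncomputable def blueLine (j : F × F × F) : PencilLine (RatFunc F) where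
  plane := algebraMap F[X] (RatFunc F) (X ^ 10 + C j.2.1 - C j.2.2 * X) /
    algebraMap F[X] (RatFunc F) (C j.1 - X ^ 5)
  base := algebraMap F[X] (RatFunc F) (C j.2.2)
  slope := algebraMap F[X] (RatFunc F) (C j.1 - X ^ 5)

theorem algebraMap_ne_zero_of_coeff_ne_zero {f : F[X]} (n : ℕ) (h : f.coeff n ≠ 0) :
    algebraMap F[X] (RatFunc F) f ≠ 0 := by
  rw [Ne, map_eq_zero_iff _ (RatFunc.algebraMap_injective F)]
  rintro rfl
  exact h (coeff_zero n)

theorem algebraMap_C_ne_zero {x : F} (hx : x ≠ 0) : algebraMap F[X] (RatFunc F) (C x) ≠ 0 :=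
  algebraMap_ne_zero_of_coeff_ne_zero 0 (by rwa [coeff_C_zero])

theorem algebraMap_one_add_mul_X_ne_zero (x : F) :
    algebraMap F[X] (RatFunc F) (1 + C x * X) ≠ 0 :=
  algebraMap_ne_zero_of_coeff_ne_zero 0 (by simp)

theorem algebraMap_sub_X_pow_ne_zero (x : F) :
    algebraMap F[X] (RatFunc F) (C x - X ^ 5) ≠ 0 :=
  algebraMap_ne_zero_of_coeff_ne_zero 5 (by simp)

theorem meets_redLine_blueLine {i : F × F × F} (hi : i.1 ≠ 0) (j : F × F × F) :
    Meets (redLine i) (blueLine j) ↔ Aligned i j := by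
  have hC := algebraMap_C_ne_zero hi
  have hred := algebraMap_one_add_mul_X_ne_zero i.1
  have hblue := algebraMap_sub_X_pow_ne_zero j.1
  have haligned : Aligned i j ↔ algebraMap F[X] (RatFunc F) (C (i.2.2 + i.2.1 * j.1)) =
      algebraMap F[X] (RatFunc F) (C (j.2.2 + j.2.1 * i.1)) := by
    rw [(RatFunc.algebraMap_injective F).eq_iff, C_inj, Aligned]
  rw [haligned, Meets, redLine, blueLine]
  simp only [map_add, map_mul, map_sub, map_pow, map_one] at *
  rw [mul_comm] at hred
  field_simp
  constructor <;> intro h <;> linear_combination h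

theorem redLine_plane_injective :
    Function.Injective fun i : F × F × F => (redLine i).plane := by
  rintro ⟨x, m, c⟩ ⟨x', m', c'⟩ h
  simp only [redLine] at h
  rw [div_eq_div_iff (algebraMap_one_add_mul_X_ne_zero x) (algebraMap_one_add_mul_X_ne_zero x'),
    ← map_mul, ← map_mul] at h
  have hcross := RatFunc.algebraMap_injective F h
  have hexpand : ∀ c m x y : F, (C c + C m * X ^ 5 + C x * X ^ 10) * (1 + C y * X) =
      C c + C (c * y) * X + C m * X ^ 5 + C (m * y) * X ^ 6 + C x * X ^ 10
        + C (x * y) * X ^ 11 := by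
    intro c m x y
    simp only [C_mul]
    ring
  rw [hexpand, hexpand] at hcross
  have hc := congrArg (coeff · 0) hcross
  have hm := congrArg (coeff · 5) hcross
  have hx := congrArg (coeff · 10) hcross
  simp [coeff_C, coeff_X, coeff_X_pow, -map_mul] at hc hm hx
  simp [hc, hm, hx]

theorem blueLine_plane_injective :
    Function.Injective fun j : F × F × F => (blueLine j).plane := by
  rintro ⟨x, m, c⟩ ⟨x', m', c'⟩ h
  simp only [blueLine] at h
  rw [div_eq_div_iff (algebraMap_sub_X_pow_ne_zero x) (algebraMap_sub_X_pow_ne_zero x'),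
    ← map_mul, ← map_mul] at h
  have hcross := RatFunc.algebraMap_injective F h
  have hexpand : ∀ m c y : F, (X ^ 10 + C m - C c * X) * (C y - X ^ 5) =
      C (m * y) - C (c * y) * X - C m * X ^ 5 + C c * X ^ 6 + C y * X ^ 10 - X ^ 15 := by
    intro m c y
    simp only [C_mul]
    ring
  rw [hexpand, hexpand] at hcross
  have hm := congrArg (coeff · 5) hcross
  have hc := congrArg (coeff · 6) hcross
  have hx := congrArg (coeff · 10) hcross
  simp [coeff_X_pow, -map_mul] at hm hc hx
  simp [hm, hc, hx]

theorem redLine_injective : Function.Injective (redLine : F × F × F → _) :=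
  Function.Injective.of_comp (f := plane) redLine_plane_injective

theorem blueLine_injective : Function.Injective (blueLine : F × F × F → _) :=
  Function.Injective.of_comp (f := plane) blueLine_plane_injective

variable {I : Finset (F × F × F)} {κ N : ℕ}

theorem configuration_image (h0 : ∀ i ∈ I, i.1 ≠ 0)
    (hκ : ∀ j₁ ∈ I, ∀ j₂ ∈ I, j₁ ≠ j₂ →
      (I.filter fun i => Aligned i j₁ ∧ Aligned i j₂).card ≤ κ) :
    Configuration κ (I.image redLine) (I.image blueLine) where
  red := by
    refine ⟨?_, forall_mem_image.2 fun i hi =>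
      div_ne_zero (algebraMap_one_add_mul_X_ne_zero _) (algebraMap_C_ne_zero (h0 i hi))⟩
    rw [coe_image]
    exact redLine_plane_injective.injOn.image_of_comp
  blue := by
    refine ⟨?_, forall_mem_image.2 fun j _ => algebraMap_sub_X_pow_ne_zero _⟩
    rw [coe_image]
    exact blueLine_plane_injective.injOn.image_of_comp
  codegree := by
    refine forall_mem_image.2 fun j₁ hj₁ => forall_mem_image.2 fun j₂ hj₂ hne => ?_
    rw [filter_image, card_image_of_injective _ redLine_injective,
      filter_congr fun i hi => and_congr (meets_redLine_blueLine (h0 i hi) j₁)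
        (meets_redLine_blueLine (h0 i hi) j₂)]
    exact hκ j₁ hj₁ j₂ hj₂ fun h => hne (congrArg _ h)

theorem inc_image (h0 : ∀ i ∈ I, i.1 ≠ 0) :
    inc (I.image redLine) (I.image blueLine) = ∑ i ∈ I, (I.filter (Aligned i)).card := by
  rw [inc, sum_image redLine_injective.injOn]
  refine sum_congr rfl fun i hi => ?_
  rw [filter_image, card_image_of_injective _ blueLine_injective,
    filter_congr fun j _ => meets_redLine_blueLine (h0 i hi) j]

theorem sum_card_aligned_le (hF : CharAtLeast F N) {s : ℕ} (hs : s ≤ 4 * N)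
    (h0 : ∀ i ∈ I, i.1 ≠ 0) (hI : I.card ≤ s ^ 2)
    (hκ : ∀ j₁ ∈ I, ∀ j₂ ∈ I, j₁ ≠ j₂ →
      (I.filter fun i => Aligned i j₁ ∧ Aligned i j₂).card ≤ κ) :
    ∑ i ∈ I, (I.filter (Aligned i)).card ≤ 2 ^ 25 * s ^ 3 + κ * (8 * Nat.log 2 s) * I.card := by
  have : Infinite (RatFunc F) := .of_injective _ (RatFunc.algebraMap_injective F)
  have hinc := inc_le (hF.of_injective (algebraMap F (RatFunc F)).injective) s hs
    (configuration_image h0 hκ) (card_image_le.trans hI) (card_image_le.trans hI)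
  rwa [inc_image h0, card_image_of_injective _ blueLine_injective] at hinc

end AlignedTriples

section Fibers

variable {α β : Type*}

theorem sum_sq_card_fiber_le (S : Finset α) (f : α → β) (Y : Finset β) :
    ∑ y ∈ Y, (S.filter fun a => f a = y).card ^ 2 ≤
      ((S ×ˢ S).filter fun z => f z.1 = f z.2).card := by
  calc ∑ y ∈ Y, (S.filter fun a => f a = y).card ^ 2
      = ∑ y ∈ Y, (((S ×ˢ S).filter fun z => f z.1 = f z.2).filter fun z => f z.1 = y).card := by
        refine sum_congr rfl fun y _ => ?_
        rw [sq, ← card_product]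
        congr 1
        ext z
        simp only [mem_product, mem_filter]
        aesop
    _ ≤ _ := (sum_card_fiberwise_eq_card_filter _ _ _).trans_le (card_filter_le _ _)

end Fibers

section RichLines

variable {F : Type*} [Field F]

theorem line_ext {l l' : F × F} {x y : F} (hxy : x ≠ y) (hx : l.1 * x + l.2 = l'.1 * x + l'.2)
    (hy : l.1 * y + l.2 = l'.1 * y + l'.2) : l = l' := by
  have hslope : l.1 = l'.1 :=
    mul_right_cancel₀ (sub_ne_zero.2 hxy) (by linear_combination hx - hy)
  exact Prod.ext hslope (by linear_combination hx - x * hslope)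

/-- The points of `P` on the line `y = l.1 * x + l.2`. -/
noncomputable def pointsOnLine (P : Finset (F × F)) (l : F × F) : Finset (F × F) :=
  P.filter fun q => l.1 * q.1 + l.2 = q.2

variable {P L : Finset (F × F)} {I : Finset (F × F × F)} {X X' : Finset F} {k n : ℕ}

theorem card_mul_le_of_concurrent (hL : ∀ l ∈ L, k ≤ (pointsOnLine P l).card) {x₀ y₀ : F}
    (h₀ : ∀ l ∈ L, l.1 * x₀ + l.2 = y₀) : L.card * (k - 1) ≤ P.card := by
  refine (card_mul_le_card_mul (t := P) (n := 1)
    (fun l q => q.1 ≠ x₀ ∧ l.1 * q.1 + l.2 = q.2) (fun l hl => ?_) fun q _ => ?_).trans_eq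
    (mul_one _)
  · refine (Nat.sub_le_sub_right (hL l hl) 1).trans
      ((pred_card_le_card_erase (a := (x₀, y₀))).trans (card_le_card fun q hq => ?_))
    obtain ⟨hne, hq⟩ := mem_erase.1 hq
    obtain ⟨hqP, hql⟩ := mem_filter.1 hq
    refine mem_filter.2 ⟨hqP, fun hx => hne (Prod.ext hx ?_), hql⟩
    rw [← hql, hx, h₀ l hl]
  · refine card_le_one.2 fun l hl l' hl' => ?_
    obtain ⟨hlL, hne, hl⟩ := mem_filter.1 hl
    obtain ⟨hlL', -, hl'⟩ := mem_filter.1 hl'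
    exact line_ext hne (hl.trans hl'.symm) ((h₀ l hlL).trans (h₀ l' hlL').symm)

theorem card_mul_mul_pred_le_sq (hL : ∀ l ∈ L, k ≤ (pointsOnLine P l).card) :
    L.card * (k * (k - 1)) ≤ P.card ^ 2 := by
  rw [sq, ← card_product, ← mul_one (P ×ˢ P).card]
  refine card_mul_le_card_mul (fun l z => z ∈ (pointsOnLine P l).offDiag) (fun l hl => ?_)
    fun z _ => card_le_one.2 fun l hl l' hl' => ?_
  · calc k * (k - 1) ≤ (pointsOnLine P l).card * ((pointsOnLine P l).card - 1) :=
          Nat.mul_le_mul (hL l hl) (Nat.sub_le_sub_right (hL l hl) 1)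
      _ = (pointsOnLine P l).offDiag.card := by rw [offDiag_card, Nat.mul_sub_one]
      _ ≤ _ := card_le_card fun z hz => by
        obtain ⟨h₁, h₂, -⟩ := mem_offDiag.1 hz
        exact mem_filter.2 ⟨mk_mem_product (filter_subset _ _ h₁) (filter_subset _ _ h₂), hz⟩
  · obtain ⟨h₁, h₂, hne⟩ := mem_offDiag.1 (mem_filter.1 hl).2
    obtain ⟨h₁', h₂', -⟩ := mem_offDiag.1 (mem_filter.1 hl').2
    have hval₁ := (mem_filter.1 h₁).2
    have hval₂ := (mem_filter.1 h₂).2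
    refine line_ext (fun hx => hne (Prod.ext hx ?_)) (hval₁.trans (mem_filter.1 h₁').2.symm)
      (hval₂.trans (mem_filter.1 h₂').2.symm)
    rw [← hval₁, ← hval₂, hx]

theorem card_mul_sq_le (hk : 2 ≤ k) (hL : ∀ l ∈ L, k ≤ (pointsOnLine P l).card) :
    L.card * k ^ 2 ≤ 2 * P.card ^ 2 := calc
  L.card * k ^ 2 ≤ L.card * (k * (2 * (k - 1))) := by
    rw [sq]
    gcongr
    omega
  _ = 2 * (L.card * (k * (k - 1))) := by ring
  _ ≤ 2 * P.card ^ 2 := Nat.mul_le_mul_left _ (card_mul_mul_pred_le_sq hL)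

theorem card_mul_le_sum_card_fiber (hL : ∀ l ∈ L, k ≤ (pointsOnLine (X ×ˢ X') l).card) :
    L.card * k ≤
      ∑ y ∈ X', ((X ×ˢ L).filter fun i => i.2.1 * i.1 + i.2.2 = y).card := calc
  L.card * k ≤ ∑ l ∈ L, (pointsOnLine (X ×ˢ X') l).card := card_nsmul_le_sum _ _ _ hL
  _ = ((X ×ˢ L).filter fun i => i.2.1 * i.1 + i.2.2 ∈ X').card := by
    rw [card_eq_sum_card_fiberwise (f := Prod.snd) (t := L)
      fun i hi => (mem_product.1 (mem_filter.1 hi).1).2]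
    refine sum_congr rfl fun l hl => card_nbij' (fun q => (q.1, l))
      (fun i => (i.1, i.2.1 * i.1 + i.2.2)) ?_ ?_ ?_ ?_
    all_goals
      simp only [pointsOnLine, Set.MapsTo, Set.LeftInvOn, coe_filter, mem_product, mem_filter]
      aesop
  _ = _ := (sum_card_fiberwise_eq_card_filter _ _ _).symm

/-- Two incidences at the same height become an aligned pair when their abscissas are
exchanged. -/
theorem sq_card_mul_le (hL : ∀ l ∈ L, k ≤ (pointsOnLine (X ×ˢ X') l).card) :
    (L.card * k) ^ 2 ≤
      X'.card * ∑ i ∈ X ×ˢ L, ((X ×ˢ L).filter (Aligned i)).card := by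
  refine (Nat.pow_le_pow_left (card_mul_le_sum_card_fiber hL) 2).trans
    (sq_sum_le_card_mul_sum_sq.trans (Nat.mul_le_mul_left _ ?_))
  refine (sum_sq_card_fiber_le _ _ _).trans ?_
  rw [← card_sigma]
  refine card_le_card_of_injOn (fun z => ⟨(z.2.1, z.1.2), (z.1.1, z.2.2)⟩) (fun z hz => ?_) ?_
  · simp only [coe_filter, mem_product, Set.mem_ofPred_eq] at hz
    obtain ⟨⟨⟨hx, hl⟩, hx', hl'⟩, heq⟩ := hz
    refine mem_coe.2 (mem_sigma.2 ⟨mk_mem_product hx' hl,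
      mem_filter.2 ⟨mk_mem_product hx hl', ?_⟩⟩)
    rw [Aligned]
    linear_combination heq
  · rintro ⟨⟨x, l⟩, x', l'⟩ _ ⟨⟨y, m⟩, y', m'⟩ _ h
    simp only [Sigma.mk.injEq, Prod.mk.injEq, heq_eq_eq] at h ⊢
    tauto

theorem card_aligned_mul_pred_le (hI : ∀ i ∈ I, k ≤ (pointsOnLine P i.2).card) (x : F)
    {l₁ l₂ : F × F} (hne : l₁ ≠ l₂) :
    (I.filter fun i => Aligned i (x, l₁) ∧ Aligned i (x, l₂)).card * (k - 1) ≤ P.card := by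
  set T := I.filter fun i => Aligned i (x, l₁) ∧ Aligned i (x, l₂)
  rcases T.eq_empty_or_nonempty with hempty | ⟨i₀, hi₀⟩
  · rw [hempty, card_empty, zero_mul]
    exact Nat.zero_le _
  obtain ⟨-, h₁, h₂⟩ := mem_filter.1 hi₀
  have hfst : ∀ i ∈ T, i.1 = i₀.1 := by
    intro i hi
    obtain ⟨-, hi₁, hi₂⟩ := mem_filter.1 hi
    simp only [Aligned] at h₁ h₂ hi₁ hi₂
    by_contra hx
    exact hne (line_ext hx (by linear_combination hi₂ - hi₁) (by linear_combination h₂ - h₁))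
  have hinj : Set.InjOn Prod.snd (T : Set (F × F × F)) := fun i hi j hj h =>
    Prod.ext ((hfst i hi).trans (hfst j hj).symm) h
  rw [← card_image_of_injOn hinj]
  refine card_mul_le_of_concurrent (x₀ := x) (y₀ := l₁.2 + l₁.1 * i₀.1)
    (forall_mem_image.2 fun i hi => hI i (mem_filter.1 hi).1) (forall_mem_image.2 fun i hi => ?_)
  have halign : Aligned i (x, l₁) := (mem_filter.1 hi).2.1
  rw [← hfst i hi]
  simp only [Aligned] at halign
  linear_combination halign

theorem card_aligned_le_of_ne {j₁ j₂ : F × F × F} (hne : j₁.1 ≠ j₂.1) :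
    ((X ×ˢ L).filter fun i => Aligned i j₁ ∧ Aligned i j₂).card ≤ X.card := by
  refine card_le_card_of_injOn Prod.fst
    (fun i hi => (mem_product.1 (mem_filter.1 hi).1).1) fun i hi i' hi' hx => ?_
  obtain ⟨-, h₁, h₂⟩ := mem_filter.1 hi
  obtain ⟨-, h₁', h₂'⟩ := mem_filter.1 hi'
  simp only [Aligned] at h₁ h₂ h₁' h₂'
  rw [← hx] at h₁' h₂'
  exact Prod.ext hx (line_ext hne (by linear_combination h₁ - h₁')
    (by linear_combination h₂ - h₂'))

theorem card_aligned_mul_le (hL : ∀ l ∈ L, k ≤ (pointsOnLine (X ×ˢ X') l).card) (hk : 2 ≤ k)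
    (hkn : k ≤ n) (hX : X.card ≤ n) (hX' : X'.card ≤ n) {j₁ j₂ : F × F × F} (hne : j₁ ≠ j₂) :
    ((X ×ˢ L).filter fun i => Aligned i j₁ ∧ Aligned i j₂).card * k ≤ 2 * n ^ 2 := by
  obtain ⟨x₁, l₁⟩ := j₁
  obtain ⟨x₂, l₂⟩ := j₂
  rcases eq_or_ne x₁ x₂ with rfl | hx
  · have hcard := card_aligned_mul_pred_le (I := X ×ˢ L)
      (fun i hi => hL i.2 (mem_product.1 hi).2) x₁ fun h => hne (congrArg (x₁, ·) h)
    calc _ ≤ _ * (2 * (k - 1)) := Nat.mul_le_mul_left _ (by omega)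
      _ = 2 * (_ * (k - 1)) := mul_left_comm _ _ _
      _ ≤ 2 * (X.card * X'.card) := by
        rw [← card_product]
        exact Nat.mul_le_mul_left _ hcard
      _ ≤ 2 * n ^ 2 := by
        rw [sq]
        gcongr
  · calc _ ≤ n * n := Nat.mul_le_mul ((card_aligned_le_of_ne hx).trans hX) hkn
      _ ≤ 2 * n ^ 2 := by linarith [Nat.zero_le (n ^ 2)]

theorem sq_card_mul_le_of_charAtLeast {N s : ℕ} (hF : CharAtLeast F N) (hs : s ≤ 4 * N)
    (hX : X.card ≤ n) (hX' : X'.card ≤ n) (h0 : ∀ x ∈ X, x ≠ 0) (hk : 2 ≤ k) (hkn : k ≤ n)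
    (hL : ∀ l ∈ L, k ≤ (pointsOnLine (X ×ˢ X') l).card) (hLs : n * L.card ≤ s ^ 2) :
    (L.card * k) ^ 2 ≤
      n * (2 ^ 25 * s ^ 3) + n * (2 * n ^ 2 / k * (8 * Nat.log 2 s) * (n * L.card)) := by
  have hcard : (X ×ˢ L).card ≤ n * L.card := by
    rw [card_product]
    exact Nat.mul_le_mul_right _ hX
  have haligned := sum_card_aligned_le hF hs (I := X ×ˢ L) (κ := 2 * n ^ 2 / k)
    (fun i hi => h0 _ (mem_product.1 hi).1) (hcard.trans hLs) fun _ _ _ _ hne =>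
      (Nat.le_div_iff_mul_le (by omega)).2 (card_aligned_mul_le hL hk hkn hX hX' hne)
  rw [← mul_add]
  exact (sq_card_mul_le hL).trans (Nat.mul_le_mul hX'
    (haligned.trans (Nat.add_le_add_left (Nat.mul_le_mul_left _ hcard) _)))

theorem exists_le_sq_le {a : ℕ} (ha : 0 < a) : ∃ s, a ≤ s ^ 2 ∧ s ^ 2 ≤ 4 * a := by
  refine ⟨a.sqrt + 1, (Nat.lt_succ_sqrt' a).le, ?_⟩
  nlinarith [Nat.sqrt_pos.2 ha, Nat.sqrt_le' a]

theorem log_four_mul_sq_le (n : ℕ) : Nat.log 2 (4 * n ^ 2) ≤ 2 * Nat.log 2 n + 3 := by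
  refine Nat.lt_succ_iff.1 (Nat.log_lt_of_lt_pow' (by omega) ?_)
  calc 4 * n ^ 2 < 4 * (2 ^ (Nat.log 2 n + 1)) ^ 2 := by
        gcongr
        exact Nat.lt_pow_succ_log_self one_lt_two n
    _ = 2 ^ (2 * Nat.log 2 n + 3 + 1) := by ring

theorem mul_pow_four_le_of_sq_le {M k n κ s Λ : ℕ} (hM : 0 < M) (hkn : k ≤ n) (hΛ : 0 < Λ)
    (hκ : κ * k ≤ 2 * n ^ 2) (hs : s ^ 2 ≤ 4 * (n * M)) (hlog : Nat.log 2 s ≤ 3 * Λ)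
    (h : (M * k) ^ 2 ≤ n * (2 ^ 25 * s ^ 3) + n * (κ * (8 * Nat.log 2 s) * (n * M))) :
    M * k ^ 4 ≤ 2 ^ 58 * n ^ 5 * Λ := by
  rcases le_total (n * (κ * (8 * Nat.log 2 s) * (n * M))) (n * (2 ^ 25 * s ^ 3)) with hc | hc
  · refine le_trans ?_ (Nat.le_mul_of_pos_right _ hΛ)
    refine Nat.le_of_mul_le_mul_left (?_ : M ^ 3 * _ ≤ M ^ 3 * _) (by positivity)
    calc M ^ 3 * (M * k ^ 4) = ((M * k) ^ 2) ^ 2 := by ring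
      _ ≤ (2 ^ 26 * (n * s ^ 3)) ^ 2 := Nat.pow_le_pow_left (by linarith) 2
      _ = 2 ^ 52 * n ^ 2 * (s ^ 2) ^ 3 := by ring
      _ ≤ 2 ^ 52 * n ^ 2 * (4 * (n * M)) ^ 3 := by gcongr
      _ = M ^ 3 * (2 ^ 58 * n ^ 5) := by ring
  · have hlogs : M * k ^ 4 ≤ 96 * n ^ 5 * Λ := by
      refine Nat.le_of_mul_le_mul_left (?_ : M * _ ≤ M * _) hM
      calc M * (M * k ^ 4) = (M * k) ^ 2 * (k * k) := by ring
        _ ≤ 2 * (n * (κ * (8 * Nat.log 2 s) * (n * M))) * (k * n) :=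
          Nat.mul_le_mul (by linarith) (Nat.mul_le_mul_left _ hkn)
        _ = M * (16 * n ^ 3 * (κ * k) * Nat.log 2 s) := by ring
        _ ≤ M * (16 * n ^ 3 * (2 * n ^ 2) * (3 * Λ)) := by gcongr
        _ = M * (96 * n ^ 5 * Λ) := by ring
    refine hlogs.trans ?_
    gcongr
    norm_num

theorem card_mul_pow_four_le (hF : CharAtLeast F (n ^ 2)) (hX : X.card ≤ n) (hX' : X'.card ≤ n)
    (h0 : ∀ x ∈ X, x ≠ 0) (hk : 2 ≤ k) (hkn : k ≤ n)
    (hL : ∀ l ∈ L, k ≤ (pointsOnLine (X ×ˢ X') l).card) :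
    L.card * k ^ 4 ≤ 2 ^ 58 * n ^ 5 * (1 + Nat.log 2 n) := by
  have htriv : L.card * k ^ 2 ≤ 2 * n ^ 4 := calc
    L.card * k ^ 2 ≤ 2 * (X.card * X'.card) ^ 2 := by
      rw [← card_product]
      exact card_mul_sq_le hk hL
    _ ≤ 2 * (n * n) ^ 2 := by gcongr
    _ = 2 * n ^ 4 := by ring
  rcases L.card.eq_zero_or_pos with hL0 | hLpos
  · rw [hL0, zero_mul]
    exact Nat.zero_le _
  rcases le_or_gt (k ^ 2) n with hsmall | hlarge
  · calc L.card * k ^ 4 = L.card * k ^ 2 * k ^ 2 := by ring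
      _ ≤ 2 * n ^ 4 * n := Nat.mul_le_mul htriv hsmall
      _ ≤ 2 ^ 58 * n ^ 5 := by linarith [Nat.zero_le (n ^ 5)]
      _ ≤ _ := Nat.le_mul_of_pos_right _ (by omega)
  obtain ⟨s, hLs, hs⟩ := exists_le_sq_le (Nat.mul_pos (by omega : 0 < n) hLpos)
  have hsn : s ≤ 4 * n ^ 2 := by
    refine (Nat.pow_le_pow_iff_left two_ne_zero).1 (hs.trans ?_)
    calc 4 * (n * L.card) ≤ 4 * (L.card * k ^ 2) := by
          rw [mul_comm n]
          gcongr
      _ ≤ (4 * n ^ 2) ^ 2 := by linarith [Nat.zero_le (n ^ 4)]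
  exact mul_pow_four_le_of_sq_le hLpos hkn (by omega) (Nat.div_mul_le_self _ _) hs
    ((Nat.log_mono_right hsn).trans ((log_four_mul_sq_le n).trans (by omega)))
    (sq_card_mul_le_of_charAtLeast hF hsn hX hX' h0 hk hkn hL hLs)

end RichLines

section Curves

variable {F : Type*} [Field F]

/-- The parameter `w = (b, b', d)` stands for the curve `(x + b)⁻¹ = (y + b')⁻¹ + d`; a point at
which one of the two inverses is not defined does not lie on it. -/
def OnCurve (w : F × F × F) (q : F × F) : Prop :=
  q.1 + w.1 ≠ 0 ∧ q.2 + w.2.1 ≠ 0 ∧ (q.1 + w.1)⁻¹ = (q.2 + w.2.1)⁻¹ + w.2.2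

variable {w w' : F × F × F} {q q' : F × F}

theorem OnCurve.eq_of_fst_eq (h : OnCurve w q) (h' : OnCurve w q') (he : q.1 = q'.1) :
    q = q' := by
  refine Prod.ext he (add_right_cancel (b := w.2.1) (inv_injective ?_))
  refine add_right_cancel (h.2.2.symm.trans (Eq.trans ?_ h'.2.2))
  rw [he]

theorem OnCurve.eq_of_snd_eq (h : OnCurve w q) (h' : OnCurve w q') (he : q.2 = q'.2) :
    q = q' := by
  refine Prod.ext (add_right_cancel (b := w.1) (inv_injective ?_)) he
  rw [h.2.2, h'.2.2, he]

/-- The line that a curve through `q` becomes in the coordinates `(x - q.1)⁻¹`, `(y - q.2)⁻¹`. -/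
def lineAt (q : F × F) (w : F × F × F) : F × F :=
  (((q.1 + w.1) / (q.2 + w.2.1)) ^ 2, ((q.1 + w.1) - (q.2 + w.2.1)) / (q.2 + w.2.1) ^ 2)

theorem OnCurve.lineAt_mul_inv_add (h : OnCurve w q) (h' : OnCurve w q') (hne : q' ≠ q) :
    (lineAt q w).1 * (q'.1 - q.1)⁻¹ + (lineAt q w).2 = (q'.2 - q.2)⁻¹ := by
  have hfst : q'.1 - q.1 ≠ 0 := sub_ne_zero.2 fun he => hne (h'.eq_of_fst_eq h he)
  have hsnd : q'.2 - q.2 ≠ 0 := sub_ne_zero.2 fun he => hne (h'.eq_of_snd_eq h he)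
  obtain ⟨hx, hy, hq⟩ := h
  obtain ⟨hx', hy', hq'⟩ := h'
  have hdiff : (q'.1 + w.1)⁻¹ - (q.1 + w.1)⁻¹ = (q'.2 + w.2.1)⁻¹ - (q.2 + w.2.1)⁻¹ := by
    linear_combination hq' - hq
  rw [lineAt]
  field_simp at hdiff ⊢
  linear_combination hdiff

theorem OnCurve.curve_eq_of_lineAt_snd_eq (h : OnCurve w q) (h' : OnCurve w' q)
    (hd : w.2.2 ≠ 0) (hratio : (q.1 + w.1) / (q.2 + w.2.1) = (q.1 + w'.1) / (q.2 + w'.2.1))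
    (hline : (lineAt q w).2 = (lineAt q w').2) : w = w' := by
  obtain ⟨-, hy, hq⟩ := h
  obtain ⟨-, hy', hq'⟩ := h'
  have hne : (q.1 + w.1) - (q.2 + w.2.1) ≠ 0 := fun heq => hd <| by
    rw [sub_eq_zero.1 heq] at hq
    linear_combination -hq
  simp only [lineAt] at hline
  field_simp at hratio hline
  have hsnd : q.2 + w.2.1 = q.2 + w'.2.1 := by
    refine mul_left_cancel₀ (mul_ne_zero hne hy') ?_
    linear_combination hratio * (q.2 + w.2.1) - hline
  have hfst : q.1 + w.1 = q.1 + w'.1 := by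
    refine mul_right_cancel₀ hy' ?_
    rw [hratio, hsnd, mul_comm]
  refine Prod.ext (add_left_cancel hfst) (Prod.ext (add_left_cancel hsnd) ?_)
  rw [← hfst, ← hsnd] at hq'
  exact add_left_cancel (hq.symm.trans hq')

theorem card_le_two_mul_card_image_lineAt {W : Finset (F × F × F)} (h0 : ∀ w ∈ W, w.2.2 ≠ 0)
    (hq : ∀ w ∈ W, OnCurve w q) : W.card ≤ 2 * (W.image (lineAt q)).card := by
  refine card_le_mul_card_image _ _ (forall_mem_image.2 fun w₀ _ => ?_)
  let ratio : F × F × F → F := fun w => (q.1 + w.1) / (q.2 + w.2.1)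
  refine (card_le_card_of_injOn (t := {ratio w₀, -ratio w₀}) ratio (fun w hw => ?_)
    fun w hw w' hw' he => ?_).trans card_le_two
  · have hsq : ratio w ^ 2 = ratio w₀ ^ 2 := congrArg Prod.fst (mem_filter.1 hw).2
    simpa using sq_eq_sq_iff_eq_or_eq_neg.1 hsq
  · obtain ⟨hw, hline⟩ := mem_filter.1 hw
    obtain ⟨hw', hline'⟩ := mem_filter.1 hw'
    exact (hq w hw).curve_eq_of_lineAt_snd_eq (hq w' hw') (h0 w hw) he
      (congrArg Prod.snd (hline.trans hline'.symm))

/-- The points of the grid `A × A` on the curve with parameter `w`. -/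
noncomputable def pointsOnCurve (A : Finset F) (w : F × F × F) : Finset (F × F) :=
  (A ×ˢ A).filter (OnCurve w)

variable {A : Finset F} {W : Finset (F × F × F)} {k : ℕ}

theorem card_pointsOnCurve_le (w : F × F × F) : (pointsOnCurve A w).card ≤ A.card :=
  card_le_card_of_injOn Prod.fst (fun _ h => (mem_product.1 (mem_filter.1 h).1).1)
    fun _ h _ h' he => (mem_filter.1 h).2.eq_of_fst_eq (mem_filter.1 h').2 he

/-- The inverses of the nonzero elements of `A - a`. -/
noncomputable def invSub (A : Finset F) (a : F) : Finset F :=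
  (A.erase a).image fun x => (x - a)⁻¹

theorem card_invSub_le (a : F) : (invSub A a).card ≤ A.card :=
  card_image_le.trans (card_le_card (erase_subset _ _))

theorem ne_zero_of_mem_invSub {a : F} : ∀ x ∈ invSub A a, x ≠ 0 :=
  forall_mem_image.2 fun _ hy => inv_ne_zero (sub_ne_zero.2 (ne_of_mem_erase hy))

theorem card_pointsOnCurve_sub_one_le (hq : q ∈ pointsOnCurve A w) :
    (pointsOnCurve A w).card - 1 ≤
      (pointsOnLine (invSub A q.1 ×ˢ invSub A q.2) (lineAt q w)).card := by
  rw [← card_erase_of_mem hq]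
  refine card_le_card_of_injOn (fun q' => ((q'.1 - q.1)⁻¹, (q'.2 - q.2)⁻¹)) (fun q' hq' => ?_)
    fun q₁ _ q₂ _ he => ?_
  · obtain ⟨hne, hq'⟩ := mem_erase.1 hq'
    obtain ⟨hqA', hq'⟩ := mem_filter.1 hq'
    obtain ⟨hfst, hsnd⟩ := mem_product.1 hqA'
    have hq := (mem_filter.1 hq).2
    exact mem_filter.2 ⟨mk_mem_product
      (mem_image_of_mem _ (mem_erase.2 ⟨fun he => hne (hq'.eq_of_fst_eq hq he), hfst⟩))
      (mem_image_of_mem _ (mem_erase.2 ⟨fun he => hne (hq'.eq_of_snd_eq hq he), hsnd⟩)),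
      hq.lineAt_mul_inv_add hq' hne⟩
  · simp only [Prod.mk.injEq, inv_inj, sub_left_inj] at he
    exact Prod.ext he.1 he.2

theorem card_mul_pow_four_le_of_mem (hF : CharAtLeast F (A.card ^ 2)) (hk : 3 ≤ k)
    (h0 : ∀ w ∈ W, w.2.2 ≠ 0) (hW : ∀ w ∈ W, k ≤ (pointsOnCurve A w).card)
    (hq : ∀ w ∈ W, q ∈ pointsOnCurve A w) :
    W.card * k ^ 4 ≤ 2 ^ 63 * A.card ^ 5 * (1 + Nat.log 2 A.card) := by
  rcases W.eq_empty_or_nonempty with rfl | ⟨w, hw⟩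
  · rw [card_empty, zero_mul]
    exact Nat.zero_le _
  have hkA : k - 1 ≤ A.card := (Nat.sub_le _ _).trans ((hW w hw).trans (card_pointsOnCurve_le w))
  have hlines := card_mul_pow_four_le hF (card_invSub_le q.1) (card_invSub_le q.2)
    ne_zero_of_mem_invSub (by omega) hkA (L := W.image (lineAt q)) (forall_mem_image.2
      fun w hw => (Nat.sub_le_sub_right (hW w hw) 1).trans
        (card_pointsOnCurve_sub_one_le (hq w hw)))
  calc W.card * k ^ 4 ≤ 2 * (W.image (lineAt q)).card * (2 * (k - 1)) ^ 4 := by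
        gcongr
        · exact card_le_two_mul_card_image_lineAt h0 fun w hw => (mem_filter.1 (hq w hw)).2
        · omega
    _ = 2 ^ 5 * ((W.image (lineAt q)).card * (k - 1) ^ 4) := by ring
    _ ≤ 2 ^ 5 * (2 ^ 58 * A.card ^ 5 * (1 + Nat.log 2 A.card)) := Nat.mul_le_mul_left _ hlines
    _ = 2 ^ 63 * A.card ^ 5 * (1 + Nat.log 2 A.card) := by ring

theorem card_mul_pow_five_le (hF : CharAtLeast F (A.card ^ 2)) (hk : 3 ≤ k)
    (h0 : ∀ w ∈ W, w.2.2 ≠ 0) (hW : ∀ w ∈ W, k ≤ (pointsOnCurve A w).card) :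
    W.card * k ^ 5 ≤ 2 ^ 63 * A.card ^ 7 * (1 + Nat.log 2 A.card) := by
  set M := 2 ^ 63 * A.card ^ 5 * (1 + Nat.log 2 A.card)
  have hcount : W.card * k ≤ (A ×ˢ A).card * (M / k ^ 4) := by
    refine card_mul_le_card_mul OnCurve hW fun q hq => ?_
    refine (Nat.le_div_iff_mul_le (by positivity)).2 (card_mul_pow_four_le_of_mem (q := q) hF hk
      (fun w hw => h0 w (mem_filter.1 hw).1) (fun w hw => hW w (mem_filter.1 hw).1) fun w hw => ?_)
    exact mem_filter.2 ⟨hq, (mem_filter.1 hw).2⟩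
  calc W.card * k ^ 5 = W.card * k * k ^ 4 := by ring
    _ ≤ (A ×ˢ A).card * (M / k ^ 4) * k ^ 4 := Nat.mul_le_mul_right _ hcount
    _ ≤ A.card * A.card * M := by
      rw [mul_assoc, card_product]
      exact Nat.mul_le_mul_left _ (Nat.div_mul_le_self _ _)
    _ = 2 ^ 63 * A.card ^ 7 * (1 + Nat.log 2 A.card) := by ring

theorem sum_card_pow_five_le_of_log_eq (hF : CharAtLeast F (A.card ^ 2)) (j : ℕ)
    (h0 : ∀ w ∈ W, w.2.2 ≠ 0) (hW : ∀ w ∈ W, 3 ≤ (pointsOnCurve A w).card)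
    (hj : ∀ w ∈ W, Nat.log 2 (pointsOnCurve A w).card = j) :
    ∑ w ∈ W, (pointsOnCurve A w).card ^ 5 ≤ 2 ^ 68 * A.card ^ 7 * (1 + Nat.log 2 A.card) := by
  have hlower : ∀ w ∈ W, max 3 (2 ^ j) ≤ (pointsOnCurve A w).card := fun w hw =>
    max_le (hW w hw) (hj w hw ▸ Nat.pow_log_le_self 2 (by linarith [hW w hw]))
  have hupper : ∀ w ∈ W, (pointsOnCurve A w).card ≤ 2 * max 3 (2 ^ j) := by
    intro w hw
    have hlt := Nat.lt_pow_succ_log_self one_lt_two (pointsOnCurve A w).card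
    rw [hj w hw, pow_succ'] at hlt
    exact hlt.le.trans (Nat.mul_le_mul_left _ (le_max_right _ _))
  calc ∑ w ∈ W, (pointsOnCurve A w).card ^ 5
      ≤ W.card • (2 * max 3 (2 ^ j)) ^ 5 :=
        sum_le_card_nsmul _ _ _ fun w hw => Nat.pow_le_pow_left (hupper w hw) 5
    _ = 2 ^ 5 * (W.card * max 3 (2 ^ j) ^ 5) := by
      rw [smul_eq_mul]
      ring
    _ ≤ 2 ^ 5 * (2 ^ 63 * A.card ^ 7 * (1 + Nat.log 2 A.card)) :=
      Nat.mul_le_mul_left _ (card_mul_pow_five_le hF (le_max_left _ _) h0 hlower)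
    _ = 2 ^ 68 * A.card ^ 7 * (1 + Nat.log 2 A.card) := by ring

theorem sum_card_pow_five_le (hF : CharAtLeast F (A.card ^ 2))
    (h0 : ∀ w ∈ W, w.2.2 ≠ 0) (hW : ∀ w ∈ W, 3 ≤ (pointsOnCurve A w).card) :
    ∑ w ∈ W, (pointsOnCurve A w).card ^ 5 ≤
      2 ^ 68 * A.card ^ 7 * (1 + Nat.log 2 A.card) ^ 2 := by
  set Λ := 1 + Nat.log 2 A.card with hΛ
  have hscale : ∀ w ∈ W, Nat.log 2 (pointsOnCurve A w).card ∈ range Λ := fun w _ =>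
    mem_range.2 (hΛ ▸ Nat.lt_one_add_iff.2 (Nat.log_mono_right (card_pointsOnCurve_le w)))
  rw [← sum_fiberwise_of_maps_to hscale]
  calc _ ≤ (range Λ).card • (2 ^ 68 * A.card ^ 7 * Λ) :=
        sum_le_card_nsmul _ _ _ fun j _ => sum_card_pow_five_le_of_log_eq hF j
          (fun w hw => h0 w (mem_filter.1 hw).1) (fun w hw => hW w (mem_filter.1 hw).1)
          fun w hw => (mem_filter.1 hw).2
    _ = 2 ^ 68 * A.card ^ 7 * Λ ^ 2 := by
      rw [card_range, smul_eq_mul]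
      ring

end Curves

section Moments

variable {F : Type*} [Field F] {A B : Finset F}

/-- The number of solutions of `(a + b)⁻¹ = (a' + b')⁻¹ + d` with `a, a' ∈ A` and `b, b' ∈ B`. -/
noncomputable def solutionCount (A B : Finset F) (d : F) : ℕ :=
  (((A ×ˢ A) ×ˢ (B ×ˢ B)).filter fun z => OnCurve (z.2.1, z.2.2, d) z.1).card

theorem solutionCount_eq_sum (A B : Finset F) (d : F) :
    solutionCount A B d = ∑ v ∈ B ×ˢ B, (pointsOnCurve A (v.1, v.2, d)).card := by
  simp only [solutionCount, pointsOnCurve, card_filter]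
  exact sum_product_right _ _ _

theorem solutionCount_le_card_mul_sq (d : F) : solutionCount A B d ≤ A.card * B.card ^ 2 := by
  rw [solutionCount_eq_sum, sq, ← card_product, mul_comm]
  exact sum_le_card_nsmul _ _ _ fun v _ => card_pointsOnCurve_le _

theorem solutionCount_le_sq_mul_card (d : F) : solutionCount A B d ≤ A.card ^ 2 * B.card := by
  rw [sq, ← card_product, ← card_product]
  refine card_le_card_of_injOn (fun z => (z.1, z.2.1)) (fun z hz => ?_) ?_
  · obtain ⟨hA, hB⟩ := mem_product.1 (mem_filter.1 hz).1
    exact mk_mem_product hA (mem_product.1 hB).1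
  · rintro ⟨q, b, b'⟩ hz ⟨r, c, c'⟩ hz' he
    obtain ⟨rfl, rfl⟩ := Prod.mk.inj he
    have hinv : (q.2 + b')⁻¹ = (q.2 + c')⁻¹ :=
      add_right_cancel ((mem_filter.1 hz).2.2.2.symm.trans (mem_filter.1 hz').2.2.2)
    rw [add_left_cancel (inv_injective hinv)]

theorem sum_solutionCount_le (D : Finset F) :
    ∑ d ∈ D, solutionCount A B d ≤ A.card ^ 2 * B.card ^ 2 := by
  let invDiff : (F × F) × F × F → F := fun z => (z.1.1 + z.2.1)⁻¹ - (z.1.2 + z.2.2)⁻¹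
  calc ∑ d ∈ D, solutionCount A B d
      ≤ ∑ d ∈ D, (((A ×ˢ A) ×ˢ (B ×ˢ B)).filter fun z => invDiff z = d).card :=
        sum_le_sum fun d _ => card_le_card <| monotone_filter_right _ fun z _ hz =>
          sub_eq_iff_eq_add'.2 hz.2.2
    _ ≤ ((A ×ˢ A) ×ˢ (B ×ˢ B)).card :=
      (sum_card_fiberwise_eq_card_filter _ _ _).trans_le (card_filter_le _ _)
    _ = A.card ^ 2 * B.card ^ 2 := by simp only [card_product, sq]

theorem solutionCount_pow_five_le (d : F) :
    solutionCount A B d ^ 5 ≤ 2 ^ 4 * (B.card ^ 8 *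
      ∑ v ∈ (B ×ˢ B).filter (fun v => 3 ≤ (pointsOnCurve A (v.1, v.2, d)).card),
        (pointsOnCurve A (v.1, v.2, d)).card ^ 5 +
      4 * A.card ^ 4 * B.card ^ 6 * solutionCount A B d) := by
  let N : F × F → ℕ := fun v => (pointsOnCurve A (v.1, v.2, d)).card
  set rich := (B ×ˢ B).filter fun v => 3 ≤ N v
  set poor := (B ×ˢ B).filter fun v => ¬ 3 ≤ N v
  have hsplit : solutionCount A B d = ∑ v ∈ rich, N v + ∑ v ∈ poor, N v :=
    (solutionCount_eq_sum A B d).trans (sum_filter_add_sum_filter_not _ _ _).symm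
  have hBB : (B ×ˢ B).card = B.card ^ 2 := by rw [card_product, sq]
  have hrich : (∑ v ∈ rich, N v) ^ 5 ≤ B.card ^ 8 * ∑ v ∈ rich, N v ^ 5 := by
    refine (pow_sum_le_card_mul_sum_pow (fun _ _ => Nat.zero_le _) 4).trans
      (Nat.mul_le_mul_right _ ?_)
    rw [show B.card ^ 8 = (B.card ^ 2) ^ 4 by ring, ← hBB]
    exact Nat.pow_le_pow_left (card_filter_le _ _) 4
  have hpoor : ∑ v ∈ poor, N v ≤ B.card ^ 2 * 2 := by
    refine (sum_le_card_nsmul _ _ 2 fun v hv => ?_).trans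
      (Nat.mul_le_mul_right _ ((card_filter_le _ _).trans hBB.le))
    exact Nat.le_of_lt_succ (not_le.1 (mem_filter.1 hv).2)
  have hpoor' : ∑ v ∈ poor, N v ≤ solutionCount A B d := hsplit ▸ Nat.le_add_left _ _
  have hpoor_pow : (∑ v ∈ poor, N v) ^ 5 ≤ 4 * A.card ^ 4 * B.card ^ 6 * solutionCount A B d := by
    calc (∑ v ∈ poor, N v) ^ 5
        = (∑ v ∈ poor, N v) ^ 2 * (∑ v ∈ poor, N v) ^ 2 * ∑ v ∈ poor, N v := by ring
      _ ≤ (B.card ^ 2 * 2) ^ 2 * (A.card ^ 2 * B.card) ^ 2 * solutionCount A B d := by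
        gcongr
        exact hpoor'.trans (solutionCount_le_sq_mul_card d)
      _ = 4 * A.card ^ 4 * B.card ^ 6 * solutionCount A B d := by ring
  calc solutionCount A B d ^ 5 = (∑ v ∈ rich, N v + ∑ v ∈ poor, N v) ^ 5 := by rw [hsplit]
    _ ≤ 2 ^ 4 * ((∑ v ∈ rich, N v) ^ 5 + (∑ v ∈ poor, N v) ^ 5) :=
      add_pow_le (Nat.zero_le _) (Nat.zero_le _) 5
    _ ≤ _ := Nat.mul_le_mul_left _ (Nat.add_le_add hrich hpoor_pow)

theorem sum_rich_card_pow_five_le (hF : CharAtLeast F (A.card ^ 2)) {D : Finset F} (hD : 0 ∉ D) :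
    ∑ d ∈ D, ∑ v ∈ (B ×ˢ B).filter (fun v => 3 ≤ (pointsOnCurve A (v.1, v.2, d)).card),
      (pointsOnCurve A (v.1, v.2, d)).card ^ 5 ≤
      2 ^ 68 * A.card ^ 7 * (1 + Nat.log 2 A.card) ^ 2 := by
  set W := (B ×ˢ B ×ˢ D).filter fun w => 3 ≤ (pointsOnCurve A w).card with hW
  have hsum := sum_card_pow_five_le (W := W) hF
    (fun w hw he => hD (he ▸ (mem_product.1 (mem_product.1 (mem_filter.1 hw).1).2).2))
    fun w hw => (mem_filter.1 hw).2
  refine le_of_eq_of_le ?_ hsum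
  simp only [hW, sum_filter, sum_product]
  rw [sum_comm]
  exact sum_congr rfl fun b _ => sum_comm

theorem sum_solutionCount_pow_five_le_of_notMem (hF : CharAtLeast F (A.card ^ 2)) {D : Finset F}
    (hD : 0 ∉ D) :
    ∑ d ∈ D, solutionCount A B d ^ 5 ≤
      2 ^ 72 * A.card ^ 7 * B.card ^ 8 * (1 + Nat.log 2 A.card) ^ 2 +
        2 ^ 6 * A.card ^ 6 * B.card ^ 8 := by
  calc ∑ d ∈ D, solutionCount A B d ^ 5
      ≤ ∑ d ∈ D, 2 ^ 4 * (B.card ^ 8 *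
          ∑ v ∈ (B ×ˢ B).filter (fun v => 3 ≤ (pointsOnCurve A (v.1, v.2, d)).card),
            (pointsOnCurve A (v.1, v.2, d)).card ^ 5 +
          4 * A.card ^ 4 * B.card ^ 6 * solutionCount A B d) :=
        sum_le_sum fun d _ => solutionCount_pow_five_le d
    _ ≤ 2 ^ 4 * (B.card ^ 8 * (2 ^ 68 * A.card ^ 7 * (1 + Nat.log 2 A.card) ^ 2) +
          4 * A.card ^ 4 * B.card ^ 6 * (A.card ^ 2 * B.card ^ 2)) := by
      rw [← mul_sum, sum_add_distrib, ← mul_sum, ← mul_sum]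
      gcongr
      · exact sum_rich_card_pow_five_le hF hD
      · exact sum_solutionCount_le D
    _ = _ := by ring

theorem solutionCount_pow_five_le_card_pow (d : F) :
    solutionCount A B d ^ 5 ≤ A.card ^ 7 * B.card ^ 8 := by
  calc solutionCount A B d ^ 5 = solutionCount A B d ^ 3 * solutionCount A B d ^ 2 := by ring
    _ ≤ (A.card * B.card ^ 2) ^ 3 * (A.card ^ 2 * B.card) ^ 2 := by
      gcongr
      · exact solutionCount_le_card_mul_sq d
      · exact solutionCount_le_sq_mul_card d
    _ = A.card ^ 7 * B.card ^ 8 := by ring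

theorem sum_solutionCount_pow_five_le (hA : A.Nonempty) (hF : CharAtLeast F (A.card ^ 2))
    (D : Finset F) :
    ∑ d ∈ D, solutionCount A B d ^ 5 ≤
      2 ^ 73 * A.card ^ 7 * B.card ^ 8 * (1 + Nat.log 2 A.card) ^ 2 := by
  set X := A.card ^ 7 * B.card ^ 8
  set Λ := 1 + Nat.log 2 A.card
  have hX : A.card ^ 6 * B.card ^ 8 ≤ X :=
    Nat.mul_le_mul_right _ (Nat.pow_le_pow_right hA.card_pos (by norm_num))
  have hXΛ : X ≤ X * Λ ^ 2 := Nat.le_mul_of_pos_right _ (by positivity)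
  calc ∑ d ∈ D, solutionCount A B d ^ 5
      ≤ ∑ d ∈ insert 0 (D.erase 0), solutionCount A B d ^ 5 :=
        sum_le_sum_of_subset (insert_erase_subset 0 D)
    _ = solutionCount A B 0 ^ 5 + ∑ d ∈ D.erase 0, solutionCount A B d ^ 5 :=
      sum_insert (notMem_erase 0 D)
    _ ≤ X + (2 ^ 72 * A.card ^ 7 * B.card ^ 8 * Λ ^ 2 + 2 ^ 6 * A.card ^ 6 * B.card ^ 8) :=
      Nat.add_le_add (solutionCount_pow_five_le_card_pow 0)
        (sum_solutionCount_pow_five_le_of_notMem hF (notMem_erase 0 D))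
    _ = X + 2 ^ 72 * (X * Λ ^ 2) + 2 ^ 6 * (A.card ^ 6 * B.card ^ 8) := by ring
    _ ≤ 2 ^ 73 * (X * Λ ^ 2) := by omega
    _ = 2 ^ 73 * A.card ^ 7 * B.card ^ 8 * Λ ^ 2 := by ring

theorem one_add_natLog_le {n : ℕ} (hn : n ≠ 0) :
    ((1 + Nat.log 2 n : ℕ) : ℝ) ≤ 2 * Real.log (2 * n) := by
  have hlog : (Nat.log 2 n : ℝ) * Real.log 2 ≤ Real.log n :=
    (le_div_iff₀ (Real.log_pos one_lt_two)).1 (Real.natLog_le_logb n 2)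
  rw [Real.log_mul two_ne_zero (Nat.cast_ne_zero.2 hn)]
  push_cast
  nlinarith [Real.log_two_gt_d9, (Nat.cast_nonneg (Nat.log 2 n) : (0 : ℝ) ≤ _)]

theorem sum_solutionCount_pow_five_rpow_le (hA : A.Nonempty) (hF : CharAtLeast F (A.card ^ 2))
    (D : Finset F) :
    (∑ d ∈ D, (solutionCount A B d : ℝ) ^ 5) ^ ((1 : ℝ) / 5) ≤
      2 ^ 15 * (A.card : ℝ) ^ ((7 : ℝ) / 5) * (B.card : ℝ) ^ ((8 : ℝ) / 5) *
        Real.log (2 * A.card) ^ ((2 : ℝ) / 5) := by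
  have hn : (1 : ℝ) ≤ A.card := Nat.one_le_cast.2 hA.card_pos
  have hlog : 0 ≤ Real.log (2 * A.card) := Real.log_nonneg (by linarith)
  have hmoment : ∑ d ∈ D, (solutionCount A B d : ℝ) ^ 5 ≤
      (2 ^ 15) ^ 5 * (A.card : ℝ) ^ 7 * (B.card : ℝ) ^ 8 * Real.log (2 * A.card) ^ 2 := by
    calc ∑ d ∈ D, (solutionCount A B d : ℝ) ^ 5
        ≤ 2 ^ 73 * (A.card : ℝ) ^ 7 * (B.card : ℝ) ^ 8 *
            ((1 + Nat.log 2 A.card : ℕ) : ℝ) ^ 2 := by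
          exact_mod_cast sum_solutionCount_pow_five_le hA hF D
      _ ≤ 2 ^ 73 * (A.card : ℝ) ^ 7 * (B.card : ℝ) ^ 8 * (2 * Real.log (2 * A.card)) ^ 2 := by
        gcongr
        exact one_add_natLog_le hA.card_ne_zero
      _ = _ := by ring
  have hroot : ∀ (x : ℝ) (k : ℕ), 0 ≤ x → (x ^ k) ^ ((1 : ℝ) / 5) = x ^ ((k : ℝ) / 5) := by
    intro x k hx
    rw [← Real.rpow_natCast, ← Real.rpow_mul hx, mul_one_div]
  refine (Real.rpow_le_rpow (by positivity) hmoment (by norm_num)).trans_eq ?_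
  rw [Real.mul_rpow (by positivity) (by positivity), Real.mul_rpow (by positivity) (by positivity),
    Real.mul_rpow (by positivity) (by positivity), hroot _ 5 (by positivity),
    hroot _ 7 (by positivity), hroot _ 8 (by positivity), hroot _ 2 hlog]
  norm_num

end Moments

section Differences

variable {G : Type*} [AddCommGroup G]

/-- The number of representations of `d` as a difference of two elements of `C`. -/
noncomputable def diffCount (C : Finset G) (d : G) : ℕ :=
  ((C ×ˢ C).filter fun c => c.2 - c.1 = d).card

theorem sum_diffCount_le (C D : Finset G) : ∑ d ∈ D, diffCount C d ≤ C.card ^ 2 := by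
  rw [sq, ← card_product]
  exact (sum_card_fiberwise_eq_card_filter _ _ _).trans_le (card_filter_le _ _)

theorem sum_sq_diffCount_le_addEnergy (C D : Finset G) :
    ∑ d ∈ D, diffCount C d ^ 2 ≤ Finset.addEnergy C C := by
  refine (sum_sq_card_fiber_le _ _ _).trans
    (card_le_card_of_injOn (Prod.map Prod.swap id) (fun z hz => ?_)
      (Prod.swap_injective.prodMap Function.injective_id).injOn)
  obtain ⟨hz, he⟩ := mem_filter.1 hz
  obtain ⟨hz₁, hz₂⟩ := mem_product.1 hz
  obtain ⟨hc, hc'⟩ := mem_product.1 hz₁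
  exact mem_filter.2 ⟨mk_mem_product (mk_mem_product hc' hc) hz₂,
    (sub_eq_sub_iff_add_eq_add.1 he).trans (add_comm _ _)⟩

end Differences

theorem sum_mul_le_rpow_mul_rpow_mul_rpow {ι : Type*} (s : Finset ι) {r N : ι → ℝ}
    (hr : ∀ i, 0 ≤ r i) (hN : ∀ i, 0 ≤ N i) :
    ∑ i ∈ s, r i * N i ≤ (∑ i ∈ s, r i) ^ ((3 : ℝ) / 5) * (∑ i ∈ s, r i ^ 2) ^ ((1 : ℝ) / 5) *
      (∑ i ∈ s, N i ^ 5) ^ ((1 : ℝ) / 5) := by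
  have hpow : ∀ i ∈ s, (N i ^ ((5 : ℝ) / 2)) ^ 2 = N i ^ 5 := fun i _ => by
    rw [← Real.rpow_mul_natCast (hN i), ← Real.rpow_natCast]
    norm_num
  have hholder := Real.inner_le_weight_mul_Lp_of_nonneg s (p := 5 / 2) (by norm_num) r N hr hN
  have hcauchy : ∑ i ∈ s, r i * N i ^ ((5 : ℝ) / 2) ≤
      √(∑ i ∈ s, r i ^ 2) * √(∑ i ∈ s, N i ^ 5) := by
    rw [← sum_congr rfl hpow]
    exact Real.sum_mul_le_sqrt_mul_sqrt s r _
  have hmixed : 0 ≤ ∑ i ∈ s, r i * N i ^ ((5 : ℝ) / 2) :=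
    sum_nonneg fun i _ => mul_nonneg (hr i) (Real.rpow_nonneg (hN i) _)
  have hN5 : 0 ≤ ∑ i ∈ s, N i ^ 5 := sum_nonneg fun i _ => pow_nonneg (hN i) 5
  calc ∑ i ∈ s, r i * N i
      ≤ (∑ i ∈ s, r i) ^ ((3 : ℝ) / 5) * (∑ i ∈ s, r i * N i ^ ((5 : ℝ) / 2)) ^ ((2 : ℝ) / 5) := by
        convert hholder using 3 <;> norm_num
    _ ≤ (∑ i ∈ s, r i) ^ ((3 : ℝ) / 5) *
          (√(∑ i ∈ s, r i ^ 2) * √(∑ i ∈ s, N i ^ 5)) ^ ((2 : ℝ) / 5) :=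
      mul_le_mul_of_nonneg_left (Real.rpow_le_rpow hmixed hcauchy (by norm_num))
        (Real.rpow_nonneg (sum_nonneg fun i _ => hr i) _)
    _ = _ := by
      rw [Real.mul_rpow (Real.sqrt_nonneg _) (Real.sqrt_nonneg _), Real.sqrt_eq_rpow,
        Real.sqrt_eq_rpow, ← Real.rpow_mul (by positivity), ← Real.rpow_mul hN5, ← mul_assoc]
      norm_num

theorem card_solutions_eq_sum {F : Type*} [Field F] (A B C : Finset F) :
    ((((A ×ˢ A) ×ˢ (B ×ˢ B)) ×ˢ (C ×ˢ C)).filter fun q =>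
      q.1.1.1 + q.1.2.1 ≠ 0 ∧ q.1.1.2 + q.1.2.2 ≠ 0 ∧
      (q.1.1.1 + q.1.2.1)⁻¹ + q.2.1 = (q.1.1.2 + q.1.2.2)⁻¹ + q.2.2).card =
      ∑ d ∈ (C ×ˢ C).image (fun c => c.2 - c.1), diffCount C d * solutionCount A B d := by
  have hcount : ∀ c : F × F, (((A ×ˢ A) ×ˢ (B ×ˢ B)).filter fun z =>
      z.1.1 + z.2.1 ≠ 0 ∧ z.1.2 + z.2.2 ≠ 0 ∧
      (z.1.1 + z.2.1)⁻¹ + c.1 = (z.1.2 + z.2.2)⁻¹ + c.2).card =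
        solutionCount A B (c.2 - c.1) := fun c => by
    simp only [solutionCount, OnCurve, ← add_sub_assoc, eq_sub_iff_add_eq]
  rw [card_filter, sum_product_right]
  simp only [← card_filter, hcount]
  exact sum_comp (solutionCount A B) _

theorem addEnergy_eq_addEnergy {p : ℕ} (C : Finset (ZMod p)) :
    _root_.addEnergy C = Finset.addEnergy C C := by
  rw [addEnergy_eq_card_filter, _root_.addEnergy]

end MoebiusEnergy

open MoebiusEnergy in
theorem stmt_10_general {F : Type*} [Field F] {A : Finset F} (hA : A.Nonempty)
    (hF : CharAtLeast F (A.card ^ 2)) (B C : Finset F) :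
    (((((A ×ˢ A) ×ˢ (B ×ˢ B)) ×ˢ (C ×ˢ C)).filter fun q =>
        q.1.1.1 + q.1.2.1 ≠ 0 ∧ q.1.1.2 + q.1.2.2 ≠ 0 ∧
        (q.1.1.1 + q.1.2.1)⁻¹ + q.2.1 = (q.1.1.2 + q.1.2.2)⁻¹ + q.2.2).card : ℝ)
      ≤ 2 ^ 15 * (A.card : ℝ) ^ ((7 : ℝ) / 5) * (B.card : ℝ) ^ ((8 : ℝ) / 5)
          * (C.card : ℝ) ^ ((6 : ℝ) / 5) * (Finset.addEnergy C C : ℝ) ^ ((1 : ℝ) / 5)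
          * Real.log (2 * A.card) ^ ((2 : ℝ) / 5) := by
  set D := (C ×ˢ C).image fun c => c.2 - c.1
  have hpairs : ∑ d ∈ D, (diffCount C d : ℝ) ≤ (C.card : ℝ) ^ 2 := by
    exact_mod_cast sum_diffCount_le C D
  have henergy : ∑ d ∈ D, (diffCount C d : ℝ) ^ 2 ≤ Finset.addEnergy C C := by
    exact_mod_cast sum_sq_diffCount_le_addEnergy C D
  have hmoment := sum_solutionCount_pow_five_rpow_le (B := B) hA hF D
  have hroot : ((C.card : ℝ) ^ 2) ^ ((3 : ℝ) / 5) = (C.card : ℝ) ^ ((6 : ℝ) / 5) := by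
    rw [← Real.rpow_natCast_mul (Nat.cast_nonneg _)]
    norm_num
  rw [card_solutions_eq_sum]
  push_cast
  calc _ ≤ _ := sum_mul_le_rpow_mul_rpow_mul_rpow D (fun _ => Nat.cast_nonneg _)
        (fun _ => Nat.cast_nonneg _)
    _ ≤ ((C.card : ℝ) ^ 2) ^ ((3 : ℝ) / 5) * (Finset.addEnergy C C : ℝ) ^ ((1 : ℝ) / 5) *
          (2 ^ 15 * (A.card : ℝ) ^ ((7 : ℝ) / 5) * (B.card : ℝ) ^ ((8 : ℝ) / 5) *
            Real.log (2 * A.card) ^ ((2 : ℝ) / 5)) := by gcongr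
    _ = _ := by
      rw [hroot]
      ring

theorem stmt_10 :
    ∃ K : ℝ, 0 < K ∧ ∃ c₀ : ℝ, 0 < c₀ ∧
      ∀ (p : ℕ) [Fact p.Prime], ∀ A B C : Finset (ZMod p),
        A.Nonempty → B.Nonempty → C.Nonempty → (A.card : ℝ) ≤ Real.sqrt p →
        (((((A ×ˢ A) ×ˢ (B ×ˢ B)) ×ˢ (C ×ˢ C)).filter fun q =>
              q.1.1.1 + q.1.2.1 ≠ 0 ∧ q.1.1.2 + q.1.2.2 ≠ 0 ∧
              (q.1.1.1 + q.1.2.1)⁻¹ + q.2.1 = (q.1.1.2 + q.1.2.2)⁻¹ + q.2.2).card : ℝ)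
          ≤ K * (A.card : ℝ) ^ ((7 : ℝ) / 5) * (B.card : ℝ) ^ ((8 : ℝ) / 5)
              * (C.card : ℝ) ^ ((6 : ℝ) / 5) * (addEnergy C : ℝ) ^ ((1 : ℝ) / 5)
              * Real.log (2 * A.card) ^ c₀ := by
  refine ⟨2 ^ 15, by norm_num, 2 / 5, by norm_num, fun p _ A B C hA _ _ hAp => ?_⟩
  have hAsq : A.card ^ 2 ≤ p := by
    exact_mod_cast (Real.le_sqrt (Nat.cast_nonneg _) (Nat.cast_nonneg _)).1 hAp
  rw [MoebiusEnergy.addEnergy_eq_addEnergy]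
  convert stmt_10_general hA (MoebiusEnergy.charAtLeast_of_charP (ZMod p) p hAsq) B C
end

section
/- There exists an absolute constant C > 0 such that for every odd prime p the following holds: if a and H are positive integers such that each of a, a+1, …, a+H−1 is a nonzero quadratic residue modulo p, then H ≤ C · p^{1/4} · log p. Equivalently, the maximal number of consecutive quadratic residues modulo p is O(p^{1/4} log p). -/
/-!
Let `χ` be the quadratic character modulo `p`. Stepanov's method bounds `∑ x, χ (f x)` by
`O(deg f * √p)` when `f` is not a constant multiple of a square: for a sign `ε` and
`g = (p - 1) / 2`, linear algebra provides a nonzero polynomial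
`∑ j, (r j + s j * f ^ g) * X ^ (p * j)` of degree about `p ^ (3 / 2) / 2` that vanishes to order
`√p` wherever `χ (f x) = ε`. Expanding `∏ t, (1 + ε t * χ (x + t))` then shows that at most
`p / 2 ^ h + O(h * √p)` residues `x` have prescribed signs at `h` given shifts.

Suppose `χ` is constant on a run of length about `u * h` starting at `a`, where `2 ^ h ≈ p`. For
`j < L ≈ u * h` and `q ≤ Q ≈ u`, multiplication by `q` sends the points `(a + j) / q + m`,
`m < h`, into the run, so `χ` is constant on these points and there are only `O(h * √p)` fractions
`(a + j) / q`. By Dirichlet's approximation theorem `a` is `v / b` modulo `p` with `b` and `v`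
small, which makes the fractions with `v + b * j` coprime to `q` distinct, and these are a
positive proportion of the pairs `(j, q)`. Hence `u * h * u = O(h * √p)`, that is,
`u = O(p ^ (1 / 4))`.
-/

open Finset Polynomial

section TwistedDerivative

variable {R : Type*} [CommRing R]

/-- The differential operator `r ↦ f * r' + c * f' * r`, formally `f ^ (1 - c) * (f ^ c * r)'`. It
replaces the derivative in Stepanov's method: iterating it on `r * f ^ g` keeps the factor
`f ^ g`. -/
noncomputable def twistedDeriv (f : R[X]) (c : R) : R[X] →ₗ[R] R[X] :=
  LinearMap.mulLeft R f ∘ₗ derivative + LinearMap.mulLeft R (C c * derivative f)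

theorem twistedDeriv_apply (f : R[X]) (c : R) (r : R[X]) :
    twistedDeriv f c r = f * derivative r + C c * derivative f * r := rfl

theorem twistedDeriv_mul_pow_mul (f r : R[X]) {u : R[X]} (hu : derivative u = 0) (c : R) (g : ℕ) :
    twistedDeriv f c (r * f ^ g * u) = twistedDeriv f (c + g) r * f ^ g * u := by
  cases g <;> simp [twistedDeriv_apply, hu, derivative_pow] <;> ring

theorem twistedDeriv_pow_mul_pow_mul (f r : R[X]) {u : R[X]} (hu : derivative u = 0) (c : R)
    (g k : ℕ) :
    (twistedDeriv f c ^ k) (r * f ^ g * u) = (twistedDeriv f (c + g) ^ k) r * f ^ g * u := by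
  induction k with
  | zero => rfl
  | succ k ih =>
    rw [pow_succ', Module.End.mul_apply, ih, twistedDeriv_mul_pow_mul f _ hu, pow_succ',
      Module.End.mul_apply]

theorem mul_mem_degreeLT {q r : R[X]} {d n : ℕ} (hq : q.natDegree ≤ d) (hr : r ∈ degreeLT R n) :
    q * r ∈ degreeLT R (n + d) := by
  rcases eq_or_ne r 0 with rfl | hr0
  · simp
  have hrn : r.natDegree < n := (natDegree_lt_iff_degree_lt hr0).2 (mem_degreeLT.1 hr)
  refine mem_degreeLT.2 (degree_le_natDegree.trans_lt (Nat.cast_lt.2 ?_))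
  have := natDegree_mul_le (p := q) (q := r)
  omega

theorem twistedDeriv_mem_degreeLT (f : R[X]) (c : R) {r : R[X]} {n : ℕ} (hr : r ∈ degreeLT R n) :
    twistedDeriv f c r ∈ degreeLT R (n + f.natDegree) := by
  have hr' : derivative r ∈ degreeLT R n :=
    mem_degreeLT.2 ((degree_derivative_le).trans_lt (mem_degreeLT.1 hr))
  have hf' : (C c * derivative f).natDegree ≤ f.natDegree :=
    (natDegree_C_mul_le _ _).trans ((natDegree_derivative_le f).trans (Nat.sub_le _ _))
  exact add_mem (mul_mem_degreeLT le_rfl hr') (mul_mem_degreeLT hf' hr)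

theorem twistedDeriv_pow_mem_degreeLT (f : R[X]) (c : R) {r : R[X]} {n : ℕ}
    (hr : r ∈ degreeLT R n) (k : ℕ) :
    (twistedDeriv f c ^ k) r ∈ degreeLT R (n + k * f.natDegree) := by
  induction k with
  | zero => simpa using hr
  | succ k ih =>
    rw [pow_succ', Module.End.mul_apply, Nat.succ_mul, ← add_assoc]
    exact twistedDeriv_mem_degreeLT f c ih

theorem eval_twistedDeriv_zero_pow_X_sub_C_pow_mul (f q : R[X]) (a : R) (m : ℕ) :
    eval a ((twistedDeriv f 0 ^ m) ((X - C a) ^ m * q)) =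
      m.factorial * eval a f ^ m * eval a q := by
  induction m generalizing q with
  | zero => simp
  | succ m ih =>
    have h : twistedDeriv f 0 ((X - C a) ^ (m + 1) * q) =
        (X - C a) ^ m * ((m + 1 : R[X]) * f * q + (X - C a) * f * derivative q) := by
      simp [twistedDeriv_apply, derivative_pow]; ring
    rw [pow_succ, Module.End.mul_apply, h, ih]
    simp [Nat.factorial_succ, pow_succ]; ring

theorem le_rootMultiplicity_of_eval_twistedDeriv_zero_pow [IsDomain R] {f F : R[X]} {a : R}
    {M : ℕ} (hM : ∀ m < M, (m.factorial : R) ≠ 0) (hF : F ≠ 0) (hfa : eval a f ≠ 0)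
    (h : ∀ k < M, eval a ((twistedDeriv f 0 ^ k) F) = 0) : M ≤ F.rootMultiplicity a := by
  by_contra! hlt
  obtain ⟨q, hq, hndvd⟩ := exists_eq_pow_rootMultiplicity_mul_and_not_dvd F hF a
  have hqa : eval a q ≠ 0 := fun h => hndvd (dvd_iff_isRoot.2 h)
  have hzero := h _ hlt
  set m := F.rootMultiplicity a
  rw [hq, eval_twistedDeriv_zero_pow_X_sub_C_pow_mul] at hzero
  exact mul_ne_zero (mul_ne_zero (hM m hlt) (pow_ne_zero _ hfa)) hqa hzero

theorem mul_card_le_natDegree [IsDomain R] {F : R[X]} {A : Finset R} {M : ℕ}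
    (h : ∀ a ∈ A, M ≤ F.rootMultiplicity a) : M * #A ≤ F.natDegree := by
  classical
  have hle : M • A.val ≤ F.roots := by
    refine Multiset.le_iff_count.2 fun a => ?_
    rw [Multiset.count_nsmul, count_roots]
    by_cases ha : a ∈ A
    · simpa [Multiset.count_eq_one_of_mem A.nodup ha] using h a ha
    · simp [Multiset.count_eq_zero_of_notMem ha]
  simpa using (Multiset.card_le_card hle).trans (card_roots' F)

end TwistedDerivative

section ConstMulSq

variable {K : Type*} [Field K]

/-- The polynomials `c * t ^ 2`: for these a quadratic character does not change sign along the
values of the polynomial, so they must be excluded from Weil's bound. -/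
def IsConstMulSq (f : K[X]) : Prop :=
  ∃ (c : K) (t : K[X]), f = C c * t ^ 2

theorem natDegree_pos_of_not_isConstMulSq {f : K[X]} (hf : ¬ IsConstMulSq f) :
    0 < f.natDegree := by
  by_contra! h
  exact hf ⟨f.coeff 0, 1, by simpa using eq_C_of_natDegree_le_zero h⟩

theorem isConstMulSq_of_comp_X_add_C {f : K[X]} {b : K} (h : IsConstMulSq (f.comp (X + C b))) :
    IsConstMulSq f := by
  obtain ⟨c, t, ht⟩ := h
  refine ⟨c, t.comp (X - C b), ?_⟩
  have h := congrArg (fun q : K[X] => q.comp (X - C b)) ht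
  simpa [comp_assoc, sub_add_cancel] using h

theorem not_isConstMulSq_of_squarefree {f : K[X]} (hf : Squarefree f) (hdeg : f.natDegree ≠ 0) :
    ¬ IsConstMulSq f := by
  rintro ⟨c, t, rfl⟩
  obtain ⟨b, -, rfl⟩ := isUnit_iff.1 (hf t ⟨C c, by ring⟩)
  exact hdeg (by rw [← C_pow, ← C_mul, natDegree_C])

theorem eq_zero_of_sq_mul_eq_C_mul_sq {f r s : K[X]} {c : K} (hf : ¬ IsConstMulSq f) (hc : c ≠ 0)
    (h : r ^ 2 * f = C c * s ^ 2) : r = 0 ∧ s = 0 := by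
  have hr : r = 0 := by
    by_contra hr
    have hdvd : r ∣ s := (UniqueFactorizationMonoid.pow_dvd_pow_iff_dvd two_ne_zero).1
      (((isUnit_C.2 hc.isUnit).dvd_mul_left).1 ⟨f, h.symm⟩)
    obtain ⟨t, rfl⟩ := hdvd
    refine hf ⟨c, t, mul_left_cancel₀ (pow_ne_zero 2 hr) ?_⟩
    rw [h]; ring
  subst hr
  exact ⟨rfl, by simpa [hc] using h.symm⟩

end ConstMulSq

section Stepanov

variable {R : Type*} [CommRing R] {J : ℕ}

/-- Stepanov's auxiliary polynomial with coefficients `r` and `s`. Multiples of `p` are used as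
exponents so that `X ^ (p * j)` is a constant for the derivative. -/
noncomputable def stepanovPoly (p g : ℕ) (f : R[X]) (r s : Fin J → R[X]) : R[X] :=
  ∑ j, (r j + s j * f ^ g) * X ^ (p * (j : ℕ))

/-- The value of the `k`-th twisted derivative of the auxiliary polynomial at a point `x` with
`f x ^ g = ε` and `x ^ p = x`, as a polynomial in `x`; the parameter `c` stands for `g`. -/
noncomputable def stepanovCondition (f : R[X]) (c ε : R) (J k : ℕ) :
    (Fin J → R[X]) × (Fin J → R[X]) →ₗ[R] R[X] where
  toFun w := ∑ j, ((twistedDeriv f 0 ^ k) (w.1 j) + ε • (twistedDeriv f c ^ k) (w.2 j)) *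
    X ^ (j : ℕ)
  map_add' w w' := by
    rw [← sum_add_distrib]
    refine sum_congr rfl fun j _ => ?_
    simp only [Prod.fst_add, Prod.snd_add, Pi.add_apply, map_add, smul_add]
    ring
  map_smul' b w := by
    simp only [Prod.smul_fst, Prod.smul_snd, Pi.smul_apply, map_smul, smul_comm ε b, ← smul_add,
      smul_mul_assoc, smul_sum, RingHom.id_apply]

theorem stepanovCondition_apply (f : R[X]) (c ε : R) (k : ℕ) (r s : Fin J → R[X]) :
    stepanovCondition f c ε J k (r, s) =
      ∑ j, ((twistedDeriv f 0 ^ k) (r j) + ε • (twistedDeriv f c ^ k) (s j)) * X ^ (j : ℕ) := rfl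

theorem stepanovPoly_succ (p g : ℕ) (f : R[X]) (r s : Fin (J + 1) → R[X]) :
    stepanovPoly p g f r s =
      r 0 + s 0 * f ^ g + X ^ p * stepanovPoly p g f (Fin.tail r) (Fin.tail s) := by
  simp only [stepanovPoly, Fin.sum_univ_succ, mul_sum, Fin.tail]
  congr 1
  · simp
  · refine sum_congr rfl fun j _ => ?_
    rw [Fin.val_succ]
    ring

theorem natDegree_stepanovPoly_le {p g D : ℕ} {f : R[X]} {r s : Fin J → R[X]} (hD : D ≤ p)
    (hr : ∀ j, r j ∈ degreeLT R D) (hs : ∀ j, s j ∈ degreeLT R D) :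
    (stepanovPoly p g f r s).natDegree ≤ J * p + f.natDegree * g := by
  refine natDegree_sum_le_of_forall_le _ _ fun j _ => ?_
  have hrj : (r j).natDegree ≤ D := natDegree_le_of_degree_le (mem_degreeLT.1 (hr j)).le
  have hsj : (s j * f ^ g).natDegree ≤ D + f.natDegree * g := by
    refine natDegree_mul_le_of_le (natDegree_le_of_degree_le (mem_degreeLT.1 (hs j)).le) ?_
    rw [mul_comm]
    exact natDegree_pow_le
  have hj : p * (j : ℕ) + p ≤ J * p := by
    rw [← Nat.mul_succ, mul_comm]
    gcongr
    exact j.2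
  calc ((r j + s j * f ^ g) * X ^ (p * (j : ℕ))).natDegree
      ≤ (D + f.natDegree * g) + p * (j : ℕ) :=
        natDegree_mul_le_of_le (natDegree_add_le_of_degree_le (by omega) hsj) (natDegree_X_pow_le _)
    _ ≤ J * p + f.natDegree * g := by omega

theorem stepanovCondition_mem_degreeLT (f : R[X]) (c ε : R) {D M k : ℕ} (hk : k ≤ M)
    {r s : Fin J → R[X]} (hr : ∀ j, r j ∈ degreeLT R D) (hs : ∀ j, s j ∈ degreeLT R D) :
    stepanovCondition f c ε J k (r, s) ∈ degreeLT R (D + M * f.natDegree + J) := by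
  have hpow (b : R) {q : R[X]} (hq : q ∈ degreeLT R D) :
      (twistedDeriv f b ^ k) q ∈ degreeLT R (D + M * f.natDegree) :=
    degreeLT_mono (by gcongr) (twistedDeriv_pow_mem_degreeLT f b hq k)
  rw [stepanovCondition_apply]
  refine Submodule.sum_mem _ fun j _ => ?_
  rw [mul_comm _ (X ^ (j : ℕ))]
  exact mul_mem_degreeLT ((natDegree_X_pow_le _).trans j.2.le)
    (Submodule.add_mem _ (hpow 0 (hr j)) (Submodule.smul_mem _ ε (hpow c (hs j))))

theorem twistedDeriv_zero_pow_stepanovPoly {p : ℕ} [CharP R p] (f : R[X]) (g : ℕ)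
    (r s : Fin J → R[X]) (k : ℕ) :
    (twistedDeriv f 0 ^ k) (stepanovPoly p g f r s) =
      stepanovPoly p g f (fun j => (twistedDeriv f 0 ^ k) (r j))
        fun j => (twistedDeriv f g ^ k) (s j) := by
  have hX (j : ℕ) : derivative (X ^ (p * j) : R[X]) = 0 := by simp [derivative_X_pow]
  simp only [stepanovPoly, map_sum]
  refine sum_congr rfl fun j _ => ?_
  have hr := twistedDeriv_pow_mul_pow_mul f (r j) (hX j) 0 0 k
  have hs := twistedDeriv_pow_mul_pow_mul f (s j) (hX j) 0 g k
  simp only [pow_zero, mul_one, Nat.cast_zero, zero_add] at hr hs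
  rw [add_mul, map_add, hr, hs, add_mul]

theorem X_pow_char_dvd_pow_sub_C_eval_pow {p : ℕ} [Fact p.Prime] [CharP R p] (f : R[X]) :
    X ^ p ∣ f ^ p - C (eval 0 f ^ p) := by
  rw [C_pow, ← sub_pow_char]
  exact pow_dvd_pow_of_dvd (by simpa using X_sub_C_dvd_sub_C_eval (a := (0 : R)) (p := f)) p

section Field

variable {K : Type*} [Field K]

theorem exists_ne_zero_forall_apply_eq_zero {ι V W : Type*} [Fintype ι] [AddCommGroup V]
    [Module K V] [Module.Finite K V] [AddCommGroup W] [Module K W] (φ : ι → V →ₗ[K] W)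
    (U : Submodule K W) [Module.Finite K U] (hU : ∀ i v, φ i v ∈ U)
    (hdim : Fintype.card ι * Module.finrank K U < Module.finrank K V) :
    ∃ v ≠ 0, ∀ i, φ i v = 0 := by
  let Φ : V →ₗ[K] ι → U := LinearMap.pi fun i => (φ i).codRestrict U (hU i)
  have hker : LinearMap.ker Φ ≠ ⊥ := by
    apply LinearMap.ker_ne_bot_of_finrank_lt
    rwa [Module.finrank_pi_fintype, sum_const, card_univ, smul_eq_mul]
  obtain ⟨v, hv, hv0⟩ := (Submodule.ne_bot_iff _).1 hker
  exact ⟨v, hv0, fun i => congrArg Subtype.val (congrFun hv i)⟩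

theorem exists_stepanovCondition_eq_zero (f : K[X]) (c ε : K) {D M : ℕ}
    (hdim : M * (D + M * f.natDegree + J) < 2 * D * J) :
    ∃ r s : Fin J → K[X], (∀ j, r j ∈ degreeLT K D) ∧ (∀ j, s j ∈ degreeLT K D) ∧
      ¬ (r = 0 ∧ s = 0) ∧ ∀ k < M, stepanovCondition f c ε J k (r, s) = 0 := by
  let incl := (degreeLT K D).subtype.compLeft (Fin J)
  obtain ⟨⟨r, s⟩, hne, hrs⟩ := exists_ne_zero_forall_apply_eq_zero
    (fun k : Fin M => stepanovCondition f c ε J k ∘ₗ incl.prodMap incl)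
    (degreeLT K (D + M * f.natDegree + J))
    (fun k w => stepanovCondition_mem_degreeLT f c ε k.2.le (fun j => (w.1 j).2)
      fun j => (w.2 j).2)
    (by
      simp only [Module.finrank_prod, Module.finrank_pi_fintype, sum_const, card_univ,
        Fintype.card_fin, smul_eq_mul, Module.finrank_eq_card_basis (degreeLT.basis K _)]
      linarith)
  refine ⟨incl r, incl s, fun j => (r j).2, fun j => (s j).2, ?_, fun k hk => hrs ⟨k, hk⟩⟩
  rintro ⟨hr, hs⟩
  have hincl : Function.Injective incl := Subtype.val_injective.comp_left
  exact hne (Prod.ext ((map_eq_zero_iff incl hincl).1 hr) ((map_eq_zero_iff incl hincl).1 hs))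

variable {p : ℕ} [Fact p.Prime] [CharP K p] {f : K[X]} {D g : ℕ}

-- Multiplying by `(r - s * f ^ g) * f` and reducing `f ^ p` to `f 0 ^ p` leaves
-- `r ^ 2 * f - f 0 ^ p * s ^ 2`, whose degree is too small for a nonzero multiple of `X ^ p`.
theorem eq_zero_of_X_pow_dvd_add_mul_pow {r s : K[X]} (hg : 2 * g + 1 = p)
    (hf : ¬ IsConstMulSq f) (hf0 : eval 0 f ≠ 0) (hD : 2 * D + f.natDegree < p)
    (hr : r ∈ degreeLT K D) (hs : s ∈ degreeLT K D) (h : X ^ p ∣ r + s * f ^ g) :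
    r = 0 ∧ s = 0 := by
  have hdvd : X ^ p ∣ r ^ 2 * f - C (eval 0 f ^ p) * s ^ 2 := by
    have hfp : f ^ p = f ^ g * f ^ g * f := by rw [← hg]; ring
    have hsplit : r ^ 2 * f - C (eval 0 f ^ p) * s ^ 2 =
        (r + s * f ^ g) * ((r - s * f ^ g) * f) + (f ^ p - C (eval 0 f ^ p)) * s ^ 2 := by
      rw [hfp]; ring
    rw [hsplit]
    exact dvd_add (h.mul_right _) ((X_pow_char_dvd_pow_sub_C_eval_pow f).mul_right _)
  have hdeg : (r ^ 2 * f - C (eval 0 f ^ p) * s ^ 2).natDegree < (X ^ p : K[X]).natDegree := by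
    have hrD : r.natDegree ≤ D := natDegree_le_of_degree_le (mem_degreeLT.1 hr).le
    have hsD : s.natDegree ≤ D := natDegree_le_of_degree_le (mem_degreeLT.1 hs).le
    rw [natDegree_X_pow]
    refine (natDegree_sub_le_of_le (natDegree_mul_le_of_le (natDegree_pow_le_of_le 2 hrD) le_rfl)
      ((natDegree_C_mul_le _ _).trans (natDegree_pow_le_of_le 2 hsD))).trans_lt ?_
    omega
  have heq : r ^ 2 * f = C (eval 0 f ^ p) * s ^ 2 :=
    sub_eq_zero.1 (eq_zero_of_dvd_of_natDegree_lt hdvd hdeg)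
  exact eq_zero_of_sq_mul_eq_C_mul_sq hf (pow_ne_zero p hf0) heq

theorem eq_zero_of_stepanovPoly_eq_zero {r s : Fin J → K[X]} (hg : 2 * g + 1 = p)
    (hf : ¬ IsConstMulSq f) (hf0 : eval 0 f ≠ 0) (hD : 2 * D + f.natDegree < p)
    (hr : ∀ j, r j ∈ degreeLT K D) (hs : ∀ j, s j ∈ degreeLT K D)
    (h : stepanovPoly p g f r s = 0) : r = 0 ∧ s = 0 := by
  induction J with
  | zero => exact ⟨Subsingleton.elim _ _, Subsingleton.elim _ _⟩
  | succ J ih =>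
    rw [stepanovPoly_succ] at h
    obtain ⟨hr0, hs0⟩ := eq_zero_of_X_pow_dvd_add_mul_pow hg hf hf0 hD (hr 0) (hs 0)
      ((dvd_add_left (dvd_mul_right _ _)).1 (h ▸ dvd_zero _))
    rw [hr0, hs0, zero_mul, add_zero, zero_add] at h
    obtain ⟨hrt, hst⟩ := ih (fun j => hr j.succ) (fun j => hs j.succ)
      ((mul_eq_zero.1 h).resolve_left (pow_ne_zero _ X_ne_zero))
    exact ⟨funext (Fin.cases hr0 (congrFun hrt)), funext (Fin.cases hs0 (congrFun hst))⟩

end Field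

section ZMod

variable {p : ℕ} [Fact p.Prime] {f : (ZMod p)[X]} {ε : ZMod p} {g : ℕ}

theorem eval_twistedDeriv_zero_pow_stepanovPoly (r s : Fin J → (ZMod p)[X]) (k : ℕ) {a : ZMod p}
    (ha : eval a f ^ g = ε) :
    eval a ((twistedDeriv f 0 ^ k) (stepanovPoly p g f r s)) =
      eval a (stepanovCondition f (g : ZMod p) ε J k (r, s)) := by
  rw [twistedDeriv_zero_pow_stepanovPoly, stepanovPoly, stepanovCondition_apply, eval_finsetSum,
    eval_finsetSum]
  refine sum_congr rfl fun j _ => ?_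
  simp only [eval_mul, eval_add, eval_pow, eval_X, eval_smul, smul_eq_mul, ha, pow_mul,
    ZMod.pow_card, mul_comm ε]

theorem mul_card_eval_pow_eq_le {D M : ℕ} (hg : 2 * g + 1 = p) (hf : ¬ IsConstMulSq f)
    (hf0 : eval 0 f ≠ 0) (hD : 2 * D + f.natDegree < p) (hM : M ≤ p)
    (hdim : M * (D + M * f.natDegree + J) < 2 * D * J) (hε : ε ≠ 0) :
    M * #{a | eval a f ^ g = ε} ≤ J * p + f.natDegree * g := by
  obtain ⟨r, s, hr, hs, hne, hvan⟩ := exists_stepanovCondition_eq_zero f (g : ZMod p) ε hdim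
  have hF : stepanovPoly p g f r s ≠ 0 := fun h =>
    hne (eq_zero_of_stepanovPoly_eq_zero hg hf hf0 hD hr hs h)
  have hg0 : g ≠ 0 := by
    rintro rfl
    exact (Fact.out : p.Prime).ne_one hg.symm
  have hfact : ∀ m < M, (m.factorial : ZMod p) ≠ 0 := fun m hm h => by
    rw [ZMod.natCast_eq_zero_iff, (Fact.out : p.Prime).dvd_factorial] at h
    omega
  refine (mul_card_le_natDegree fun a ha => ?_).trans
    (natDegree_stepanovPoly_le (by omega) hr hs)
  have ha : eval a f ^ g = ε := (mem_filter.1 ha).2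
  have hfa : eval a f ≠ 0 := by
    intro h
    rw [h, zero_pow hg0] at ha
    exact hε ha.symm
  refine le_rootMultiplicity_of_eval_twistedDeriv_zero_pow hfact hF hfa fun k hk => ?_
  rw [eval_twistedDeriv_zero_pow_stepanovPoly r s k ha, hvan k hk, eval_zero]

end ZMod

end Stepanov

section WeilBound

-- The multiplicity `√p` is optimal up to a constant: with `2 * D ≈ p` and `2 * J ≈ √p + 4 * d`,
-- the bound `(J * p + d * g) / √p` for the number of points is `p / 2 + O(d * √p)`.
theorem exists_stepanov_parameters {p M d : ℕ} (hM : M * M ≤ p) (hd : 0 < d)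
    (hp : 4 * (d + 2 + M) ≤ p) :
    ∃ D J, 2 * D + d < p ∧ 2 * J ≤ M + 4 * d + 4 ∧ M * (D + M * d + J) < 2 * D * J := by
  refine ⟨(p - 1 - d) / 2, M / 2 + 2 * d + 2, by omega, by omega, ?_⟩
  set D := (p - 1 - d) / 2
  set J := M / 2 + 2 * d + 2
  have hJ : M + 4 * d + 3 ≤ 2 * J := by omega
  have hJ' : 2 * J ≤ M + 4 * d + 4 := by omega
  have hD : 3 * p + 4 * M ≤ 8 * D := by omega
  have hDJ : D * (M + 4 * d + 3) ≤ 2 * D * J := by nlinarith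
  have hMJ : 2 * (M * J) ≤ M * (M + 4 * d + 4) := by nlinarith
  have hDd : (3 * p + 4 * M) * (4 * d + 3) ≤ 8 * D * (4 * d + 3) := by gcongr
  have hMd : M * M * d ≤ p * d := by gcongr
  have hpd : 0 < p * d := Nat.mul_pos (by omega) hd
  nlinarith

variable {p : ℕ} [Fact p.Prime] {f : (ZMod p)[X]}

theorem two_mul_card_eval_pow_eq_le {g : ℕ} {ε : ZMod p} (hg : 2 * g + 1 = p)
    (hf : ¬ IsConstMulSq f) (hf0 : eval 0 f ≠ 0) (hp : 4 * (f.natDegree + 2 + p.sqrt) ≤ p)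
    (hε : ε ≠ 0) :
    2 * #{a | eval a f ^ g = ε} ≤ p + 27 * f.natDegree * p.sqrt := by
  have hd : 0 < f.natDegree := natDegree_pos_of_not_isConstMulSq hf
  have hM0 : 0 < p.sqrt := Nat.sqrt_pos.2 (Fact.out : p.Prime).pos
  have hMp : p.sqrt * p.sqrt ≤ p := Nat.sqrt_le p
  have hpM : p ≤ p.sqrt * p.sqrt + p.sqrt + p.sqrt := Nat.sqrt_le_add p
  obtain ⟨D, J, hD, hJ, hdim⟩ := exists_stepanov_parameters hMp hd hp
  have hcard := mul_card_eval_pow_eq_le hg hf hf0 hD (Nat.sqrt_le_self p) hdim hε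
  set M := p.sqrt
  set d := f.natDegree
  set N := #{a | eval a f ^ g = ε}
  refine Nat.le_of_mul_le_mul_left (c := M) ?_ hM0
  calc M * (2 * N) = 2 * (M * N) := by ring
    _ ≤ 2 * (J * p + d * g) := by gcongr
    _ = 2 * J * p + d * (2 * g) := by ring
    _ ≤ (M + 4 * d + 4) * p + d * p := by gcongr; omega
    _ ≤ (M + 4 * d + 4 * d) * p + d * p := by gcongr; omega
    _ = M * p + 9 * d * p := by ring
    _ ≤ M * p + 9 * d * (M * M + M + M) := by gcongr
    _ ≤ M * p + 9 * d * (M * M + M * M + M * M) := by gcongr <;> exact Nat.le_mul_self M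
    _ = M * (p + 27 * d * M) := by ring

theorem card_eval_eq_zero_le {R : Type*} [CommRing R] [IsDomain R] [Fintype R] [DecidableEq R]
    {f : R[X]} (hf : f ≠ 0) : #{x | eval x f = 0} ≤ f.natDegree :=
  card_le_degree_of_subset_roots fun x hx => by simpa [hf] using hx

theorem mul_sum_quadraticChar_add_card {F ι : Type*} [Field F] [Fintype F] [DecidableEq F]
    [Fintype ι] (φ : ι → F) (ε : ℤˣ) :
    ε * ∑ i, quadraticChar F (φ i) + Fintype.card ι =
      2 * #{i | quadraticChar F (φ i) = ε} + #{i | φ i = 0} := by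
  have hpoint (y : F) : ε * quadraticChar F y + 1 =
      2 * (if quadraticChar F y = ε then 1 else 0) + if y = 0 then 1 else 0 := by
    rcases eq_or_ne y 0 with rfl | hy
    · simp [ε.ne_zero.symm]
    · rcases quadraticChar_dichotomy hy with h | h <;>
        rcases Int.units_eq_one_or ε with rfl | rfl <;> simp [h, hy]
  have hsum := sum_congr rfl fun i (_ : i ∈ univ) => hpoint (φ i)
  simpa only [sum_add_distrib, ← mul_sum, sum_boole, sum_const, card_univ, nsmul_eq_mul,
    mul_one] using hsum

theorem abs_sum_quadraticChar_eval_le_of_eval_zero_ne_zero (hf : ¬ IsConstMulSq f)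
    (hf0 : eval 0 f ≠ 0) (hp2 : p ≠ 2) (hp : 4 * (f.natDegree + 2 + p.sqrt) ≤ p) :
    |∑ x, quadraticChar (ZMod p) (eval x f)| ≤ 28 * f.natDegree * p.sqrt := by
  have hchar : ringChar (ZMod p) ≠ 2 := by rwa [ZMod.ringChar_zmod_n]
  have hodd : 2 * (p / 2) + 1 = p :=
    Nat.two_mul_div_two_add_one_of_odd ((Fact.out : p.Prime).odd_of_ne_two hp2)
  have hcount (ε : ℤˣ) : 2 * #{x | quadraticChar (ZMod p) (eval x f) = ε} ≤
      p + 27 * f.natDegree * p.sqrt := by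
    refine le_trans (Nat.mul_le_mul_left 2 (card_le_card fun x hx => ?_))
      (two_mul_card_eval_pow_eq_le (ε := ((ε : ℤ) : ZMod p)) hodd hf hf0 hp ?_)
    · rw [mem_filter] at hx ⊢
      rw [← hx.2, quadraticChar_eq_pow_of_char_ne_two' hchar, ZMod.card]
      exact ⟨mem_univ x, rfl⟩
    · exact (ε.isUnit.map (Int.castRingHom (ZMod p))).ne_zero
  have hroots : #{x | eval x f = 0} ≤ f.natDegree :=
    card_eval_eq_zero_le fun h => hf0 (by rw [h, eval_zero])
  have hsqrt : f.natDegree ≤ f.natDegree * p.sqrt :=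
    Nat.le_mul_of_pos_right _ (Nat.sqrt_pos.2 (Fact.out : p.Prime).pos)
  have hbound (ε : ℤˣ) : ε * ∑ x, quadraticChar (ZMod p) (eval x f) ≤
      28 * f.natDegree * p.sqrt := by
    have hsum := mul_sum_quadraticChar_add_card (fun x => eval x f) ε
    have hε := hcount ε
    rw [ZMod.card] at hsum
    zify at hε hroots hsqrt
    linarith
  rw [abs_le']
  exact ⟨by simpa using hbound 1, by simpa using hbound (-1)⟩

theorem abs_sum_quadraticChar_le_card {F ι : Type*} [Field F] [Fintype F] [DecidableEq F]
    (s : Finset ι) (φ : ι → F) : |∑ i ∈ s, quadraticChar F (φ i)| ≤ #s := by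
  refine (abs_sum_le_sum_abs _ _).trans ?_
  rw [← nsmul_one, ← sum_const]
  refine sum_le_sum fun i _ => ?_
  rcases quadraticChar_isQuadratic F (φ i) with h | h | h <;> simp [h]

-- Weil's bound, up to the constant.
theorem abs_sum_quadraticChar_eval_le (hf : ¬ IsConstMulSq f) :
    |∑ x, quadraticChar (ZMod p) (eval x f)| ≤ 28 * f.natDegree * p.sqrt := by
  have hd : 0 < f.natDegree := natDegree_pos_of_not_isConstMulSq hf
  have hM : 0 < p.sqrt := Nat.sqrt_pos.2 (Fact.out : p.Prime).pos
  rcases lt_or_ge p (4 * (f.natDegree + 2 + p.sqrt)) with hp | hp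
  · have htriv := abs_sum_quadraticChar_le_card univ fun x : ZMod p => eval x f
    have hsmall : p ≤ 28 * f.natDegree * p.sqrt := by nlinarith
    rw [card_univ, ZMod.card] at htriv
    exact htriv.trans (mod_cast hsmall)
  obtain ⟨b, hb⟩ : ∃ b, eval b f ≠ 0 := by
    refine exists_eval_ne_zero_of_natDegree_lt_card f (ne_zero_of_natDegree_gt hd) ?_
    rw [Cardinal.mk_fintype, ZMod.card]
    exact_mod_cast (by omega : f.natDegree < p)
  have hshift := abs_sum_quadraticChar_eval_le_of_eval_zero_ne_zero (f := f.comp (X + C b))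
    (fun h => hf (isConstMulSq_of_comp_X_add_C h)) (by simpa using hb) (by omega)
    (by simpa [natDegree_comp] using hp)
  have hsum : ∑ x, quadraticChar (ZMod p) (eval x (f.comp (X + C b))) =
      ∑ x, quadraticChar (ZMod p) (eval x f) := by
    simpa using Equiv.sum_comp (Equiv.addRight b) fun x => quadraticChar (ZMod p) (eval x f)
  rwa [hsum, natDegree_comp, natDegree_X_add_C, mul_one] at hshift

end WeilBound

section SignPattern

variable {p : ℕ} [Fact p.Prime] {T : Finset (ZMod p)}

theorem abs_sum_prod_quadraticChar_add_le (hT : T.Nonempty) :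
    |∑ x, ∏ t ∈ T, quadraticChar (ZMod p) (x + t)| ≤ 28 * #T * p.sqrt := by
  have hdeg : (∏ t ∈ T, (X - C (-t))).natDegree = #T := natDegree_finsetProd_X_sub_C_eq_card T _
  have hsq : Squarefree (∏ t ∈ T, (X - C (-t))) :=
    (separable_prod_X_sub_C_iff'.2 neg_injective.injOn).squarefree
  have h := abs_sum_quadraticChar_eval_le
    (not_isConstMulSq_of_squarefree hsq (by simpa only [hdeg] using hT.card_ne_zero))
  simpa only [hdeg, eval_prod, eval_sub, eval_X, eval_C, sub_neg_eq_add, map_prod] using h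

/-- The set of all `x` for which the quadratic character takes the prescribed sign `ε t` at each
shift `x + t` with `t ∈ T`. -/
def signPatternSet (T : Finset (ZMod p)) (ε : ZMod p → ℤˣ) : Finset (ZMod p) :=
  {x | ∀ t ∈ T, quadraticChar (ZMod p) (x + t) = ε t}

-- The product is `2 ^ #T` on the set in question and nonnegative elsewhere.
theorem two_pow_mul_card_signPatternSet_le_sum (T : Finset (ZMod p)) (ε : ZMod p → ℤˣ) :
    2 ^ #T * (#(signPatternSet T ε) : ℤ) ≤
      ∑ x, ∏ t ∈ T, (1 + ε t * quadraticChar (ZMod p) (x + t)) := by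
  have hnonneg (x t : ZMod p) : 0 ≤ 1 + ε t * quadraticChar (ZMod p) (x + t) := by
    rcases quadraticChar_isQuadratic (ZMod p) (x + t) with h | h | h <;>
      rcases Int.units_eq_one_or (ε t) with hε | hε <;> simp [h, hε]
  have heq : ∀ x ∈ signPatternSet T ε,
      ∏ t ∈ T, (1 + ε t * quadraticChar (ZMod p) (x + t)) = 2 ^ #T := by
    refine fun x hx => prod_eq_pow_card fun t ht => ?_
    rw [(mem_filter.1 hx).2 t ht, ← Units.val_mul, Int.units_mul_self, Units.val_one,
      one_add_one_eq_two]
  calc 2 ^ #T * (#(signPatternSet T ε) : ℤ)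
      = ∑ x ∈ signPatternSet T ε, ∏ t ∈ T, (1 + ε t * quadraticChar (ZMod p) (x + t)) := by
        rw [sum_congr rfl heq, sum_const, nsmul_eq_mul, mul_comm]
    _ ≤ _ := sum_le_sum_of_subset_of_nonneg (subset_univ _) fun x _ _ =>
        prod_nonneg fun t _ => hnonneg x t

theorem sum_prod_one_add_mul_quadraticChar_le (T : Finset (ZMod p)) (ε : ZMod p → ℤˣ) :
    ∑ x, ∏ t ∈ T, (1 + ε t * quadraticChar (ZMod p) (x + t)) ≤
      p + 2 ^ #T * (28 * #T * p.sqrt : ℤ) := by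
  have hterm : ∀ S ∈ T.powerset.erase ∅,
      ∑ x, ∏ t ∈ S, ε t * quadraticChar (ZMod p) (x + t) ≤ (28 * #T * p.sqrt : ℤ) := by
    intro S hS
    rw [mem_erase, mem_powerset] at hS
    calc ∑ x, ∏ t ∈ S, ε t * quadraticChar (ZMod p) (x + t)
        ≤ |(∏ t ∈ S, ε t : ℤˣ) * ∑ x, ∏ t ∈ S, quadraticChar (ZMod p) (x + t)| := by
          simp only [prod_mul_distrib, ← mul_sum, Units.coe_prod]
          exact le_abs_self _
      _ = |∑ x, ∏ t ∈ S, quadraticChar (ZMod p) (x + t)| := by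
          rw [abs_mul, Int.isUnit_iff_abs_eq.1 (Units.isUnit _), one_mul]
      _ ≤ 28 * #S * p.sqrt := abs_sum_prod_quadraticChar_add_le (nonempty_iff_ne_empty.2 hS.1)
      _ ≤ 28 * #T * p.sqrt := by gcongr; exact hS.2
  simp_rw [prod_one_add]
  rw [sum_comm, ← add_sum_erase _ _ (empty_mem_powerset T)]
  refine add_le_add (by simp) ((sum_le_card_nsmul _ _ _ hterm).trans ?_)
  rw [nsmul_eq_mul]
  gcongr
  exact_mod_cast (card_le_card (erase_subset _ _)).trans (card_powerset T).le

theorem two_pow_mul_card_signPatternSet_le (T : Finset (ZMod p)) (ε : ZMod p → ℤˣ) :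
    2 ^ #T * #(signPatternSet T ε) ≤ p + 2 ^ #T * (28 * #T * p.sqrt) := by
  exact_mod_cast (two_pow_mul_card_signPatternSet_le_sum T ε).trans
    (sum_prod_one_add_mul_quadraticChar_le T ε)

end SignPattern

section CoprimePairs

theorem sum_Icc_two_inv_sq_le {α : Type*} [Field α] [LinearOrder α] [IsStrictOrderedRing α]
    (n : ℕ) : ∑ r ∈ Icc 2 n, ((r : α) ^ 2)⁻¹ ≤ 3 / 4 := by
  rcases lt_or_ge n 2 with hn | hn
  · rw [Icc_eq_empty_of_lt hn, sum_empty]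
    positivity
  · have htail := sum_Ioc_inv_sq_le_sub (α := α) two_ne_zero hn
    have hn0 : 0 ≤ (n : α)⁻¹ := by positivity
    rw [Icc_eq_cons_Ioc hn, sum_cons]
    push_cast at htail ⊢
    linarith

theorem card_filter_dvd_add_mul_le {v b : ℤ} (hvb : IsCoprime v b) (r L : ℕ) :
    #{j ∈ range L | ((r : ℕ) : ℤ) ∣ v + b * (j : ℕ)} ≤ L / r + 1 := by
  rw [← card_range (L / r + 1)]
  refine card_le_card_of_injOn (· / r) (fun j hj => ?_) fun i hi j hj hij => ?_
  · have hjL : j < L := mem_range.1 (mem_filter.1 hj).1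
    simpa [Nat.lt_succ_iff] using Nat.div_le_div_right hjL.le
  · have hri : (r : ℤ) ∣ v + b * i := (mem_filter.1 hi).2
    have hrj : (r : ℤ) ∣ v + b * j := (mem_filter.1 hj).2
    have hrb : IsCoprime (r : ℤ) b :=
      (IsCoprime.add_mul_left_left hvb i).of_isCoprime_of_dvd_left hri
    have hdvd : (r : ℤ) ∣ b * (i - j) := by
      have := dvd_sub hri hrj
      rwa [add_sub_add_left_eq_sub, ← mul_sub] at this
    have hmod : j ≡ i [MOD r] := Nat.modEq_iff_dvd.2 (hrb.dvd_of_dvd_mul_left hdvd)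
    have hdiv : i / r = j / r := hij
    rw [← Nat.div_add_mod i r, ← Nat.div_add_mod j r, hdiv, hmod]

/-- The pairs `(j, q)` with `j < L` and `1 ≤ q ≤ Q` for which the term `v + b * j` of an
arithmetic progression is coprime to `q`. -/
def coprimePairs (v b : ℤ) (L Q : ℕ) : Finset (ℕ × ℕ) :=
  {z ∈ range L ×ˢ Icc 1 Q | Int.gcd (v + b * z.1) z.2 = 1}

theorem mem_coprimePairs {v b : ℤ} {L Q j q : ℕ} :
    (j, q) ∈ coprimePairs v b L Q ↔
      (j < L ∧ 1 ≤ q ∧ q ≤ Q) ∧ Int.gcd (v + b * j) q = 1 := by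
  simp only [coprimePairs, mem_filter, mem_product, mem_range, mem_Icc]

-- A pair outside `coprimePairs` has a common divisor `r` with `2 ≤ r ≤ Q`.
theorem mul_le_card_coprimePairs_add_sum {v b : ℤ} (hvb : IsCoprime v b) (L Q : ℕ) :
    L * Q ≤ #(coprimePairs v b L Q) + ∑ r ∈ Icc 2 Q, (L / r + 1) * (Q / r) := by
  have hcover : range L ×ˢ Icc 1 Q ⊆ coprimePairs v b L Q ∪ (Icc 2 Q).biUnion fun r =>
      {j ∈ range L | ((r : ℕ) : ℤ) ∣ v + b * (j : ℕ)} ×ˢ {q ∈ Ioc 0 Q | r ∣ q} := by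
    rintro ⟨j, q⟩ hz
    simp only [mem_union, mem_biUnion, mem_product, mem_filter, mem_coprimePairs, mem_range,
      mem_Icc, mem_Ioc] at hz ⊢
    rw [or_iff_not_imp_left]
    intro hgcd
    have hpos : 0 < Int.gcd (v + b * j) q := Int.gcd_pos_of_ne_zero_right _ (by omega)
    have hdvd : Int.gcd (v + b * j) q ∣ q := Int.natCast_dvd_natCast.1 (Int.gcd_dvd_right _ _)
    have hle := Nat.le_of_dvd hz.2.1 hdvd
    exact ⟨_, by omega, ⟨hz.1, Int.gcd_dvd_left _ _⟩, hz.2, hdvd⟩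
  calc L * Q = #(range L ×ˢ Icc 1 Q) := by simp
    _ ≤ _ := (card_le_card hcover).trans (card_union_le _ _)
    _ ≤ _ := by
      refine Nat.add_le_add_left (card_biUnion_le.trans (sum_le_sum fun r _ => ?_)) _
      rw [card_product, Nat.Ioc_filter_dvd_card_eq_div]
      exact Nat.mul_le_mul_right _ (card_filter_dvd_add_mul_le hvb r L)

theorem sum_Icc_two_div_add_one_mul_div_le (L Q : ℕ) :
    ((∑ r ∈ Icc 2 Q, (L / r + 1) * (Q / r) : ℕ) : ℝ) ≤ 3 / 4 * (L * Q) + Q * Q / 2 := by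
  have hterm : ∀ r ∈ Icc 2 Q, (((L / r + 1) * (Q / r) : ℕ) : ℝ) ≤
      L * Q * ((r : ℝ) ^ 2)⁻¹ + Q / 2 := by
    intro r hr
    have hr2 : (2 : ℝ) ≤ r := by exact_mod_cast (mem_Icc.1 hr).1
    calc (((L / r + 1) * (Q / r) : ℕ) : ℝ) ≤ ((L : ℝ) / r + 1) * (Q / r) := by
          push_cast
          gcongr <;> exact Nat.cast_div_le
      _ = L * Q * ((r : ℝ) ^ 2)⁻¹ + Q / r := by field_simp
      _ ≤ L * Q * ((r : ℝ) ^ 2)⁻¹ + Q / 2 := by gcongr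
  have hcard : (#(Icc 2 Q) : ℝ) ≤ Q := by
    rw [Nat.card_Icc]
    exact_mod_cast (by omega : Q + 1 - 2 ≤ Q)
  rw [Nat.cast_sum]
  calc ∑ r ∈ Icc 2 Q, (((L / r + 1) * (Q / r) : ℕ) : ℝ)
      ≤ L * Q * ∑ r ∈ Icc 2 Q, ((r : ℝ) ^ 2)⁻¹ + #(Icc 2 Q) * (Q / 2) :=
        (sum_le_sum hterm).trans_eq
          (by rw [sum_add_distrib, ← mul_sum, sum_const, nsmul_eq_mul])
    _ ≤ L * Q * (3 / 4) + Q * (Q / 2) := by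
        gcongr
        exact sum_Icc_two_inv_sq_le Q
    _ = 3 / 4 * (L * Q) + Q * Q / 2 := by ring

theorem mul_le_card_coprimePairs {v b : ℤ} (hvb : IsCoprime v b) {L Q : ℕ} (hLQ : 4 * Q ≤ L) :
    L * Q ≤ 8 * #(coprimePairs v b L Q) := by
  have hcard : (L * Q : ℝ) ≤ #(coprimePairs v b L Q) +
      ((∑ r ∈ Icc 2 Q, (L / r + 1) * (Q / r) : ℕ) : ℝ) := by
    exact_mod_cast mul_le_card_coprimePairs_add_sum hvb L Q
  have hsum := sum_Icc_two_div_add_one_mul_div_le L Q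
  have hLQ' : (4 * Q : ℝ) * Q ≤ L * Q := by
    gcongr
    exact_mod_cast hLQ
  have hmul : (L * Q : ℝ) ≤ 8 * #(coprimePairs v b L Q) := by linarith
  exact_mod_cast hmul

end CoprimePairs

section Fractions

variable {p : ℕ} [Fact p.Prime]

theorem exists_small_coprime_multiple (a : ZMod p) {B : ℕ} (hB : 0 < B) (hBp : B < p) :
    ∃ (b : ℕ) (v : ℤ), 0 < b ∧ b ≤ B ∧ IsCoprime v b ∧ (v : ZMod p) = b * a ∧
      |v| * (B + 1) ≤ p := by
  obtain ⟨q, hq, hqB⟩ := Real.exists_rat_abs_sub_le_and_den_le ((a.val : ℝ) / p) hB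
  have hp0 : (0 : ℝ) < p := by exact_mod_cast (Fact.out : p.Prime).pos
  have hd0 : (0 : ℝ) < q.den := by exact_mod_cast q.pos
  refine ⟨q.den, a.val * q.den + -(q.num * p), q.pos, hqB, ?_, ?_, ?_⟩
  · have hnum : IsCoprime q.num (q.den : ℤ) := Rat.isCoprime_num_den q
    have hpden : IsCoprime (p : ℤ) (q.den : ℤ) :=
      Nat.isCoprime_iff_coprime.2
        (Nat.coprime_of_lt_prime q.den_ne_zero (hqB.trans_lt hBp) Fact.out)
    exact (hnum.mul_left hpden).neg_left.mul_add_right_left _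
  · simp [mul_comm]
  · have hdiff : (a.val : ℝ) / p - q =
        ((a.val * q.den + -(q.num * p) : ℤ) : ℝ) / (p * q.den) := by
      conv_lhs => rw [Rat.cast_def]
      push_cast
      field_simp
      ring
    rw [hdiff, abs_div, abs_of_pos (by positivity : (0 : ℝ) < p * q.den),
      div_le_div_iff₀ (by positivity) (by positivity)] at hq
    have hv : |((a.val * q.den + -(q.num * p) : ℤ) : ℝ)| * (B + 1) ≤ p := by
      refine le_of_mul_le_mul_right ?_ hd0
      linarith
    exact_mod_cast hv

/-- The residues `(a + j) / q` with `j < L` and `1 ≤ q ≤ Q`. -/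
def shiftedFractions (a : ZMod p) (L Q : ℕ) : Finset (ZMod p) :=
  (range L ×ˢ Icc 1 Q).image fun z => (a + z.1) / z.2

-- The congruence between two cross products is an equality, because both are less than `p / 2`.
theorem injOn_div_coprimePairs {a : ZMod p} {b : ℕ} {v : ℤ} {L Q : ℕ} (hb : 0 < b)
    (hv : (v : ZMod p) = b * a) (hQ : Q < p) (hbound : ∀ j < L, |v + b * j| * (2 * Q) < p) :
    Set.InjOn (fun z : ℕ × ℕ => (a + z.1) / z.2) (coprimePairs v b L Q) := by
  rintro ⟨i, q⟩ hiq ⟨j, r⟩ hjr heq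
  obtain ⟨⟨hi, hq0, hqQ⟩, hiq⟩ := mem_coprimePairs.1 hiq
  obtain ⟨⟨hj, hr0, hrQ⟩, hjr⟩ := mem_coprimePairs.1 hjr
  have hne {n : ℕ} (hn : 0 < n) (hnQ : n ≤ Q) : (n : ZMod p) ≠ 0 := fun h =>
    Nat.not_dvd_of_pos_of_lt hn (by omega) ((ZMod.natCast_eq_zero_iff n p).1 h)
  have hcross {i q : ℕ} (hi : i < L) (hq : q ≤ Q) : 2 * |(v + b * i) * q| < p := by
    refine lt_of_le_of_lt ?_ (hbound i hi)
    rw [abs_mul, Nat.abs_cast, mul_left_comm]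
    gcongr
  have hdvd : (p : ℤ) ∣ (v + b * i) * r - (v + b * j) * q := by
    have heq : (a + i) * r = (a + j) * q :=
      (div_eq_div_iff (hne hq0 hqQ) (hne hr0 hrQ)).1 heq
    rw [← ZMod.intCast_zmod_eq_zero_iff_dvd]
    push_cast
    rw [hv]
    linear_combination (b : ZMod p) * heq
  have hzero : (v + b * i) * r - (v + b * j) * q = 0 := by
    refine Int.eq_zero_of_abs_lt_dvd hdvd ?_
    have := abs_sub ((v + b * i) * r) ((v + b * j) * q)
    linarith [hcross hi hrQ, hcross hj hqQ]
  have hrat : ((v + b * i : ℤ) : ℚ) / (q : ℤ) = ((v + b * j : ℤ) : ℚ) / (r : ℤ) := by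
    rw [div_eq_div_iff (by positivity) (by positivity)]
    exact_mod_cast sub_eq_zero.1 hzero
  obtain ⟨hij, hqr⟩ := Rat.div_int_inj (by positivity) (by positivity) hiq hjr hrat
  have hij : i = j := by simpa [hb.ne'] using hij
  exact Prod.ext hij (by exact_mod_cast hqr)

theorem mul_le_card_shiftedFractions (a : ZMod p) {L Q : ℕ} (hLQ : 4 * Q ≤ L)
    (hp : 16 * Q ^ 2 * L ≤ p) : L * Q ≤ 8 * #(shiftedFractions a L Q) := by
  rcases Q.eq_zero_or_pos with rfl | hQ
  · simp
  have hBp : 4 * Q < p := by nlinarith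
  obtain ⟨b, v, hb, hbB, hvb, hv, hvp⟩ :=
    exists_small_coprime_multiple a (B := 4 * Q) (by omega) hBp
  have hbound : ∀ j < L, |v + b * j| * (2 * Q) < p := by
    intro j hj
    have hbj : (b : ℤ) * j ≤ 4 * Q * L := by exact_mod_cast Nat.mul_le_mul hbB hj.le
    have habs : |v + b * j| ≤ |v| + 4 * Q * L := by
      refine (abs_add_le _ _).trans (add_le_add_right ?_ _)
      rwa [abs_of_nonneg (by positivity)]
    zify at hp hBp
    push_cast at hvp
    have hvQ : |v| * (4 * Q) < p := by
      rcases (abs_nonneg v).eq_or_lt with hv0 | hv0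
      · rw [← hv0, zero_mul]
        linarith
      · linarith
    calc |v + b * j| * (2 * Q) ≤ (|v| + 4 * Q * L) * (2 * Q) := by gcongr
      _ < p := by linarith
  refine (mul_le_card_coprimePairs hvb hLQ).trans (Nat.mul_le_mul_left 8 ?_)
  rw [← card_image_of_injOn (injOn_div_coprimePairs hb hv (by omega) hbound)]
  exact card_le_card (image_subset_image (filter_subset _ _))

end Fractions

section Runs

variable {p : ℕ} [Fact p.Prime] {a : ZMod p} {ε : ℤˣ} {H : ℕ}

theorem quadraticChar_natCast_eq_one {n : ℕ} (hn : ¬ p ∣ n)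
    (hsq : ∃ x : ZMod p, x ^ 2 = (n : ZMod p)) : quadraticChar (ZMod p) n = 1 := by
  obtain ⟨x, hx⟩ := hsq
  rw [quadraticChar_one_iff_isSquare (by rwa [Ne, ZMod.natCast_eq_zero_iff]), ← hx]
  exact IsSquare.sq x

theorem length_lt_of_forall_quadraticChar_add_eq
    (hrun : ∀ i < H, quadraticChar (ZMod p) (a + (i : ℕ)) = ε) : H < p := by
  by_contra! hle
  have h := hrun (-a).val ((ZMod.val_lt _).trans_le hle)
  rw [ZMod.natCast_zmod_val, add_neg_cancel, quadraticChar_zero] at h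
  exact ε.ne_zero h.symm

-- Multiplying `(a + j) / q + m` by `q` gives `a + (j + q * m)`, so the sign is `ε` times that
-- of `q` for all `m`.
theorem shiftedFractions_subset_biUnion_signPatternSet {L Q h : ℕ} (hQ : Q < p)
    (hrun : ∀ i < L + Q * h, quadraticChar (ZMod p) (a + (i : ℕ)) = ε) :
    shiftedFractions a L Q ⊆
      univ.biUnion fun δ : ℤˣ => signPatternSet ((range h).image Nat.cast) fun _ => δ := by
  refine image_subset_iff.2 fun ⟨j, q⟩ hjq => ?_
  simp only [mem_product, mem_range, mem_Icc] at hjq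
  obtain ⟨hj, hq0, hqQ⟩ := hjq
  have hq : (q : ZMod p) ≠ 0 := fun h =>
    Nat.not_dvd_of_pos_of_lt hq0 (by omega) ((ZMod.natCast_eq_zero_iff q p).1 h)
  obtain ⟨δ, hδ⟩ : IsUnit (quadraticChar (ZMod p) q) := hq.isUnit.map _
  refine mem_biUnion.2 ⟨ε * δ, mem_univ _, mem_filter.2 ⟨mem_univ _, forall_mem_image.2 ?_⟩⟩
  intro m hm
  have hlt : j + q * m < L + Q * h :=
    add_lt_add_of_lt_of_le hj (Nat.mul_le_mul hqQ (mem_range.1 hm).le)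
  have hmul : a + (j + q * m : ℕ) = ((a + j) / q + m) * q := by
    push_cast
    field_simp
    ring
  have hsign := hrun _ hlt
  rw [hmul, map_mul, ← hδ] at hsign
  rw [Units.val_mul, ← hsign, mul_assoc, ← Units.val_mul, Int.units_mul_self, Units.val_one,
    mul_one]

theorem two_pow_mul_mul_le_of_forall_quadraticChar_add_eq {L Q h : ℕ} (hLQ : 4 * Q ≤ L)
    (hp : 16 * Q ^ 2 * L ≤ p) (hhp : h ≤ p)
    (hrun : ∀ i < L + Q * h, quadraticChar (ZMod p) (a + (i : ℕ)) = ε) :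
    2 ^ h * (L * Q) ≤ 16 * (p + 2 ^ h * (28 * h * p.sqrt)) := by
  have hQ : Q < p := by
    have hp0 := (Fact.out : p.Prime).pos
    rcases Q.eq_zero_or_pos with rfl | hQ0
    · exact hp0
    · nlinarith
  set T : Finset (ZMod p) := (range h).image Nat.cast
  have hT : #T = h := by
    rw [card_image_of_injOn, card_range]
    exact (CharP.natCast_injOn_Iio (ZMod p) p).mono fun m hm => (mem_range.1 hm).trans_le hhp
  have hcard : #(shiftedFractions a L Q) ≤ ∑ δ : ℤˣ, #(signPatternSet T fun _ => δ) :=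
    (card_le_card (shiftedFractions_subset_biUnion_signPatternSet hQ hrun)).trans card_biUnion_le
  calc 2 ^ h * (L * Q) ≤ 2 ^ h * (8 * ∑ δ : ℤˣ, #(signPatternSet T fun _ => δ)) :=
        Nat.mul_le_mul_left _
          ((mul_le_card_shiftedFractions a hLQ hp).trans (Nat.mul_le_mul_left 8 hcard))
    _ = 8 * ∑ δ : ℤˣ, 2 ^ h * #(signPatternSet T fun _ => δ) := by
        rw [← mul_sum, mul_left_comm]
    _ ≤ 8 * ∑ _δ : ℤˣ, (p + 2 ^ h * (28 * h * p.sqrt)) := by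
        gcongr with δ
        simpa only [hT] using two_pow_mul_card_signPatternSet_le T fun _ => δ
    _ = 16 * (p + 2 ^ h * (28 * h * p.sqrt)) := by
        rw [sum_const, card_univ, Fintype.card_units_int, smul_eq_mul]
        ring

-- With `L = 22 * u * h` and `Q = 22 * u`, the left-hand side of the previous inequality is
-- `484 * u ^ 2 * h * 2 ^ h`, while the right-hand side is less than `448 * u ^ 2 * h * 2 ^ h`.
theorem length_lt_mul_of_forall_quadraticChar_add_eq {u h : ℕ} (hh : 4 ≤ h) (hph : p < 2 ^ h)
    (hu : p.sqrt < u ^ 2) (hp : 16 * 22 ^ 3 * u ^ 3 * h ≤ p)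
    (hrun : ∀ i < H, quadraticChar (ZMod p) (a + (i : ℕ)) = ε) : H < 44 * u * h := by
  by_contra! hle
  have hu0 : 0 < u := Nat.pos_of_ne_zero fun h0 => by simp [h0] at hu
  have hhp : h ≤ p := (Nat.le_mul_of_pos_left h (by positivity)).trans hp
  have hlen : 22 * u * h + 22 * u * h = 44 * u * h := by ring
  have hmain := two_pow_mul_mul_le_of_forall_quadraticChar_add_eq (L := 22 * u * h) (Q := 22 * u)
    (by nlinarith) (le_of_eq_of_le (by ring) hp) hhp
    fun i hi => hrun i (hi.trans_le (hlen.le.trans hle))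
  have hsqrt : h * p.sqrt + h ≤ h * u ^ 2 := Nat.mul_le_mul_left h hu
  have hlt : 2 ^ h * (22 * u * h * (22 * u)) < 2 ^ h * (16 + 448 * (h * p.sqrt)) := by
    linarith
  linarith [Nat.lt_of_mul_lt_mul_left hlt, Nat.zero_le (h * u ^ 2)]

end Runs

section Asymptotics

theorem half_le_log_natCast {n : ℕ} (hn : 2 ≤ n) : 1 / 2 ≤ Real.log n := by
  have hlog2 := Real.log_two_gt_d9
  have hmono : Real.log 2 ≤ Real.log n := Real.log_le_log two_pos (by exact_mod_cast hn)
  linarith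

theorem natLog_two_add_one_le {n : ℕ} (hn : 2 ≤ n) :
    (Nat.log 2 n : ℝ) + 1 ≤ 4 * Real.log n := by
  have hlog2 := Real.log_two_gt_d9
  have hlogb : (Nat.log 2 n : ℝ) * Real.log 2 ≤ Real.log n := by
    rw [← le_div_iff₀ (by positivity)]
    exact_mod_cast Real.natLog_le_logb n 2
  have hlog := half_le_log_natCast hn
  nlinarith [Nat.cast_nonneg (α := ℝ) (Nat.log 2 n)]

theorem sqrt_sqrt_add_one_le {n : ℕ} (hn : 1 ≤ n) :
    (n.sqrt.sqrt : ℝ) + 1 ≤ 2 * (n : ℝ) ^ ((1 : ℝ) / 4) := by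
  have hone : (1 : ℝ) ≤ (n : ℝ) ^ ((1 : ℝ) / 4) :=
    Real.one_le_rpow (by exact_mod_cast hn) (by norm_num)
  have hsqrt : (n.sqrt.sqrt : ℝ) ≤ (n : ℝ) ^ ((1 : ℝ) / 4) :=
    calc (n.sqrt.sqrt : ℝ) ≤ √√n :=
          Real.nat_sqrt_le_real_sqrt.trans (Real.sqrt_le_sqrt Real.nat_sqrt_le_real_sqrt)
      _ = (n : ℝ) ^ ((1 : ℝ) / 4) := by
          rw [Real.sqrt_eq_rpow, Real.sqrt_eq_rpow, ← Real.rpow_mul n.cast_nonneg]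
          norm_num
  linarith

theorem eventually_mul_sqrt_sqrt_pow_mul_log_le (c : ℕ) :
    ∀ᶠ n : ℕ in Filter.atTop, c * (n.sqrt.sqrt + 1) ^ 3 * (Nat.log 2 n + 1) ≤ n := by
  have hlog := (isLittleO_log_rpow_atTop (r := 1 / 4) (by norm_num)).def
    (c := 1 / (32 * (c + 1))) (by positivity)
  filter_upwards [tendsto_natCast_atTop_atTop.eventually hlog, Filter.eventually_ge_atTop 2]
    with n hn hn2
  set y := (n : ℝ) ^ ((1 : ℝ) / 4) with hy
  have hy0 : 0 ≤ y := by positivity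
  have hy4 : y ^ 4 = n := by
    rw [hy, ← Real.rpow_natCast, ← Real.rpow_mul n.cast_nonneg]
    norm_num
  have hlog0 : 0 ≤ Real.log n := Real.log_natCast_nonneg n
  rw [Real.norm_of_nonneg hlog0, Real.norm_of_nonneg hy0, one_div_mul_eq_div,
    le_div_iff₀ (by positivity)] at hn
  have hreal : (c : ℝ) * (n.sqrt.sqrt + 1) ^ 3 * (Nat.log 2 n + 1) ≤ n :=
    calc (c : ℝ) * (n.sqrt.sqrt + 1) ^ 3 * (Nat.log 2 n + 1)
        ≤ (c + 1) * (2 * y) ^ 3 * (4 * Real.log n) := by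
          gcongr
          · linarith
          · exact sqrt_sqrt_add_one_le (by omega)
          · exact natLog_two_add_one_le hn2
      _ = y ^ 3 * (Real.log n * (32 * (c + 1))) := by ring
      _ ≤ y ^ 3 * y := by gcongr
      _ = n := by rw [← hy4]; ring
  exact_mod_cast hreal

end Asymptotics

theorem eventually_length_le_of_forall_quadraticChar_add_eq :
    ∀ᶠ p : ℕ in Filter.atTop, ∀ [Fact p.Prime] (a : ZMod p) (ε : ℤˣ) (H : ℕ),
      (∀ i < H, quadraticChar (ZMod p) (a + (i : ℕ)) = ε) →
        (H : ℝ) ≤ 352 * ((p : ℝ) ^ ((1 : ℝ) / 4) * Real.log p) := by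
  filter_upwards [eventually_mul_sqrt_sqrt_pow_mul_log_le (16 * 22 ^ 3),
    Filter.eventually_ge_atTop 8] with p hp hp8 _ a ε H hrun
  have hlog : 3 ≤ Nat.log 2 p := Nat.le_log_of_pow_le one_lt_two hp8
  have hlt := length_lt_mul_of_forall_quadraticChar_add_eq (by omega)
    (Nat.lt_pow_succ_log_self one_lt_two p) (Nat.lt_succ_sqrt' p.sqrt) hp hrun
  calc (H : ℝ) ≤ 44 * (p.sqrt.sqrt + 1) * (Nat.log 2 p + 1) := by exact_mod_cast hlt.le
    _ ≤ 44 * (2 * (p : ℝ) ^ ((1 : ℝ) / 4)) * (4 * Real.log p) := by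
        gcongr
        · exact sqrt_sqrt_add_one_le (by omega)
        · exact natLog_two_add_one_le (by omega)
    _ = 352 * ((p : ℝ) ^ ((1 : ℝ) / 4) * Real.log p) := by ring

theorem stmt_18_general :
    ∃ C : ℝ, 0 < C ∧ ∀ (p : ℕ) [Fact p.Prime] (a : ZMod p) (ε : ℤˣ) (H : ℕ),
      (∀ i < H, quadraticChar (ZMod p) (a + (i : ℕ)) = ε) →
        (H : ℝ) ≤ C * (p : ℝ) ^ ((1 : ℝ) / 4) * Real.log p := by
  obtain ⟨P, hP⟩ := Filter.eventually_atTop.1 eventually_length_le_of_forall_quadraticChar_add_eq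
  refine ⟨352 + 2 * P, by positivity, fun p _ a ε H hrun => ?_⟩
  have hp2 : 2 ≤ p := (Fact.out : p.Prime).two_le
  have hlog : 1 / 2 ≤ Real.log p := half_le_log_natCast hp2
  have hroot : 1 ≤ (p : ℝ) ^ ((1 : ℝ) / 4) :=
    Real.one_le_rpow (by exact_mod_cast hp2.trans' one_le_two) (by norm_num)
  have hprod : 1 / 2 ≤ (p : ℝ) ^ ((1 : ℝ) / 4) * Real.log p := by nlinarith
  rw [mul_assoc]
  rcases le_or_gt P p with hle | hlt
  · exact (hP p hle a ε H hrun).trans (by gcongr; linarith [P.cast_nonneg (α := ℝ)])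
  · have hHP : (H : ℝ) ≤ P := by
      exact_mod_cast ((length_lt_of_forall_quadraticChar_add_eq hrun).trans hlt).le
    nlinarith [P.cast_nonneg (α := ℝ)]

theorem stmt_18 :
    ∃ C : ℝ, 0 < C ∧ ∀ (p : ℕ) [Fact p.Prime], p ≠ 2 →
      ∀ a H : ℕ, 0 < a → 0 < H →
        (∀ i < H, ¬ p ∣ (a + i) ∧ ∃ x : ZMod p, x ^ 2 = ((a + i : ℕ) : ZMod p)) →
        (H : ℝ) ≤ C * (p : ℝ) ^ ((1 : ℝ) / 4) * Real.log p := by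
  obtain ⟨C, hC, h⟩ := stmt_18_general
  exact ⟨C, hC, fun p _ _ a H _ _ hrun => h p a 1 H fun i hi => by
    simpa using quadraticChar_natCast_eq_one (hrun i hi).1 (hrun i hi).2⟩
end
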